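/- arXiv:2507.23468 — 13 statements merged into one kernel-verified Lean document; each statement's English description precedes it below -/
import Mathlib

section
/- Let (ψ_n)_{n∈ℕ} be a sequence of complex numbers such that Σ_{n≥0} s^n |ψ_n|² < ∞ for some real s > 1. Then: (i) for every z ∈ ℂ the series π^{-1/4} e^{-z²/2} Σ_{n≥0} ψ_n (2^n n!)^{-1/2} H_n(z) converges absolutely, so the extended wavefunction ψ : ℂ → ℂ is well defined; (ii) ψ is an entire function (complex-analytic on all of ℂ); (iii) there exist constants K > 0 and L > 0 such that |ψ(z)|² ≤ K e^{L|z|²} for every z ∈ ℂ, i.e. ψ has order of growth at most 2. -/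
open scoped BigOperators

/-- The `n`-th physicist Hermite polynomial evaluated at `z`:
`H_n(z) = 2^(n/2) He_n(z√2) = (√2)^n He_n(√2 z)`, with `He_n` the probabilist
Hermite polynomial (Mathlib's `Polynomial.hermite n`). -/
noncomputable def physHermite (n : ℕ) (z : ℂ) : ℂ :=
  ((Real.sqrt 2 : ℝ) : ℂ) ^ n *
    Polynomial.aeval (((Real.sqrt 2 : ℝ) : ℂ) * z) (Polynomial.hermite n)

/-- The `n`-th term of the Hermite series of the wavefunction. -/
noncomputable def wfTerm (ψ : ℕ → ℂ) (z : ℂ) (n : ℕ) : ℂ :=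
  ψ n * ((Real.sqrt (2 ^ n * n.factorial) : ℝ) : ℂ)⁻¹ * physHermite n z

/-- The extended wavefunction
`ψ(z) = π^(-1/4) e^(-z²/2) Σ_n ψ_n (2^n n!)^(-1/2) H_n(z)`. -/
noncomputable def extWf (ψ : ℕ → ℂ) (z : ℂ) : ℂ :=
  ((Real.pi ^ ((1 : ℝ) / 4) : ℝ) : ℂ)⁻¹ * Complex.exp (-z ^ 2 / 2) * ∑' n, wfTerm ψ z n

open Polynomial in
theorem aux_deriv (n : ℕ) : derivative (hermite (n + 1)) = ((n : ℤ[X]) + 1) * hermite n := by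
  induction n with
  | zero => simp
  | succ m ih =>
    have h2 : derivative (hermite (m + 1 + 1)) = hermite (m + 1) +
        X * derivative (hermite (m + 1)) - derivative (derivative (hermite (m + 1))) := by
      rw [hermite_succ (m + 1)]; simp
    have h3 : derivative (((m : ℤ[X]) + 1) * hermite m) =
        ((m : ℤ[X]) + 1) * derivative (hermite m) := by
      simp
    rw [h2, ih, h3, hermite_succ m]
    push_cast
    ring

open Polynomial in
theorem aux_rec (n : ℕ) (w : ℂ) : aeval w (hermite (n + 2)) =
    w * aeval w (hermite (n + 1)) - ((n : ℂ) + 1) * aeval w (hermite n) := by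
  rw [hermite_succ (n + 1), aux_deriv]
  simp

open Polynomial in
theorem aux_bound (w : ℂ) (n : ℕ) :
    ‖aeval w (hermite n)‖ ≤ √(n.factorial : ℝ) * Real.exp (2 * ‖w‖ * √(n : ℝ)) ∧
    ‖aeval w (hermite (n + 1))‖ ≤
      √((n + 1).factorial : ℝ) * Real.exp (2 * ‖w‖ * √((n : ℝ) + 1)) := by
  induction n with
  | zero =>
    refine ⟨by simp, ?_⟩
    simp
    have := Real.add_one_le_exp (2 * ‖w‖)
    have := norm_nonneg w
    linarith
  | succ n ih =>
    obtain ⟨h0, h1⟩ := ih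
    refine ⟨by push_cast; exact h1, ?_⟩
    rw [aux_rec]
    set r := ‖w‖ with hr
    have hr0 : 0 ≤ r := norm_nonneg w
    push_cast
    set a := √((n : ℝ) + 1) with ha
    set b := √((n : ℝ) + 1 + 1) with hb
    have ha2 : a ^ 2 = (n : ℝ) + 1 := Real.sq_sqrt (by positivity)
    have hb2 : b ^ 2 = (n : ℝ) + 1 + 1 := Real.sq_sqrt (by positivity)
    have ha0 : 0 ≤ a := Real.sqrt_nonneg _
    have hb0 : 0 ≤ b := Real.sqrt_nonneg _
    have hab : a ≤ b := Real.sqrt_le_sqrt (by linarith)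
    have hna : √(n : ℝ) ≤ a := Real.sqrt_le_sqrt (by linarith)
    have f1 : √((n + 1).factorial : ℝ) = a * √(n.factorial : ℝ) := by
      rw [Nat.factorial_succ]; push_cast; rw [Real.sqrt_mul (by positivity)]
    have f2 : √((n + 1 + 1).factorial : ℝ) = b * √((n + 1).factorial : ℝ) := by
      rw [Nat.factorial_succ (n + 1)]; push_cast; rw [Real.sqrt_mul (by positivity)]
    have hP : 0 ≤ √((n + 1).factorial : ℝ) := Real.sqrt_nonneg _
    have hnn : ‖(n : ℂ) + 1‖ = (n : ℝ) + 1 := by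
      have : ((n : ℂ) + 1) = ((n + 1 : ℕ) : ℂ) := by push_cast; rfl
      rw [this, Complex.norm_natCast]; push_cast; rfl
    have h0' : ((n : ℝ) + 1) * ‖aeval w (hermite n)‖ ≤
        b * √((n + 1).factorial : ℝ) * Real.exp (2 * r * a) := by
      calc _ ≤ ((n : ℝ) + 1) * (√(n.factorial : ℝ) * Real.exp (2 * r * √(n : ℝ))) := by gcongr
        _ ≤ ((n : ℝ) + 1) * (√(n.factorial : ℝ) * Real.exp (2 * r * a)) := by gcongr
        _ = a * √((n + 1).factorial : ℝ) * Real.exp (2 * r * a) := by rw [f1, ← ha2]; ring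
        _ ≤ _ := by gcongr
    have hkey : r + b ≤ b * Real.exp (2 * r * (b - a)) := by
      have e := Real.add_one_le_exp (2 * r * (b - a))
      have e2 := mul_le_mul_of_nonneg_left e hb0
      have e3 : 1 ≤ 2 * b * (b - a) := by nlinarith
      nlinarith [mul_le_mul_of_nonneg_left e3 hr0]
    have hexp : Real.exp (2 * r * b) = Real.exp (2 * r * (b - a)) * Real.exp (2 * r * a) := by
      rw [← Real.exp_add]; ring_nf
    calc _ ≤ ‖w * aeval w (hermite (n + 1))‖ + ‖((n : ℂ) + 1) * aeval w (hermite n)‖ :=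
          norm_sub_le _ _
      _ = r * ‖aeval w (hermite (n + 1))‖ + ((n : ℝ) + 1) * ‖aeval w (hermite n)‖ := by
          rw [norm_mul, norm_mul, hnn]
      _ ≤ r * (√((n + 1).factorial : ℝ) * Real.exp (2 * r * a)) +
          b * √((n + 1).factorial : ℝ) * Real.exp (2 * r * a) := by gcongr
      _ = (r + b) * (√((n + 1).factorial : ℝ) * Real.exp (2 * r * a)) := by ring
      _ ≤ (b * Real.exp (2 * r * (b - a))) *
          (√((n + 1).factorial : ℝ) * Real.exp (2 * r * a)) := by gcongr
      _ = _ := by rw [f2, hexp]; ring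

theorem aux_term (ψ : ℕ → ℂ) (z : ℂ) (n : ℕ) (ε : ℝ) (hε : 0 < ε) :
    ‖wfTerm ψ z n‖ ≤ Real.exp (2 / ε * ‖z‖ ^ 2) * (‖ψ n‖ * Real.exp ε ^ n) := by
  have hb := (aux_bound (((Real.sqrt 2 : ℝ) : ℂ) * z) n).1
  have hw : ‖((Real.sqrt 2 : ℝ) : ℂ) * z‖ = √2 * ‖z‖ := by
    rw [norm_mul, Complex.norm_real, Real.norm_of_nonneg (Real.sqrt_nonneg _)]
  rw [hw] at hb
  have hf : 0 < √(n.factorial : ℝ) := Real.sqrt_pos.2 (by positivity)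
  have h2 : 0 < √(2 : ℝ) := by positivity
  have hs : √((2 : ℝ) ^ n * n.factorial) = √2 ^ n * √(n.factorial : ℝ) := by
    have h4 : (2 : ℝ) ^ n = (√2 ^ n) ^ 2 := by
      rw [← pow_mul, mul_comm, pow_mul, Real.sq_sqrt (by norm_num)]
    rw [Real.sqrt_mul (by positivity), h4, Real.sqrt_sq (by positivity)]
  have hn : ‖wfTerm ψ z n‖ = ‖ψ n‖ * ((√(n.factorial : ℝ))⁻¹ *
      ‖Polynomial.aeval (((Real.sqrt 2 : ℝ) : ℂ) * z) (Polynomial.hermite n)‖) := by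
    unfold wfTerm physHermite
    rw [hs]
    simp only [norm_mul, norm_inv, norm_pow, Complex.norm_real, Real.norm_eq_abs,
      abs_of_pos h2, abs_of_pos hf]
    field_simp
  have hy : 2 * (√2 * ‖z‖) * √(n : ℝ) ≤ 2 / ε * ‖z‖ ^ 2 + n * ε := by
    have e1 : √(2 : ℝ) ^ 2 = 2 := Real.sq_sqrt (by norm_num)
    have e2 : √(n : ℝ) ^ 2 = n := Real.sq_sqrt (by positivity)
    have : 2 / ε * ‖z‖ ^ 2 + n * ε - 2 * (√2 * ‖z‖) * √(n : ℝ) =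
        (√2 * ‖z‖ - ε * √(n : ℝ)) ^ 2 / ε := by
      field_simp
      ring_nf
      rw [e1, e2]
    have : 0 ≤ (√2 * ‖z‖ - ε * √(n : ℝ)) ^ 2 / ε := by positivity
    linarith
  rw [hn]
  calc _ ≤ ‖ψ n‖ * ((√(n.factorial : ℝ))⁻¹ *
        (√(n.factorial : ℝ) * Real.exp (2 / ε * ‖z‖ ^ 2 + n * ε))) := by
        gcongr
        exact hb.trans (by gcongr)
    _ = _ := by
        rw [inv_mul_cancel_left₀ hf.ne', Real.exp_add, Real.exp_nat_mul]; ring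

theorem aux_sum (ψ : ℕ → ℂ) (s ε : ℝ) (hε : 0 < ε) (hs : s = Real.exp ε ^ 4)
    (hE : Summable fun n => s ^ n * ‖ψ n‖ ^ 2) :
    Summable fun n => ‖ψ n‖ * Real.exp ε ^ n := by
  set q := Real.exp ε with hq
  have hq1 : 1 < q := Real.one_lt_exp_iff.2 hε
  have hg : Summable fun n : ℕ => ((q ^ 2)⁻¹) ^ n :=
    summable_geometric_of_lt_one (by positivity) (inv_lt_one_of_one_lt₀ (by nlinarith))
  refine Summable.of_nonneg_of_le (fun n => by positivity) (fun n => ?_) (hE.add hg)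
  have hqn : 0 < q ^ n := by positivity
  have e1 : s ^ n = (q ^ n) ^ 4 := by rw [hs, ← pow_mul, ← pow_mul, mul_comm]
  have e2 : ((q ^ 2)⁻¹) ^ n = ((q ^ n)⁻¹) ^ 2 := by
    rw [inv_pow, inv_pow, ← pow_mul, ← pow_mul, mul_comm]
  rw [e1, e2]
  have h3 : ‖ψ n‖ * q ^ n = ((q ^ n) ^ 2 * ‖ψ n‖) * (q ^ n)⁻¹ := by field_simp
  rw [h3]
  nlinarith [sq_nonneg ((q ^ n) ^ 2 * ‖ψ n‖ - (q ^ n)⁻¹), sq_nonneg ((q ^ n) ^ 2 * ‖ψ n‖),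
    sq_nonneg ((q ^ n)⁻¹)]

theorem aux_diff (ψ : ℕ → ℂ) (n : ℕ) : Differentiable ℂ fun z => wfTerm ψ z n := by
  unfold wfTerm physHermite
  have h := (Polynomial.differentiable_aeval (𝕜 := ℂ) (Polynomial.hermite n))
  have h2 : Differentiable ℂ fun z : ℂ =>
      Polynomial.aeval (((Real.sqrt 2 : ℝ) : ℂ) * z) (Polynomial.hermite n) :=
    h.comp (differentiable_id.const_mul _)
  exact (h2.const_mul _).const_mul _

/-- **Entire wavefunctions.** Under the energy bound `Σ s^n |ψ_n|² < ∞` for some `s > 1`: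
(i) the Hermite series of the wavefunction converges absolutely at every `z ∈ ℂ`;
(ii) the extended wavefunction is entire;
(iii) `|ψ(z)|² ≤ K e^(L|z|²)` for some constants `K, L > 0`, i.e. order of growth at most 2. -/
theorem entire_wavefunction (ψ : ℕ → ℂ) (s : ℝ) (hs : 1 < s)
    (hE : Summable fun n => s ^ n * ‖ψ n‖ ^ 2) :
    (∀ z : ℂ, Summable fun n => ‖wfTerm ψ z n‖) ∧
    (∀ z : ℂ, AnalyticAt ℂ (extWf ψ) z) ∧
    (∃ K > (0 : ℝ), ∃ L > (0 : ℝ), ∀ z : ℂ,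
      ‖extWf ψ z‖ ^ 2 ≤ K * Real.exp (L * ‖z‖ ^ 2)) := by
  obtain ⟨ε, hε, hsε⟩ : ∃ ε : ℝ, 0 < ε ∧ s = Real.exp ε ^ 4 := by
    refine ⟨Real.log s / 4, by have := Real.log_pos hs; positivity, ?_⟩
    rw [← Real.exp_nat_mul]
    push_cast
    rw [mul_div_cancel₀ _ (by norm_num), Real.exp_log (by linarith)]
  have hS := aux_sum ψ s ε hε hsε hE
  have hsum : ∀ z : ℂ, Summable fun n => ‖wfTerm ψ z n‖ := fun z =>
    Summable.of_nonneg_of_le (fun n => norm_nonneg _) (fun n => aux_term ψ z n ε hε)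
      (hS.mul_left _)
  refine ⟨hsum, ?_, ?_⟩
  · have hT : Differentiable ℂ fun z => ∑' n, wfTerm ψ z n := by
      intro z
      have hd : DifferentiableOn ℂ (fun z => ∑' n, wfTerm ψ z n) (Metric.ball 0 (‖z‖ + 1)) := by
        refine Complex.differentiableOn_tsum_of_summable_norm
          (hS.mul_left (Real.exp (2 / ε * (‖z‖ + 1) ^ 2)))
          (fun n => (aux_diff ψ n).differentiableOn) Metric.isOpen_ball (fun n w hw => ?_)
        refine (aux_term ψ w n ε hε).trans ?_
        have : ‖w‖ ≤ ‖z‖ + 1 := by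
          rw [mem_ball_zero_iff] at hw; exact hw.le
        gcongr
      exact hd.differentiableAt (Metric.isOpen_ball.mem_nhds (by simp))
    have hD : Differentiable ℂ (extWf ψ) := by
      unfold extWf
      refine Differentiable.mul (Differentiable.mul (differentiable_const _) ?_) hT
      fun_prop
    exact fun z => hD.analyticAt z
  · set M := ∑' n, ‖ψ n‖ * Real.exp ε ^ n with hM
    have hM0 : 0 ≤ M := tsum_nonneg fun n => by positivity
    set c := ‖((Real.pi ^ ((1 : ℝ) / 4) : ℝ) : ℂ)⁻¹‖ with hc
    refine ⟨(c * M) ^ 2 + 1, by positivity, 1 + 4 / ε, by positivity, fun z => ?_⟩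
    have h1 : ‖∑' n, wfTerm ψ z n‖ ≤ Real.exp (2 / ε * ‖z‖ ^ 2) * M := by
      rw [hM, ← tsum_mul_left]
      exact (norm_tsum_le_tsum_norm (hsum z)).trans
        ((hsum z).tsum_le_tsum (fun n => aux_term ψ z n ε hε) (hS.mul_left _))
    have h2 : ‖Complex.exp (-z ^ 2 / 2)‖ ≤ Real.exp (‖z‖ ^ 2 / 2) := by
      refine (Complex.norm_exp_le_exp_norm _).trans (le_of_eq ?_)
      simp
    have h3 : ‖extWf ψ z‖ ≤ c * M * Real.exp ((1 / 2 + 2 / ε) * ‖z‖ ^ 2) := by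
      unfold extWf
      rw [norm_mul, norm_mul]
      calc _ ≤ c * Real.exp (‖z‖ ^ 2 / 2) * (Real.exp (2 / ε * ‖z‖ ^ 2) * M) := by gcongr
        _ = c * M * (Real.exp (‖z‖ ^ 2 / 2) * Real.exp (2 / ε * ‖z‖ ^ 2)) := by ring
        _ = _ := by rw [← Real.exp_add]; ring_nf
    calc _ ≤ (c * M * Real.exp ((1 / 2 + 2 / ε) * ‖z‖ ^ 2)) ^ 2 := by gcongr
      _ = (c * M) ^ 2 * Real.exp ((1 + 4 / ε) * ‖z‖ ^ 2) := by
          rw [mul_pow, ← Real.exp_nat_mul]; push_cast; ring_nf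
      _ ≤ _ := by gcongr; linarith
end

section
/- Let (ψ_n)_{n∈ℕ} be a sequence of complex numbers satisfying the energy bound Σ_{n≥0} s^n |ψ_n|² < ∞ for some s > 1, and let ψ : ℂ → ℂ be its extended wavefunction. If there exist real numbers u < v such that ψ(x) = 0 for every real x ∈ [u, v], then ψ(z) = 0 for every z ∈ ℂ. (In other words, a nonzero wavefunction vanishing on a continuous segment of the real line must violate the energy bound for every s > 1.) -/
open scoped BigOperators

theorem aux_deriv_hermite (n : ℕ) : Polynomial.derivative (Polynomial.hermite (n + 1)) =
    ((n : Polynomial ℤ) + 1) * Polynomial.hermite n := by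
  induction n with
  | zero => simp
  | succ n ih =>
    have h1 := Polynomial.hermite_succ n
    have e : Polynomial.derivative ((n : Polynomial ℤ) + 1) = 0 := by simp
    rw [Polynomial.hermite_succ (n + 1), Polynomial.derivative_sub, Polynomial.derivative_mul, ih,
      Polynomial.derivative_mul, e, Polynomial.derivative_X]
    push_cast
    rw [h1]
    ring

noncomputable def auxB (R : ℝ) (n : ℕ) : ℝ :=
  ∏ k ∈ Finset.range n, (1 + R / Real.sqrt ((k : ℝ) + 1))

theorem auxB_succ (R : ℝ) (n : ℕ) :
    auxB R (n + 1) = auxB R n * (1 + R / Real.sqrt ((n : ℝ) + 1)) :=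
  Finset.prod_range_succ _ _

theorem auxB_pos {R : ℝ} (hR : 0 ≤ R) (n : ℕ) : 0 < auxB R n :=
  Finset.prod_pos fun k _ => by positivity

noncomputable def auxF (n : ℕ) : ℝ := Real.sqrt (n.factorial : ℝ)

theorem auxF_succ (n : ℕ) : auxF (n + 1) = Real.sqrt ((n : ℝ) + 1) * auxF n := by
  unfold auxF
  rw [← Real.sqrt_mul (by positivity), Nat.factorial_succ]
  push_cast
  rfl

theorem aux_hermite_rec (n : ℕ) (w : ℂ) :
    Polynomial.aeval w (Polynomial.hermite (n + 2)) =
      w * Polynomial.aeval w (Polynomial.hermite (n + 1)) -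
        ((n : ℂ) + 1) * Polynomial.aeval w (Polynomial.hermite n) := by
  rw [Polynomial.hermite_succ (n + 1), aux_deriv_hermite]
  simp

theorem aux_hermite_bound {R : ℝ} (hR : 0 ≤ R) {w : ℂ} (hw : ‖w‖ ≤ R) (n : ℕ) :
    ‖Polynomial.aeval w (Polynomial.hermite n)‖ ≤ auxF n * auxB R n := by
  induction n using Nat.twoStepInduction with
  | zero => simp [auxF, auxB]
  | one => 
    simp [auxF, auxB]
    linarith
  | more n h0 h1 =>
    rw [aux_hermite_rec]
    have hn : ‖((n : ℂ) + 1)‖ = (n : ℝ) + 1 := by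
      rw [← Nat.cast_succ, Complex.norm_natCast]; simp
    have hF : 0 ≤ auxF n := Real.sqrt_nonneg _
    have hb := (auxB_pos hR n).le
    have hb1 := (auxB_pos hR (n + 1)).le
    have hbm : auxB R n ≤ auxB R (n + 1) := by
      rw [auxB_succ]
      have : 0 ≤ R / Real.sqrt ((n : ℝ) + 1) := by positivity
      nlinarith
    set a := Real.sqrt ((n : ℝ) + 1) with ha
    set c := Real.sqrt (((n + 1 : ℕ) : ℝ) + 1) with hc
    have hcpos : 0 < c := Real.sqrt_pos.2 (by positivity)
    have ha0 : 0 ≤ a := Real.sqrt_nonneg _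
    have haa : a * a = (n : ℝ) + 1 := Real.mul_self_sqrt (by positivity)
    have hac : a ≤ c := Real.sqrt_le_sqrt (by push_cast; linarith)
    have hF1 : auxF (n + 1) = a * auxF n := auxF_succ n
    have hF2 : auxF (n + 2) = c * (a * auxF n) := by rw [auxF_succ (n + 1), hF1]
    have hB2 : auxB R (n + 2) = auxB R (n + 1) * (1 + R / c) := auxB_succ R (n + 1)
    calc _ ≤ ‖w‖ * ‖Polynomial.aeval w (Polynomial.hermite (n + 1))‖ +
          ((n : ℝ) + 1) * ‖Polynomial.aeval w (Polynomial.hermite n)‖ := by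
            refine (norm_sub_le _ _).trans ?_
            rw [norm_mul, norm_mul, hn]
      _ ≤ R * (auxF (n + 1) * auxB R (n + 1)) + ((n : ℝ) + 1) * (auxF n * auxB R (n + 1)) := by
            gcongr
            exact h0.trans (by gcongr)
      _ = R * (a * auxF n * auxB R (n + 1)) + a * a * (auxF n * auxB R (n + 1)) := by
            rw [hF1, haa]
      _ ≤ R * (a * auxF n * auxB R (n + 1)) + c * a * (auxF n * auxB R (n + 1)) := by
            gcongr
      _ = _ := by
            rw [hF2, hB2]
            field_simp
            ring

theorem auxB_summable {R s : ℝ} (hR : 0 ≤ R) (hs : 1 < s) :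
    Summable fun n => auxB R n ^ 2 / s ^ n := by
  have hs0 : 0 < s := by linarith
  refine summable_of_ratio_test_tendsto_lt_one (l := 1 / s) ?_ ?_ ?_
  · rw [div_lt_one hs0]; exact hs
  · exact Filter.Eventually.of_forall fun n => by
      have := auxB_pos hR n
      positivity
  · have h1 : Filter.Tendsto (fun n : ℕ => Real.sqrt ((n : ℝ) + 1)) Filter.atTop Filter.atTop :=
      Real.tendsto_sqrt_atTop.comp (Filter.tendsto_atTop_add_const_right _ _
        tendsto_natCast_atTop_atTop)
    have h2 : Filter.Tendsto (fun n : ℕ => (1 + R / Real.sqrt ((n : ℝ) + 1)) ^ 2 / s)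
        Filter.atTop (nhds ((1 + 0) ^ 2 / s)) :=
      ((tendsto_const_nhds.add (h1.const_div_atTop R)).pow 2).div_const s
    have h3 : ((1 : ℝ) + 0) ^ 2 / s = 1 / s := by norm_num
    rw [h3] at h2
    refine h2.congr fun n => ?_
    have hb := auxB_pos hR n
    have hb1 := auxB_pos hR (n + 1)
    rw [Real.norm_of_nonneg (by positivity), Real.norm_of_nonneg (by positivity), auxB_succ]
    have : 0 < 1 + R / Real.sqrt ((n : ℝ) + 1) := by positivity
    generalize 1 + R / Real.sqrt ((n : ℝ) + 1) = t at *
    field_simp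
    ring

theorem aux_wfTerm_bound (ψ : ℕ → ℂ) {s : ℝ} (hs : 1 < s) {R : ℝ} (hR : 0 ≤ R) {z : ℂ}
    (hz : ‖z‖ ≤ R) (n : ℕ) :
    ‖wfTerm ψ z n‖ ≤ s ^ n * ‖ψ n‖ ^ 2 + auxB (Real.sqrt 2 * R) n ^ 2 / s ^ n := by
  have hw : ‖((Real.sqrt 2 : ℝ) : ℂ) * z‖ ≤ Real.sqrt 2 * R := by
    rw [norm_mul, Complex.norm_real, Real.norm_of_nonneg (Real.sqrt_nonneg _)]
    gcongr
  have hR2 : 0 ≤ Real.sqrt 2 * R := by positivity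
  have hb := aux_hermite_bound hR2 hw n
  have hB := auxB_pos hR2 n
  have hF : 0 < auxF n := Real.sqrt_pos.2 (by positivity)
  have hsq : Real.sqrt (2 ^ n * n.factorial) = Real.sqrt 2 ^ n * auxF n := by
    rw [Real.sqrt_mul (by positivity), auxF]
    congr 1
    rw [Real.sqrt_eq_iff_mul_self_eq (by positivity) (by positivity), ← mul_pow]
    norm_num
  have h2 : 0 < Real.sqrt 2 ^ n := by positivity
  have h1 : ‖wfTerm ψ z n‖ ≤ ‖ψ n‖ * auxB (Real.sqrt 2 * R) n := by
    unfold wfTerm physHermite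
    rw [hsq, norm_mul, norm_mul, norm_mul, norm_inv, Complex.norm_real, norm_pow,
      Complex.norm_real, Real.norm_of_nonneg (by positivity : 0 ≤ Real.sqrt 2),
      Real.norm_of_nonneg (by positivity)]
    calc _ ≤ ‖ψ n‖ * (Real.sqrt 2 ^ n * auxF n)⁻¹ *
          (Real.sqrt 2 ^ n * (auxF n * auxB (Real.sqrt 2 * R) n)) := by gcongr
      _ = _ := by field_simp
  refine h1.trans ?_
  generalize auxB (Real.sqrt 2 * R) n = b at *
  have ht : 0 < s ^ n := by positivity
  generalize s ^ n = t at *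
  have e : t * ‖ψ n‖ ^ 2 + b ^ 2 / t - ‖ψ n‖ * b =
      ((t * ‖ψ n‖ - b) ^ 2 + t * ‖ψ n‖ * b) / t := by
    field_simp
    ring
  have : 0 ≤ ((t * ‖ψ n‖ - b) ^ 2 + t * ‖ψ n‖ * b) / t := by positivity
  linarith

theorem aux_extWf_differentiable (ψ : ℕ → ℂ) (s : ℝ) (hs : 1 < s)
    (hE : Summable fun n => s ^ n * ‖ψ n‖ ^ 2) : Differentiable ℂ (extWf ψ) := by
  intro z
  have hd : DifferentiableAt ℂ (fun z => ∑' n, wfTerm ψ z n) z := by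
    have hR : 0 ≤ ‖z‖ + 1 := by positivity
    have := Complex.differentiableOn_tsum_of_summable_norm
      (F := fun n z => wfTerm ψ z n) (U := Metric.ball (0 : ℂ) (‖z‖ + 1))
      (hE.add (auxB_summable (R := Real.sqrt 2 * (‖z‖ + 1)) (by positivity) hs))
      (fun n => by
        unfold wfTerm physHermite
        have : Differentiable ℂ fun z : ℂ => Polynomial.aeval (((Real.sqrt 2 : ℝ) : ℂ) * z)
            (Polynomial.hermite n) := by
          have h := Polynomial.differentiable_aeval (𝕜 := ℂ) (Polynomial.hermite n)
          exact h.fun_comp (g := fun x : ℂ => Polynomial.aeval x (Polynomial.hermite n))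
            (differentiable_id.const_mul ((Real.sqrt 2 : ℝ) : ℂ))
        exact ((this.const_mul _).const_mul _).differentiableOn) Metric.isOpen_ball
      (fun n w hw => aux_wfTerm_bound ψ hs hR (by simpa using (mem_ball_zero_iff.1 hw).le) n)
    exact this.differentiableAt (Metric.isOpen_ball.mem_nhds (by simp))
  unfold extWf
  exact DifferentiableAt.mul (by fun_prop) hd

/-- If a wavefunction satisfying the energy bound `Σ s^n |ψ_n|² < ∞` for some `s > 1`
vanishes on a segment `[u, v]` of the real line, then it vanishes identically on `ℂ`. -/
theorem extWf_eq_zero_of_zero_on_segment (ψ : ℕ → ℂ) (s : ℝ) (hs : 1 < s)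
    (hE : Summable fun n => s ^ n * ‖ψ n‖ ^ 2)
    (u v : ℝ) (huv : u < v)
    (hzero : ∀ x : ℝ, x ∈ Set.Icc u v → extWf ψ (x : ℂ) = 0) :
    ∀ z : ℂ, extWf ψ z = 0 := by
  have hA : AnalyticOnNhd ℂ (extWf ψ) Set.univ :=
    (aux_extWf_differentiable ψ s hs hE).differentiableOn.analyticOnNhd isOpen_univ
  have hfr : ∃ᶠ z in nhdsWithin (u : ℂ) {(u : ℂ)}ᶜ, extWf ψ z = 0 := by
    have ht : Filter.Tendsto (fun x : ℝ => (x : ℂ)) (nhdsWithin u (Set.Ioi u))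
        (nhdsWithin (u : ℂ) {(u : ℂ)}ᶜ) := by
      refine tendsto_nhdsWithin_iff.2 ⟨?_, ?_⟩
      · exact (Complex.continuous_ofReal.tendsto u).mono_left nhdsWithin_le_nhds
      · filter_upwards [self_mem_nhdsWithin] with x hx
        have : x ≠ u := ne_of_gt hx
        simpa using this
    refine ht.frequently (Filter.Eventually.frequently ?_)
    filter_upwards [Ioo_mem_nhdsGT huv] with x hx
    exact hzero x ⟨hx.1.le, hx.2.le⟩
  have h0 := hA.eqOn_zero_of_preconnected_of_frequently_eq_zero isPreconnected_univ
    (Set.mem_univ (u : ℂ)) hfr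
  intro z
  exact h0 (Set.mem_univ z)
end

section
/- (Hudson theorem for the wavefunction.) Let (ψ_n)_{n∈ℕ} be a sequence of complex numbers satisfying the energy bound Σ_{n≥0} s^n |ψ_n|² < ∞ for some s > 1, and let ψ : ℂ → ℂ be its extended wavefunction. Then ψ(z) ≠ 0 for every z ∈ ℂ if and only if there exist a, b, c ∈ ℂ with Re(a) > 0 such that ψ(z) = e^{-a z² + b z + c} for every z ∈ ℂ (i.e. if and only if ψ is a Gaussian wavefunction). -/
open scoped BigOperators

lemma hud_log (F : ℂ → ℂ) (hF : Differentiable ℂ F) (h0 : ∀ z, F z ≠ 0) :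
    ∃ g : ℂ → ℂ, Differentiable ℂ g ∧ ∀ z, F z = Complex.exp (g z) := by
  have h1 : Differentiable ℂ (fun z => deriv F z / F z) :=
    (hF.deriv).div hF h0
  obtain ⟨g, hg0, hg⟩ := h1.isExactOn_univ.with_val_at 0 (Complex.log (F 0))
  have hgd : Differentiable ℂ g := fun z => (hg z (Set.mem_univ z)).differentiableAt
  refine ⟨g, hgd, ?_⟩
  have hder : ∀ z, HasDerivAt (fun z => F z * Complex.exp (- g z)) 0 z := by
    intro z
    have h2 := (hF z).hasDerivAt.mul ((hg z (Set.mem_univ z)).neg.cexp)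
    refine HasDerivAt.congr_deriv h2 ?_
    have := h0 z
    field_simp
    ring
  have hconst := is_const_of_deriv_eq_zero (f := fun z => F z * Complex.exp (- g z))
    (fun z => (hder z).differentiableAt) (fun z => (hder z).deriv)
  intro z
  have h3 := hconst z 0
  simp only [hg0, Complex.exp_neg, Complex.exp_log (h0 0)] at h3
  rw [mul_inv_cancel₀ (h0 0)] at h3
  have := Complex.exp_ne_zero (g z)
  field_simp at h3
  exact h3

lemma hud_quad (F : ℂ → ℂ) (hF : Differentiable ℂ F) (h0 : ∀ z, F z ≠ 0)
    (C A : ℝ) (hC : 0 < C) (hA : 0 ≤ A) (hb : ∀ z, ‖F z‖ ≤ C * Real.exp (A * ‖z‖ ^ 2)) :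
    ∃ a b c : ℂ, ∀ z, F z = Complex.exp (-a * z ^ 2 + b * z + c) := by
  obtain ⟨g, hg, hFg⟩ := hud_log F hF h0
  have hre : ∀ z, (g z).re ≤ |Real.log C| + A * ‖z‖ ^ 2 := by
    intro z
    have h1 := hb z
    rw [hFg, Complex.norm_exp] at h1
    have h2 := Real.log_le_log (Real.exp_pos _) h1
    rw [Real.log_exp, Real.log_mul hC.ne' (Real.exp_pos _).ne', Real.log_exp] at h2
    linarith [le_abs_self (Real.log C)]
  set L := |Real.log C| with hL
  have hL0 : 0 ≤ L := abs_nonneg _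
  have hbound : ∀ R : ℝ, 0 < R → ∀ z ∈ Metric.sphere (0 : ℂ) R,
      ‖g z‖ ≤ 2 * (L + 4 * A * R ^ 2 + 1) + 3 * ‖g 0‖ := by
    intro R hR z hz
    have hzR : ‖z‖ = R := by simpa using hz
    have hM : 0 < L + 4 * A * R ^ 2 + 1 := by positivity
    have := Complex.borelCaratheodory (f := g) (R := 2 * R) (z := z) hM hg.differentiableOn
      (by
        intro x hx
        have hx' : ‖x‖ < 2 * R := by simpa using hx
        have h2 : ‖x‖ ^ 2 ≤ (2 * R) ^ 2 := pow_le_pow_left₀ (norm_nonneg _) hx'.le 2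
        have h3 := mul_le_mul_of_nonneg_left h2 hA
        have h4 := hre x
        show (g x).re ≤ _
        nlinarith) (by positivity) (by simp [hzR]; linarith)
    rw [hzR] at this
    have e1 : 2 * R - R = R := by ring
    have e2 : 2 * R + R = 3 * R := by ring
    rw [e1, e2] at this
    convert this using 1
    field_simp
  have hder : ∀ n : ℕ, 3 ≤ n → iteratedDeriv n g 0 = 0 := by
    intro n hn
    have h1 : ∀ R : ℝ, 1 ≤ R → ‖iteratedDeriv n g 0‖ ≤
        n.factorial * (2 * (L + 4 * A + 1) + 3 * ‖g 0‖) * R⁻¹ := by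
      intro R hR
      have hR0 : 0 < R := by linarith
      have h2 := Complex.norm_iteratedDeriv_le_of_forall_mem_sphere_norm_le n hR0
        hg.diffContOnCl (hbound R hR0)
      refine h2.trans ?_
      rw [div_le_iff₀ (by positivity)]
      have e5 : (n.factorial : ℝ) * (2 * (L + 4 * A + 1) + 3 * ‖g 0‖) * R⁻¹ * R ^ n =
          n.factorial * ((2 * (L + 4 * A + 1) + 3 * ‖g 0‖) * (R⁻¹ * R ^ n)) := by ring
      rw [e5]
      refine mul_le_mul_of_nonneg_left ?_ (Nat.cast_nonneg _)
      have h3 : R ^ 2 ≤ R⁻¹ * R ^ n := by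
        have : R⁻¹ * R ^ 3 ≤ R⁻¹ * R ^ n := by gcongr
        refine le_trans (le_of_eq ?_) this
        field_simp
      have h4 : 1 ≤ R ^ 2 := one_le_pow₀ hR
      calc 2 * (L + 4 * A * R ^ 2 + 1) + 3 * ‖g 0‖
          ≤ (2 * (L + 4 * A + 1) + 3 * ‖g 0‖) * R ^ 2 := by
            nlinarith [mul_nonneg hL0 (sub_nonneg.2 h4),
              mul_nonneg (norm_nonneg (g 0)) (sub_nonneg.2 h4)]
        _ ≤ _ := by gcongr
    have h5 : Filter.Tendsto (fun R : ℝ =>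
        (n.factorial * (2 * (L + 4 * A + 1) + 3 * ‖g 0‖)) * R⁻¹) Filter.atTop (nhds 0) := by
      simpa using tendsto_inv_atTop_zero.const_mul
        ((n.factorial : ℝ) * (2 * (L + 4 * A + 1) + 3 * ‖g 0‖))
    have h6 := ge_of_tendsto h5 (Filter.eventually_atTop.2 ⟨1, h1⟩)
    exact norm_le_zero_iff.1 h6
  refine ⟨-((2 : ℂ)⁻¹ * iteratedDeriv 2 g 0), iteratedDeriv 1 g 0, g 0, fun z => ?_⟩
  rw [hFg]
  congr 1
  rw [← Complex.taylorSeries_eq_of_entire' 0 z hg, tsum_eq_sum (s := Finset.range 3)]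
  · simp [Finset.sum_range_succ]
    ring
  · intro n hn
    rw [hder n (by simpa using hn)]
    simp

lemma hud_gen (w : ℂ) (n : ℕ) :
    iteratedDeriv n (fun t : ℂ => Complex.exp (w * t - t ^ 2 / 2)) =
      fun t => Polynomial.aeval (w - t) (Polynomial.hermite n) *
        Complex.exp (w * t - t ^ 2 / 2) := by
  induction n with
  | zero => simp
  | succ n ih =>
    rw [iteratedDeriv_succ, ih]
    funext t
    have h1 : HasDerivAt (fun t : ℂ => w - t) (-1) t := by
      simpa using (hasDerivAt_id t).const_sub w
    have h2 := (Polynomial.hasDerivAt_aeval (Polynomial.hermite n) (w - t)).comp t h1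
    have h3 : HasDerivAt (fun t : ℂ => w * t - t ^ 2 / 2) (w - t) t := by
      have := ((hasDerivAt_id t).const_mul w).sub (((hasDerivAt_id t).pow 2).div_const 2)
      refine HasDerivAt.congr_deriv this ?_
      simp
    have h4 := h2.mul h3.cexp
    have h5 := h4.deriv
    refine Eq.trans h5 ?_
    rw [Polynomial.hermite_succ]
    simp
    ring

lemma hud_cauchy (w : ℂ) (n : ℕ) (r B : ℝ) (hr : 0 < r)
    (hB : ∀ t : ℂ, ‖t‖ = r → (w * t - t ^ 2 / 2).re ≤ B) :
    ‖Polynomial.aeval w (Polynomial.hermite n)‖ ≤ n.factorial * Real.exp B / r ^ n := by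
  have h := Complex.norm_iteratedDeriv_le_of_forall_mem_sphere_norm_le (c := 0) (C := Real.exp B)
    (f := fun t : ℂ => Complex.exp (w * t - t ^ 2 / 2)) n hr
    (Differentiable.diffContOnCl (by fun_prop))
    (fun t ht => by
      rw [Complex.norm_exp]
      exact Real.exp_le_exp.2 (hB t (by simpa using ht)))
  rw [hud_gen] at h
  simpa using h

lemma hud_fact (n : ℕ) : Real.sqrt n.factorial * Real.exp (n / 2) ≤
    Real.exp 1 * (n + 1) * Real.sqrt n ^ n := by
  rcases n with _ | n
  · simp
  have h1 : Stirling.stirlingSeq (n + 1) ≤ Stirling.stirlingSeq 1 :=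
    Stirling.stirlingSeq'_antitone (Nat.zero_le n)
  rw [Stirling.stirlingSeq_one, Stirling.stirlingSeq] at h1
  set m := n + 1 with hm
  have hm1 : (1 : ℝ) ≤ m := by rw [hm]; push_cast; linarith [(Nat.cast_nonneg n : (0:ℝ) ≤ n)]
  have hm0 : (0 : ℝ) < m := by linarith
  rw [div_le_iff₀ (by positivity), Real.sqrt_mul (by norm_num), div_pow] at h1
  have h2 : (m.factorial : ℝ) * Real.exp m ≤ Real.exp 1 * Real.sqrt m * m ^ m := by
    have e : Real.exp 1 ^ m = Real.exp m := by rw [← Real.exp_nat_mul, mul_one]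
    rw [e] at h1
    calc (m.factorial : ℝ) * Real.exp m ≤ _ := mul_le_mul_of_nonneg_right h1 (Real.exp_pos _).le
      _ = _ := by field_simp
  have h3 : Real.sqrt m ≤ (m + 1) ^ 2 := by
    rw [Real.sqrt_le_left (by positivity)]
    nlinarith [mul_pos hm0 hm0, pow_pos hm0 3, pow_pos hm0 4]
  have h4 : Real.exp 1 ≤ Real.exp 1 ^ 2 := by
    have : 1 ≤ Real.exp 1 := Real.one_le_exp (by norm_num)
    nlinarith
  rw [← pow_le_pow_iff_left₀ (by positivity) (by positivity) (two_ne_zero)]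
  have e1 : (Real.sqrt m.factorial * Real.exp (m / 2)) ^ 2 = m.factorial * Real.exp m := by
    rw [mul_pow, Real.sq_sqrt (by positivity), ← Real.exp_nat_mul]
    congr 2; push_cast; ring
  have e2 : (Real.exp 1 * (m + 1) * Real.sqrt m ^ m) ^ 2 =
      Real.exp 1 ^ 2 * (m + 1) ^ 2 * m ^ m := by
    rw [mul_pow, mul_pow, ← pow_mul, mul_comm m 2, pow_mul, Real.sq_sqrt hm0.le]
  rw [e1, e2]
  refine h2.trans ?_
  gcongr

lemma hud_herm (w : ℂ) (n : ℕ) (ε : ℝ) (hε : 0 < ε) :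
    (Real.sqrt n.factorial)⁻¹ * ‖Polynomial.aeval w (Polynomial.hermite n)‖ ≤
      Real.exp 1 * (n + 1) * Real.exp (ε * n) *
        Real.exp (w.re ^ 2 / 4 + w.im ^ 2 / (4 * ε)) := by
  rcases Nat.eq_zero_or_pos n with rfl | hn
  · simp
    rw [← Real.exp_add]
    apply Real.one_le_exp
    positivity
  have hn0 : (0 : ℝ) < n := by exact_mod_cast hn
  have h1 := hud_cauchy w n (Real.sqrt n)
    (n / 2 + (ε * n + (w.re ^ 2 / 4 + w.im ^ 2 / (4 * ε)))) (by positivity) (by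
      intro t ht
      have h2 : t.re ^ 2 + t.im ^ 2 = n := by
        have := Complex.sq_norm t
        rw [ht, Real.sq_sqrt hn0.le, Complex.normSq_apply] at this
        linarith
      have h3 : (w * t - t ^ 2 / 2).re =
          w.re * t.re - w.im * t.im - (t.re ^ 2 - t.im ^ 2) / 2 := by
        have : t ^ 2 / 2 = ((1 / 2 : ℝ) : ℂ) * (t * t) := by push_cast; ring
        rw [this, Complex.sub_re, Complex.re_ofReal_mul]
        simp
        ring
      rw [h3]
      have h4 : -(w.im * t.im) ≤ ε * t.im ^ 2 + w.im ^ 2 / (4 * ε) := by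
        have : 0 ≤ (2 * ε * t.im + w.im) ^ 2 / (4 * ε) := by positivity
        have e : (2 * ε * t.im + w.im) ^ 2 / (4 * ε) =
            ε * t.im ^ 2 + w.im * t.im + w.im ^ 2 / (4 * ε) := by
          field_simp; ring
        linarith
      have h5 : ε * t.im ^ 2 ≤ ε * n := by
        gcongr; nlinarith [sq_nonneg t.re]
      nlinarith [sq_nonneg (t.re - w.re / 2)])
  rw [Real.exp_add, Real.exp_add] at h1
  set G := Real.exp (w.re ^ 2 / 4 + w.im ^ 2 / (4 * ε))
  have h6 := hud_fact n
  have hs : (n.factorial : ℝ) = Real.sqrt n.factorial * Real.sqrt n.factorial :=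
    (Real.mul_self_sqrt (by positivity)).symm
  have hsp : 0 < Real.sqrt n.factorial := Real.sqrt_pos.2 (by positivity)
  have hrp : 0 < Real.sqrt n ^ n := by positivity
  calc (Real.sqrt n.factorial)⁻¹ * ‖Polynomial.aeval w (Polynomial.hermite n)‖
      ≤ (Real.sqrt n.factorial)⁻¹ *
        (n.factorial * (Real.exp (n / 2) * (Real.exp (ε * n) * G)) / Real.sqrt n ^ n) := by gcongr
    _ = (Real.sqrt n.factorial * Real.exp (n / 2)) / Real.sqrt n ^ n * (Real.exp (ε * n) * G) := by
        nth_rewrite 2 [hs]; field_simp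
    _ ≤ (Real.exp 1 * (n + 1)) * (Real.exp (ε * n) * G) := by
        gcongr
        rw [div_le_iff₀ hrp]
        exact h6
    _ = _ := by ring

lemma hud_term (ψ : ℕ → ℂ) (z : ℂ) (n : ℕ) : ‖wfTerm ψ z n‖ =
    ‖ψ n‖ * ((Real.sqrt n.factorial)⁻¹ *
      ‖Polynomial.aeval (((Real.sqrt 2 : ℝ) : ℂ) * z) (Polynomial.hermite n)‖) := by
  have h2 : (0 : ℝ) < Real.sqrt 2 ^ n := by positivity
  have h : Real.sqrt (2 ^ n * n.factorial) = Real.sqrt 2 ^ n * Real.sqrt n.factorial := by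
    rw [Real.sqrt_mul (by positivity)]
    congr 1
    rw [Real.sqrt_eq_iff_mul_self_eq (by positivity) (by positivity), ← mul_pow,
      Real.mul_self_sqrt (by norm_num)]
  have hf : (0:ℝ) < Real.sqrt n.factorial := Real.sqrt_pos.2 (by positivity)
  rw [wfTerm, physHermite, h]
  simp only [norm_mul, norm_inv, norm_pow, Complex.norm_real, Real.norm_eq_abs,
    abs_of_nonneg (Real.sqrt_nonneg _)]
  field_simp

lemma hud_sqrt_two (z : ℂ) : (((Real.sqrt 2 : ℝ) : ℂ) * z).re ^ 2 = 2 * z.re ^ 2 ∧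
    (((Real.sqrt 2 : ℝ) : ℂ) * z).im ^ 2 = 2 * z.im ^ 2 := by
  rw [Complex.re_ofReal_mul, Complex.im_ofReal_mul, mul_pow, mul_pow, Real.sq_sqrt (by norm_num)]
  exact ⟨rfl, rfl⟩

/-- the gaussian-weighted term -/
noncomputable def hudT (ψ : ℕ → ℂ) (z : ℂ) (n : ℕ) : ℂ :=
  Complex.exp (-z ^ 2 / 2) * wfTerm ψ z n

lemma hud_exp_norm (z : ℂ) : ‖Complex.exp (-z ^ 2 / 2)‖ =
    Real.exp (-(z.re ^ 2) / 2 + z.im ^ 2 / 2) := by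
  rw [Complex.norm_exp]
  congr 1
  have : -z ^ 2 / 2 = ((-1 / 2 : ℝ) : ℂ) * (z * z) := by push_cast; ring
  rw [this, Complex.re_ofReal_mul]
  simp
  ring

lemma hudT_bound (ψ : ℕ → ℂ) (z : ℂ) (n : ℕ) (ε : ℝ) (hε : 0 < ε) :
    ‖hudT ψ z n‖ ≤ (‖ψ n‖ * (Real.exp 1 * (n + 1) * Real.exp (ε * n))) *
      Real.exp ((1 / 2 + 1 / (2 * ε)) * z.im ^ 2) := by
  rw [hudT, norm_mul, hud_exp_norm, hud_term]
  have h := hud_herm (((Real.sqrt 2 : ℝ) : ℂ) * z) n ε hε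
  rw [(hud_sqrt_two z).1, (hud_sqrt_two z).2] at h
  have e : Real.exp ((1 / 2 + 1 / (2 * ε)) * z.im ^ 2) =
      Real.exp (-(z.re ^ 2) / 2 + z.im ^ 2 / 2) *
        Real.exp (2 * z.re ^ 2 / 4 + 2 * z.im ^ 2 / (4 * ε)) := by
    rw [← Real.exp_add]
    congr 1
    field_simp
    ring
  rw [e]
  refine (mul_le_mul_of_nonneg_left (mul_le_mul_of_nonneg_left h (norm_nonneg (ψ n)))
    (Real.exp_pos _).le).trans (le_of_eq ?_)
  ring

lemma hud_summable (ψ : ℕ → ℂ) (s : ℝ) (hs : 1 < s)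
    (hE : Summable fun n => s ^ n * ‖ψ n‖ ^ 2) :
    Summable fun n : ℕ => ‖ψ n‖ * (Real.exp 1 * (n + 1) * Real.exp (Real.log s / 4 * n)) := by
  have hs0 : 0 < s := by linarith
  set q := Real.exp (Real.log s / 4) with hq
  have hq4 : q ^ 4 = s := by
    rw [hq, ← Real.exp_nat_mul]
    push_cast
    rw [mul_div_cancel₀ _ (by norm_num), Real.exp_log hs0]
  have hq1 : 1 < q := Real.one_lt_exp_iff.2 (by have := Real.log_pos hs; positivity)
  have hq0 : 0 < q := by linarith
  have he : ∀ n : ℕ, Real.exp (Real.log s / 4 * n) = q ^ n := by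
    intro n; rw [hq, ← Real.exp_nat_mul, mul_comm]
  set p := (q ^ 2)⁻¹ with hp
  have hp0 : 0 < p := by positivity
  have hp1 : ‖p‖ < 1 := by
    rw [Real.norm_eq_abs, abs_of_pos hp0]
    exact inv_lt_one_of_one_lt₀ (one_lt_pow₀ hq1 two_ne_zero)
  have hsum : Summable fun n : ℕ => ((n : ℝ) + 1) ^ 2 * p ^ n := by
    have h2 := summable_pow_mul_geometric_of_norm_lt_one 2 hp1
    have h1 := (summable_pow_mul_geometric_of_norm_lt_one 1 hp1).mul_left 2
    have h0 := summable_pow_mul_geometric_of_norm_lt_one 0 hp1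
    refine ((h2.add h1).add h0).congr fun n => ?_
    ring
  have htot := (hE.add hsum).mul_left (Real.exp 1)
  refine Summable.of_nonneg_of_le (fun n => by positivity) (fun n => ?_) htot
  rw [he, ← hq4]
  have key : ‖ψ n‖ * ((n + 1) * q ^ n) ≤ (q ^ 4) ^ n * ‖ψ n‖ ^ 2 + ((n : ℝ) + 1) ^ 2 * p ^ n := by
    have e1 : (q ^ 4) ^ n = (q ^ n) ^ 4 := by ring
    have e2 : p ^ n = ((q ^ n) ^ 2)⁻¹ := by rw [hp, inv_pow]; congr 1; ring
    rw [e1, e2]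
    have hQ : 0 < q ^ n := by positivity
    generalize q ^ n = Q at *
    have e3 : Q ^ 4 * ‖ψ n‖ ^ 2 + ((n : ℝ) + 1) ^ 2 * (Q ^ 2)⁻¹ - ‖ψ n‖ * ((n + 1) * Q) =
        (Q ^ 2 * ‖ψ n‖ - (n + 1) * Q⁻¹) ^ 2 + ‖ψ n‖ * ((n + 1) * Q) := by
      field_simp
      ring
    have : 0 ≤ (Q ^ 2 * ‖ψ n‖ - (n + 1) * Q⁻¹) ^ 2 + ‖ψ n‖ * ((n + 1) * Q) := by positivity
    linarith
  calc _ = Real.exp 1 * (‖ψ n‖ * ((n + 1) * q ^ n)) := by ring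
    _ ≤ _ := by gcongr

lemma hudT_zero (ψ : ℕ → ℂ) (n : ℕ) (σ : ℝ) (hσ : σ ^ 2 = 1) :
    Filter.Tendsto (fun x : ℝ => hudT ψ ((σ * x : ℝ) : ℂ) n) Filter.atTop (nhds 0) := by
  have hb : ∀ x : ℝ, 0 ≤ x → ‖hudT ψ ((σ * x : ℝ) : ℂ) n‖ ≤
      (‖ψ n‖ * ((Real.sqrt n.factorial)⁻¹ * n.factorial)) *
        Real.exp (x * (Real.sqrt 2 - x / 2) + 1 / 2) := by
    intro x hx
    have hσa : |σ| = 1 := by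
      rw [← Real.sqrt_sq_eq_abs, hσ, Real.sqrt_one]
    have hn : ‖((σ * x : ℝ) : ℂ)‖ = x := by
      rw [Complex.norm_real, Real.norm_eq_abs, abs_mul, hσa, one_mul, abs_of_nonneg hx]
    have h1 := hud_cauchy (((Real.sqrt 2 : ℝ) : ℂ) * ((σ * x : ℝ) : ℂ)) n 1
      (Real.sqrt 2 * x + 1 / 2) one_pos (by
        intro t ht
        refine (Complex.re_le_norm _).trans ((norm_sub_le _ _).trans ?_)
        rw [norm_mul, norm_mul, hn, ht, norm_div, norm_pow, ht, Complex.norm_real,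
          Real.norm_of_nonneg (Real.sqrt_nonneg _)]
        norm_num)
    rw [hudT, norm_mul, hud_exp_norm, hud_term, Complex.ofReal_re, Complex.ofReal_im]
    simp only [one_pow, div_one] at h1
    have e : Real.exp (x * (Real.sqrt 2 - x / 2) + 1 / 2) =
        Real.exp (-((σ * x) ^ 2) / 2 + 0 ^ 2 / 2) * Real.exp (Real.sqrt 2 * x + 1 / 2) := by
      rw [← Real.exp_add, mul_pow, hσ]
      congr 1
      ring
    rw [e]
    refine (mul_le_mul_of_nonneg_left (mul_le_mul_of_nonneg_left
      (mul_le_mul_of_nonneg_left h1 (inv_nonneg.2 (Real.sqrt_nonneg _))) (norm_nonneg (ψ n)))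
      (Real.exp_pos _).le).trans (le_of_eq ?_)
    ring
  have ht : Filter.Tendsto (fun x : ℝ => (‖ψ n‖ * ((Real.sqrt n.factorial)⁻¹ * n.factorial)) *
      Real.exp (x * (Real.sqrt 2 - x / 2) + 1 / 2)) Filter.atTop (nhds 0) := by
    rw [← mul_zero (‖ψ n‖ * ((Real.sqrt n.factorial)⁻¹ * n.factorial))]
    refine Filter.Tendsto.const_mul _ (Real.tendsto_exp_atBot.comp ?_)
    refine Filter.tendsto_atBot_add_const_right _ _ ?_
    refine Filter.Tendsto.atTop_mul_atBot₀ Filter.tendsto_id ?_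
    refine Filter.tendsto_atBot_add_const_left _ _ (Filter.tendsto_neg_atTop_atBot.comp ?_)
    exact Filter.tendsto_id.atTop_div_const (by norm_num)
  refine squeeze_zero_norm' ?_ ht
  filter_upwards [Filter.eventually_ge_atTop 0] with x hx using hb x hx

lemma extWf_eq (ψ : ℕ → ℂ) (z : ℂ) : extWf ψ z =
    ((Real.pi ^ ((1 : ℝ) / 4) : ℝ) : ℂ)⁻¹ * ∑' n, hudT ψ z n := by
  unfold hudT
  rw [tsum_mul_left, extWf, mul_assoc]

/-- **Hudson theorem for the wavefunction.** Under the energy bound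
`Σ s^n |ψ_n|² < ∞` for some `s > 1`, the extended wavefunction is nowhere zero on `ℂ`
if and only if it is a Gaussian wavefunction `z ↦ e^(-a z² + b z + c)` with `Re(a) > 0`. -/
theorem hudson_wavefunction (ψ : ℕ → ℂ) (s : ℝ) (hs : 1 < s)
    (hE : Summable fun n => s ^ n * ‖ψ n‖ ^ 2) :
    (∀ z : ℂ, extWf ψ z ≠ 0) ↔
      ∃ a b c : ℂ, 0 < a.re ∧
        ∀ z : ℂ, extWf ψ z = Complex.exp (-a * z ^ 2 + b * z + c) := by
  constructor
  swap
  · rintro ⟨a, b, c, -, h⟩ z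
    rw [h]
    exact Complex.exp_ne_zero _
  intro h0
  set ε := Real.log s / 4 with hεd
  have hε : 0 < ε := by have := Real.log_pos hs; positivity
  have hu := hud_summable ψ s hs hE
  rw [← hεd] at hu
  set u : ℕ → ℝ := fun n => ‖ψ n‖ * (Real.exp 1 * (n + 1) * Real.exp (ε * n)) with hud
  set A := 1 / 2 + 1 / (2 * ε) with hAd
  have hA : 0 ≤ A := by positivity
  have hT : ∀ z n, ‖hudT ψ z n‖ ≤ u n * Real.exp (A * z.im ^ 2) :=
    fun z n => hudT_bound ψ z n ε hε
  have hu0 : ∀ n, 0 ≤ u n := fun n => by positivity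
  have him : ∀ z : ℂ, z.im ^ 2 ≤ ‖z‖ ^ 2 := fun z => by
    rw [← sq_abs z.im]
    exact pow_le_pow_left₀ (abs_nonneg _) (Complex.abs_im_le_norm z) 2
  set K : ℂ := ((Real.pi ^ ((1 : ℝ) / 4) : ℝ) : ℂ)⁻¹ with hK
  have hdiff : Differentiable ℂ (extWf ψ) := by
    have e : extWf ψ = fun z => K * ∑' n, hudT ψ z n := funext fun z => extWf_eq ψ z
    rw [e]
    refine Differentiable.const_mul (fun z => ?_) _
    have := Complex.differentiableOn_tsum_of_summable_norm
      (F := fun n z => hudT ψ z n) (U := Metric.ball 0 (‖z‖ + 1))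
      (hu.mul_right (Real.exp (A * (‖z‖ + 1) ^ 2)))
      (fun n => by
        refine Differentiable.differentiableOn ?_
        unfold hudT wfTerm physHermite
        have : Differentiable ℂ fun z : ℂ =>
            Polynomial.aeval (((Real.sqrt 2 : ℝ) : ℂ) * z) (Polynomial.hermite n) :=
          fun z => ((Polynomial.hermite n).differentiableAt_aeval (𝕜 := ℂ)).comp z
            ((differentiable_id (𝕜 := ℂ)).const_mul (((Real.sqrt 2 : ℝ) : ℂ)) z)
        fun_prop) Metric.isOpen_ball
      (fun n w hw => (hT w n).trans (by
        have hw' : ‖w‖ < ‖z‖ + 1 := by simpa using hw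
        have := hu0 n
        exact mul_le_mul_of_nonneg_left (Real.exp_le_exp.2 (mul_le_mul_of_nonneg_left
          ((him w).trans (pow_le_pow_left₀ (norm_nonneg _) hw'.le 2)) hA)) this))
    exact this.differentiableAt (Metric.isOpen_ball.mem_nhds (by simp))
  have hbd : ∀ z, ‖extWf ψ z‖ ≤ (‖K‖ * ∑' n, u n + 1) * Real.exp (A * ‖z‖ ^ 2) := by
    intro z
    have h1 : ‖∑' n, hudT ψ z n‖ ≤ ∑' n, u n * Real.exp (A * z.im ^ 2) :=
      tsum_of_norm_bounded (hu.mul_right _).hasSum (hT z)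
    rw [tsum_mul_right] at h1
    have hU : 0 ≤ ∑' n, u n := tsum_nonneg hu0
    have h2 : Real.exp (A * z.im ^ 2) ≤ Real.exp (A * ‖z‖ ^ 2) := by
      have := him z
      gcongr
    rw [extWf_eq, norm_mul]
    calc ‖K‖ * ‖∑' n, hudT ψ z n‖ ≤ ‖K‖ * ((∑' n, u n) * Real.exp (A * ‖z‖ ^ 2)) := by
          gcongr
          exact h1.trans (by gcongr)
      _ ≤ _ := by nlinarith [Real.exp_pos (A * ‖z‖ ^ 2)]
  obtain ⟨a, b, c, habc⟩ := hud_quad (extWf ψ) hdiff h0 _ A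
    (by have : 0 ≤ ∑' n, u n := tsum_nonneg hu0
        positivity) hA hbd
  refine ⟨a, b, c, ?_, habc⟩
  have hlim : ∀ σ : ℝ, σ ^ 2 = 1 → Filter.Tendsto (fun x : ℝ => extWf ψ ((σ * x : ℝ) : ℂ))
      Filter.atTop (nhds 0) := by
    intro σ hσ
    have h1 := tendsto_tsum_of_dominated_convergence
      (f := fun x : ℝ => fun n => hudT ψ ((σ * x : ℝ) : ℂ) n) (g := fun _ => (0 : ℂ))
      hu (fun n => hudT_zero ψ n σ hσ) (Filter.Eventually.of_forall fun x n => by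
        have := hT ((σ * x : ℝ) : ℂ) n
        rw [Complex.ofReal_im] at this
        simpa using this)
    have h2 := h1.const_mul K
    simp only [tsum_zero, mul_zero] at h2
    exact h2.congr fun x => (extWf_eq ψ _).symm
  by_contra hneg
  push Not at hneg
  have h3 := ((hlim 1 (by norm_num)).mul (hlim (-1) (by norm_num))).norm
  simp only [mul_zero, norm_zero] at h3
  have h4 : ∀ x : ℝ, Real.exp (2 * c.re) ≤
      ‖extWf ψ ((1 * x : ℝ) : ℂ) * extWf ψ ((-1 * x : ℝ) : ℂ)‖ := by
    intro x
    rw [habc, habc, ← Complex.exp_add, Complex.norm_exp]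
    apply Real.exp_le_exp.2
    have e : (-a * ((1 * x : ℝ) : ℂ) ^ 2 + b * ((1 * x : ℝ) : ℂ) + c +
        (-a * ((-1 * x : ℝ) : ℂ) ^ 2 + b * ((-1 * x : ℝ) : ℂ) + c)) =
        ((-2 * x ^ 2 : ℝ) : ℂ) * a + ((2 : ℝ) : ℂ) * c := by
      push_cast; ring
    rw [e, Complex.add_re, Complex.re_ofReal_mul, Complex.re_ofReal_mul]
    nlinarith [mul_nonneg (sq_nonneg x) (neg_nonneg.2 hneg)]
  have h5 := ge_of_tendsto' h3 h4
  linarith [Real.exp_pos (2 * c.re)]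
end

section
/- Let (ψ_n)_{n∈ℕ} be a sequence of complex numbers with 0 < Σ_{n≥0} |ψ_n|² < ∞ whose stellar function F(z) = Σ_{n≥0} ψ_n z^n/√(n!) satisfies F(z) = Q(z) e^{α z² + β z + γ} for all z ∈ ℂ, for some complex polynomial Q of degree exactly r and some α, β, γ ∈ ℂ (i.e. the state has stellar rank r). Then the series defining the extended wavefunction converges absolutely for every z ∈ ℂ, and there exist a complex polynomial P of degree exactly r and a, b, c ∈ ℂ with Re(a) > 0 such that ψ(z) = P(z) e^{-a z² + b z + c} for all z ∈ ℂ. In particular, ψ has exactly r complex zeros counted with multiplicity. -/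
open scoped BigOperators

/-- The stellar (Bargmann) function `F(z) = Σ_n ψ_n z^n / √(n!)`. -/
noncomputable def stellar (ψ : ℕ → ℂ) (z : ℂ) : ℂ :=
  ∑' n, ψ n * z ^ n / ((Real.sqrt n.factorial : ℝ) : ℂ)

/-- The order of vanishing of `f` at `z`: the least `m` such that the `m`-th
iterated derivative of `f` does not vanish at `z` (for an entire function not
identically zero this is the multiplicity of `z` as a zero of `f`). -/
noncomputable def vanishingOrder (f : ℂ → ℂ) (z : ℂ) : ℕ :=
  sInf {m : ℕ | iteratedDeriv m f z ≠ 0}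


namespace ExtWf
open MeasureTheory Filter Topology

lemma gauss_int (κ c a : ℝ) (hκ : κ < 1/2) :
    Integrable (fun x : ℝ => Real.exp (κ * (|x| + a)^2 + c * (|x| + a) - x^2/2)) := by
  obtain ⟨δ, hδ⟩ : ∃ δ : ℝ, δ = (1/2 - κ) / 2 := ⟨_, rfl⟩
  have hδ0 : 0 < δ := by rw [hδ]; linarith
  have h1 := (integrable_exp_neg_mul_sq hδ0).const_mul
    (Real.exp (κ * a^2 + c * a + (2*κ*a + c)^2 / (4*δ)))
  refine h1.mono' (by fun_prop) (Eventually.of_forall fun x => ?_)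
  rw [Real.norm_eq_abs, abs_of_pos (Real.exp_pos _), ← Real.exp_add]
  apply Real.exp_le_exp.mpr
  have h2 : (2*κ*a + c) * |x| ≤ (2*κ*a + c)^2 / (4*δ) + δ * |x|^2 := by
    have : (2*κ*a + c)^2 / (4*δ) + δ * |x|^2 - (2*κ*a + c) * |x|
        = (2*δ*|x| - (2*κ*a+c))^2 / (4*δ) := by field_simp; ring
    have h3 : 0 ≤ (2*δ*|x| - (2*κ*a+c))^2 / (4*δ) := by positivity
    linarith
  have h4 : |x|^2 = x^2 := sq_abs x
  have h5 : κ = 1/2 - 2*δ := by linarith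
  have h6 : κ * |x|^2 = x^2/2 - 2 * δ * x^2 := by rw [h4, h5]; ring
  rw [h4] at h2
  nlinarith

/-- The basic integrand. -/
noncomputable def ig (α β w : ℂ) (k : ℕ) (x : ℝ) : ℂ :=
  (w + x * Complex.I) ^ k *
    Complex.exp (α * (w + x * Complex.I)^2 + β * (w + x * Complex.I) - (x:ℂ)^2/2)

lemma norm_z_le (w : ℂ) (x : ℝ) : ‖w + x * Complex.I‖ ≤ |x| + ‖w‖ := by
  refine (norm_add_le _ _).trans ?_
  simp [add_comm]

lemma ig_int (α β w : ℂ) (k : ℕ) (hα : ‖α‖ < 1/2) : Integrable (ig α β w k) := by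
  have h1 := (gauss_int ‖α‖ (‖β‖ + 1) ‖w‖ hα).const_mul
    (k.factorial : ℝ)
  refine h1.mono' ?_ (Eventually.of_forall fun x => ?_)
  · apply Continuous.aestronglyMeasurable
    unfold ig
    fun_prop
  unfold ig
  rw [norm_mul, norm_pow, Complex.norm_exp]
  have hz := norm_z_le w x
  set z := w + x * Complex.I
  have h2 := Real.pow_div_factorial_le_exp (|x| + ‖w‖) (by positivity) k
  rw [div_le_iff₀ (by positivity)] at h2
  have h3 : ‖z‖ ^ k ≤ (k.factorial : ℝ) * Real.exp (|x| + ‖w‖) := by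
    calc ‖z‖^k ≤ (|x| + ‖w‖)^k := by gcongr
      _ ≤ _ := by linarith
  have h4 : (α * z^2 + β * z - (x:ℂ)^2/2).re ≤
      ‖α‖ * (|x| + ‖w‖)^2 + ‖β‖ * (|x| + ‖w‖) - x^2/2 := by
    have e1 : (α * z^2).re ≤ ‖α‖ * (|x| + ‖w‖)^2 := by
      refine (Complex.re_le_norm _).trans ?_
      rw [norm_mul, norm_pow]; gcongr
    have e2 : (β * z).re ≤ ‖β‖ * (|x| + ‖w‖) := by
      refine (Complex.re_le_norm _).trans ?_
      rw [norm_mul]; gcongr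
    have e3 : ((x:ℂ)^2/2).re = x^2/2 := by
      have : ((x:ℂ)^2/2) = ((x^2/2 : ℝ) : ℂ) := by push_cast; ring
      rw [this, Complex.ofReal_re]
    rw [Complex.sub_re, Complex.add_re, e3]
    linarith
  calc _ ≤ ((k.factorial : ℝ) * Real.exp (|x| + ‖w‖)) *
        Real.exp (‖α‖ * (|x| + ‖w‖)^2 + ‖β‖ * (|x| + ‖w‖) - x^2/2) := by gcongr
    _ = _ := by
      rw [mul_assoc, ← Real.exp_add]; congr 2; ring

lemma ig_rec (α β w : ℂ) (k : ℕ) (hα : ‖α‖ < 1/2) :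
    (1 + 2 * α) * ∫ x, ig α β w (k+1) x =
      (w - β) * (∫ x, ig α β w k x) - k * ∫ x, ig α β w (k-1) x := by
  have hd : ∀ x : ℝ, HasDerivAt (ig α β w k)
      (Complex.I * ((k * ig α β w (k-1) x + (1 + 2 * α) * ig α β w (k+1) x)
        - (w - β) * ig α β w k x)) x := by
    intro x
    have hx : HasDerivAt (fun x : ℝ => (x:ℂ)) 1 x := Complex.ofRealCLM.hasDerivAt
    have hz : HasDerivAt (fun x : ℝ => w + (x:ℂ) * Complex.I) Complex.I x := by
      simpa using (hx.mul_const Complex.I).const_add w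
    have h := (hz.pow k).mul ((((hz.pow 2).const_mul α).add (hz.const_mul β)).sub
      ((hx.pow 2).div_const 2)).cexp
    refine h.congr_deriv ?_
    simp only [ig]
    simp only [Pi.add_apply, Pi.sub_apply, Pi.pow_apply]
    push_cast
    set E := Complex.exp (α * (w + x * Complex.I)^2 + β * (w + x * Complex.I) - (x:ℂ)^2/2)
    linear_combination (exp := 1) (-(x:ℂ) * (w + x * Complex.I)^k * E) * Complex.I_sq
  have i1 := ig_int α β w (k-1) hα
  have i2 := ig_int α β w (k+1) hα
  have i3 := ig_int α β w k hα
  have h0 := integral_eq_zero_of_hasDerivAt_of_integrable hd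
    ((((i1.const_mul _).add (i2.const_mul _)).sub (i3.const_mul _)).const_mul _) i3
  have i12 : Integrable (fun x => k * ig α β w (k-1) x + (1 + 2 * α) * ig α β w (k+1) x) :=
    (i1.const_mul _).add (i2.const_mul _)
  rw [integral_const_mul, integral_sub i12 (i3.const_mul _),
    integral_add (i1.const_mul _) (i2.const_mul _), integral_const_mul, integral_const_mul,
    integral_const_mul] at h0
  have := (mul_eq_zero.mp h0).resolve_left Complex.I_ne_zero
  linear_combination this

lemma one_add_ne {α : ℂ} (hα : ‖α‖ < 1/2) : 1 + 2 * α ≠ 0 := by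
  intro h
  have : ‖2 * α‖ = 1 := by
    rw [show 2 * α = -1 by linear_combination h]; simp
  rw [norm_mul, Complex.norm_ofNat] at this
  linarith

/-- ratio polynomials -/
lemma exists_ratio (α β : ℂ) (hα : ‖α‖ < 1/2) (k : ℕ) :
    ∃ P : Polynomial ℂ, P.natDegree ≤ k ∧ P.coeff k ≠ 0 ∧
      ∀ w, ∫ x, ig α β w k x = P.eval w * ∫ x, ig α β w 0 x := by
  have hne := one_add_ne hα
  induction k using Nat.strong_induction_on with
  | _ k ih =>
    match k with
    | 0 => exact ⟨1, by simp, by simp, by simp⟩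
    | k+1 =>
      obtain ⟨P1, d1, c1, e1⟩ := ih k (by omega)
      obtain ⟨P2, d2, c2, e2⟩ := ih (k-1) (by omega)
      refine ⟨Polynomial.C (1+2*α)⁻¹ * (P1 * Polynomial.X - Polynomial.C β * P1
        - Polynomial.C (k:ℂ) * P2), ?_, ?_, ?_⟩
      · refine Polynomial.natDegree_C_mul_le _ _ |>.trans ?_
        refine (Polynomial.natDegree_sub_le_of_le (Polynomial.natDegree_sub_le_of_le
          (Polynomial.natDegree_mul_le_of_le d1 Polynomial.natDegree_X_le)
          ((Polynomial.natDegree_C_mul_le _ _).trans d1))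
          ((Polynomial.natDegree_C_mul_le _ _).trans d2)).trans ?_
        omega
      · simp only [Polynomial.coeff_C_mul, Polynomial.coeff_sub, Polynomial.coeff_mul_X]
        rw [Polynomial.coeff_eq_zero_of_natDegree_lt (p := P1) (n := k + 1) (by omega),
          Polynomial.coeff_eq_zero_of_natDegree_lt (p := P2) (n := k + 1) (by omega)]
        simp [c1, hne]
      · intro w
        have h := ig_rec α β w k hα
        rw [e1, e2] at h
        simp only [Polynomial.eval_mul, Polynomial.eval_sub, Polynomial.eval_C, Polynomial.eval_X]
        field_simp
        linear_combination h

lemma derivative_hermite (n : ℕ) : Polynomial.derivative (Polynomial.hermite (n+1)) =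
    ((n+1 : ℕ) : Polynomial ℤ) * Polynomial.hermite n := by
  induction n with
  | zero => simp
  | succ n ih =>
    rw [Polynomial.hermite_succ (n+1), Polynomial.derivative_sub, Polynomial.derivative_mul, ih,
      Polynomial.derivative_X, Polynomial.derivative_mul, Polynomial.derivative_natCast]
    have := Polynomial.hermite_succ n
    push_cast
    linear_combination -((n:Polynomial ℤ)+1) * this

lemma hermite_rec (n : ℕ) : Polynomial.hermite (n+1) =
    Polynomial.X * Polynomial.hermite n - (n : Polynomial ℤ) * Polynomial.hermite (n-1) := by
  rw [Polynomial.hermite_succ]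
  cases n with
  | zero => simp
  | succ n => rw [derivative_hermite]; simp

lemma hermite_int (w : ℂ) (n : ℕ) : ∫ x, ig 0 0 w n x =
    Polynomial.aeval w (Polynomial.hermite n) * ∫ x, ig 0 0 w 0 x := by
  induction n using Nat.strong_induction_on with
  | _ n ih =>
    match n with
    | 0 => simp
    | k+1 =>
      have h := ig_rec 0 0 w k (by simp)
      rw [ih k (by omega), ih (k-1) (by omega)] at h
      rw [hermite_rec]
      simp only [map_sub, map_mul, Polynomial.aeval_X, map_natCast]
      linear_combination h

lemma ig_zero (α β w : ℂ) (hα : ‖α‖ < 1/2) : ∫ x, ig α β w 0 x =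
    ((Real.pi : ℂ) / (α + 1/2)) ^ (1/2 : ℂ) *
      Complex.exp ((α * w^2 + β * w - β^2/2) / (1 + 2 * α)) := by
  have hne := one_add_ne hα
  have hb : (-(α + 1/2)).re < 0 := by
    have := Complex.abs_re_le_norm α
    have := neg_abs_le α.re
    simp
    linarith
  have h := integral_cexp_quadratic hb (Complex.I * (2 * α * w + β)) (α * w^2 + β * w)
  rw [neg_neg] at h
  have e : α * w^2 + β * w - (Complex.I * (2 * α * w + β))^2 / (4 * -(α + 1/2)) =
      (α * w^2 + β * w - β^2/2) / (1 + 2 * α) := by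
    rw [mul_pow, Complex.I_sq]
    have : α + 1/2 ≠ 0 := by intro h; apply hne; linear_combination 2 * h
    have h3 : (4 * -(α + 1/2)) = -2 * (1 + 2 * α) := by ring
    rw [h3]
    obtain ⟨s, hs⟩ : ∃ s, s = 1 + 2 * α := ⟨_, rfl⟩
    have hα2 : α = (s - 1) / 2 := by rw [hs]; ring
    rw [← hs] at hne ⊢
    rw [hα2]
    field_simp
    ring
  rw [e] at h
  rw [← h]
  congr 1
  ext x
  simp only [ig, pow_zero, one_mul]
  congr 1
  linear_combination (α * (x:ℂ)^2) * Complex.I_sq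

lemma const_ne {α : ℂ} (hα : ‖α‖ < 1/2) : ((Real.pi : ℂ) / (α + 1/2)) ^ (1/2 : ℂ) ≠ 0 := by
  have hne := one_add_ne hα
  have : α + 1/2 ≠ 0 := by intro h; apply hne; linear_combination 2 * h
  rw [Complex.cpow_ne_zero_iff_of_exponent_ne_zero (by norm_num)]
  exact div_ne_zero (by exact_mod_cast Real.pi_ne_zero) this

lemma amgm (p t l : ℝ) (hl : 0 < l) (n : ℕ) :
    p * (t^n / Real.sqrt n.factorial) ≤ (l * p^2 + ((t^2)^n / n.factorial) / l) / 2 := by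
  have h1 : (t^2)^n / n.factorial = (t^n / Real.sqrt n.factorial)^2 := by
    rw [div_pow, Real.sq_sqrt (by positivity)]; ring
  rw [h1]
  set y := t^n / Real.sqrt n.factorial
  have : (l * p^2 + y^2 / l) / 2 - p * y = (l * p - y)^2 / (2 * l) := by field_simp; ring
  have h3 : 0 ≤ (l * p - y)^2 / (2 * l) := by positivity
  linarith

lemma summ_abs (ψ : ℕ → ℂ) (hsum : Summable fun n => ‖ψ n‖ ^ 2) (t : ℝ) (ht : 0 ≤ t) :
    Summable fun n => ‖ψ n‖ * (t^n / Real.sqrt n.factorial) := by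
  refine Summable.of_nonneg_of_le (fun n => by positivity) (fun n => amgm _ t 1 one_pos n) ?_
  exact ((hsum.mul_left 1).add ((Real.summable_pow_div_factorial (t^2)).div_const 1)).div_const 2

lemma tail_le (ψ : ℕ → ℂ) (hsum : Summable fun n => ‖ψ n‖ ^ 2) (t ε : ℝ) (ht : 0 ≤ t) (hε : 0 < ε)
    (N : ℕ) (hN : ∑' k, ‖ψ (k + N)‖^2 ≤ ε^2) :
    ∑' k, ‖ψ (k+N)‖ * (t^(k+N) / Real.sqrt (k+N).factorial) ≤ ε * Real.exp (t^2/2) := by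
  set l := Real.exp (t^2/2) / ε
  have hl : 0 < l := by positivity
  have s1 : Summable fun k => ‖ψ (k + N)‖^2 := (summable_nat_add_iff N).2 hsum
  have s2 := Real.summable_pow_div_factorial (t^2)
  have s3 : Summable fun k => (t^2)^(k+N) / ((k+N).factorial : ℝ) := (summable_nat_add_iff N).2 s2
  have e1 : ∑' k, (t^2)^(k+N) / ((k+N).factorial : ℝ) ≤ Real.exp (t^2) := by
    have h := s2.sum_add_tsum_nat_add N
    have h' : ∑' n : ℕ, (t^2)^n / (n.factorial : ℝ) = Real.exp (t^2) := by
      rw [Real.exp_eq_exp_ℝ, NormedSpace.exp_eq_tsum_div]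
    have : 0 ≤ ∑ i ∈ Finset.range N, (t^2)^i / (i.factorial : ℝ) :=
      Finset.sum_nonneg fun i _ => by positivity
    linarith
  have h0 : ∀ k, ‖ψ (k+N)‖ * (t^(k+N) / Real.sqrt (k+N).factorial) ≤
      (l * ‖ψ (k + N)‖^2 + ((t^2)^(k+N) / ((k+N).factorial : ℝ)) / l) / 2 :=
    fun k => amgm ‖ψ (k+N)‖ t l hl (k+N)
  have s0 : Summable fun k => ‖ψ (k+N)‖ * (t^(k+N) / Real.sqrt (k+N).factorial) :=
    (summable_nat_add_iff (f := fun n => ‖ψ n‖ * (t^n / Real.sqrt n.factorial)) N).2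
      (summ_abs ψ hsum t ht)
  obtain ⟨g, hg⟩ : ∃ g : ℕ → ℝ, g = fun k => (t^2)^(k+N) / ((k+N).factorial : ℝ) := ⟨_, rfl⟩
  rw [← hg] at s3 e1
  have h0' : ∀ k, ‖ψ (k+N)‖ * (t^(k+N) / Real.sqrt (k+N).factorial) ≤
      (l * ‖ψ (k + N)‖^2 + g k / l) / 2 := by
    intro k; rw [hg]; exact h0 k
  have h5 := hasSum_le h0' s0.hasSum
    (((s1.hasSum.mul_left l).add (s3.hasSum.div_const l)).div_const 2)
  refine h5.trans ?_
  have e2 : Real.exp (t^2) = Real.exp (t^2/2) * Real.exp (t^2/2) := by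
    rw [← Real.exp_add]; congr 1; ring
  have e3 : l * (∑' k, ‖ψ (k + N)‖^2) ≤ ε * Real.exp (t^2/2) := by
    calc _ ≤ l * ε^2 := by gcongr
      _ = _ := by simp only [l]; field_simp
  have e4 : (∑' k, g k) / l ≤ ε * Real.exp (t^2/2) := by
    calc _ ≤ Real.exp (t^2) / l := by gcongr
      _ = _ := by rw [e2]; simp only [l]; field_simp
  linarith

lemma norm_term (ψ : ℕ → ℂ) (z : ℂ) (n : ℕ) :
    ‖ψ n * z ^ n / ((Real.sqrt n.factorial : ℝ) : ℂ)‖ =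
      ‖ψ n‖ * (‖z‖^n / Real.sqrt n.factorial) := by
  rw [norm_div, norm_mul, norm_pow, Complex.norm_real, Real.norm_eq_abs,
    abs_of_nonneg (Real.sqrt_nonneg _), mul_div_assoc]

lemma poly_lower (Q : Polynomial ℂ) (hQ : Q ≠ 0) (u : ℂ) (hu : ‖u‖ = 1) :
    ∃ δ > 0, ∀ᶠ t : ℝ in atTop, δ ≤ ‖Q.eval (t * u)‖ := by
  by_cases hd : 0 < Q.degree
  · refine ⟨1, one_pos, ?_⟩
    have : Tendsto (fun t : ℝ => ‖(t:ℂ) * u‖) atTop atTop := by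
      simp only [norm_mul, hu, mul_one, Complex.norm_real]
      exact tendsto_abs_atTop_atTop
    exact (Q.tendsto_norm_atTop hd this).eventually_ge_atTop 1
  · rw [Polynomial.eq_C_of_degree_le_zero (not_lt.mp hd)] at hQ ⊢
    have h0 : Q.coeff 0 ≠ 0 := by simpa using hQ
    exact ⟨‖Q.coeff 0‖, by positivity, by simp⟩

lemma head_small (c : ℕ → ℝ) (N : ℕ) (ε : ℝ) (hε : 0 < ε) :
    ∀ᶠ t : ℝ in atTop, ∑ n ∈ Finset.range N, c n * t^n ≤ ε * Real.exp (t^2/2) := by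
  have h : Tendsto (fun t : ℝ => ∑ n ∈ Finset.range N, c n * (t^n * Real.exp (-t))) atTop (𝓝 0) := by
    have := tendsto_finsetSum (Finset.range N) (fun n _ =>
      (Real.tendsto_pow_mul_exp_neg_atTop_nhds_zero n).const_mul (c n))
    simpa using this
  filter_upwards [h.eventually (gt_mem_nhds hε), eventually_ge_atTop 2] with t h1 h2
  have e : ∑ n ∈ Finset.range N, c n * t^n =
      (∑ n ∈ Finset.range N, c n * (t^n * Real.exp (-t))) * Real.exp t := by
    rw [Finset.sum_mul]
    refine Finset.sum_congr rfl fun n _ => ?_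
    rw [mul_assoc, mul_assoc, ← Real.exp_add]; simp
  rw [e]
  calc _ ≤ ε * Real.exp t := by gcongr
    _ ≤ _ := by gcongr; nlinarith

lemma exists_dir (α β : ℂ) (hα : α ≠ 0) : ∃ u : ℂ, ‖u‖ = 1 ∧ α * u^2 = (‖α‖ : ℂ) ∧ 0 ≤ (β * u).re := by
  obtain ⟨u, hu⟩ := IsAlgClosed.exists_pow_nat_eq ((starRingEnd ℂ) α / (‖α‖:ℂ)) (n := 2) (by norm_num)
  have hn : (‖α‖:ℂ) ≠ 0 := by simpa using hα
  have h1 : ‖u‖ = 1 := by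
    have : ‖u‖^2 = 1 := by
      rw [← norm_pow, hu, norm_div, Complex.norm_conj, Complex.norm_real, norm_norm, div_self]
      simpa using hα
    nlinarith [norm_nonneg u]
  have h2 : α * u^2 = (‖α‖ : ℂ) := by
    rw [hu, mul_div_assoc', Complex.mul_conj, div_eq_iff hn, Complex.normSq_eq_norm_sq]
    push_cast; ring
  rcases le_total 0 (β * u).re with h | h
  · exact ⟨u, h1, h2, h⟩
  · exact ⟨-u, by simpa using h1, by simpa using h2, by simpa using h⟩

lemma alpha_lt (ψ : ℕ → ℂ) (hsum : Summable fun n => ‖ψ n‖ ^ 2)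
    (Q : Polynomial ℂ) (hQ : Q ≠ 0) (α β γ : ℂ)
    (hF : ∀ z : ℂ, stellar ψ z = Q.eval z * Complex.exp (α * z ^ 2 + β * z + γ)) :
    ‖α‖ < 1/2 := by
  by_contra hcon
  rw [not_lt] at hcon
  have hα : α ≠ 0 := by rintro rfl; norm_num at hcon
  obtain ⟨u, hu1, hu2, hu3⟩ := exists_dir α β hα
  obtain ⟨δ, hδ, hδQ⟩ := poly_lower Q hQ u hu1
  obtain ⟨ε, hεd⟩ : ∃ ε : ℝ, ε = δ * Real.exp γ.re / 3 := ⟨_, rfl⟩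
  have hε : 0 < ε := by rw [hεd]; positivity
  have htail := tendsto_sum_nat_add (fun n => ‖ψ n‖^2)
  obtain ⟨N, hN⟩ := (htail.eventually (gt_mem_nhds (show (0:ℝ) < ε^2 by positivity))).exists
  have hh := head_small (fun n => ‖ψ n‖ / Real.sqrt n.factorial) N ε hε
  obtain ⟨t, t1, t2, t3⟩ := (hδQ.and (hh.and (eventually_ge_atTop 0))).exists
  have hz : ‖(t:ℂ) * u‖ = t := by rw [norm_mul, hu1, Complex.norm_real, Real.norm_of_nonneg t3, mul_one]
  have up : ‖stellar ψ (t * u)‖ ≤ 2 * ε * Real.exp (t^2/2) := by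
    have sa := summ_abs ψ hsum t t3
    unfold stellar
    have h1 : ‖∑' n, ψ n * ((t:ℂ) * u) ^ n / ((Real.sqrt n.factorial : ℝ) : ℂ)‖ ≤
        ∑' n, ‖ψ n‖ * (t^n / Real.sqrt n.factorial) := by
      refine tsum_of_norm_bounded sa.hasSum fun n => ?_
      rw [norm_term, hz]
    refine h1.trans ?_
    rw [← sa.sum_add_tsum_nat_add N]
    have h2 := tail_le ψ hsum t ε t3 hε N hN.le
    have h3 : ∑ n ∈ Finset.range N, ‖ψ n‖ * (t^n / Real.sqrt n.factorial) ≤ ε * Real.exp (t^2/2) := by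
      refine le_trans (le_of_eq (Finset.sum_congr rfl fun n _ => ?_)) t2
      ring
    linarith
  have low : 3 * ε * Real.exp (t^2/2) ≤ ‖stellar ψ (t * u)‖ := by
    rw [hF, norm_mul, Complex.norm_exp]
    have e1 : (α * ((t:ℂ) * u)^2 + β * (t * u) + γ).re = ‖α‖ * t^2 + t * (β * u).re + γ.re := by
      have : α * ((t:ℂ) * u)^2 + β * (t * u) + γ = ((‖α‖ * t^2 : ℝ) : ℂ) + (t:ℂ) * (β * u) + γ := by
        push_cast
        linear_combination (t:ℂ)^2 * hu2
      rw [this, Complex.add_re, Complex.add_re, Complex.ofReal_re, Complex.re_ofReal_mul]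
    rw [e1]
    calc 3 * ε * Real.exp (t^2/2) = δ * Real.exp (t^2/2 + γ.re) := by
          rw [hεd, Real.exp_add]; ring
      _ ≤ _ := by
        gcongr
        have : 0 ≤ t * (β * u).re := mul_nonneg t3 hu3
        nlinarith [sq_nonneg t]
  have := Real.exp_pos (t^2/2)
  nlinarith

lemma cauchy_coeff (a : ℕ → ℂ) (F : ℂ → ℂ) (hs : ∀ t : ℝ, 0 ≤ t → Summable fun n => ‖a n‖ * t^n)
    (hF : ∀ z, F z = ∑' n, a n * z^n) (s M : ℝ) (hs0 : 0 < s) (hM : ∀ z, ‖z‖ = s → ‖F z‖ ≤ M) (n : ℕ) :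
    ‖a n‖ ≤ M / s^n := by
  set p := FormalMultilinearSeries.ofScalars ℂ a
  have hr : p.radius = ⊤ := by
    apply FormalMultilinearSeries.radius_eq_top_of_summable_norm
    intro r
    simpa [p, FormalMultilinearSeries.ofScalars_norm] using hs r r.2
  have hp : HasFPowerSeriesOnBall F p 0 ⊤ := by
    have h := p.hasFPowerSeriesOnBall (by rw [hr]; simp)
    rw [hr] at h
    have : F = p.sum := by
      ext z
      rw [hF]
      have := FormalMultilinearSeries.ofScalars_sum_eq (E := ℂ) a z
      unfold FormalMultilinearSeries.ofScalarsSum at this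
      rw [this]
      simp
    rw [this]; exact h
  have hd : Differentiable ℂ F := by
    have := hp.differentiableOn
    simpa [differentiableOn_univ] using this
  have h1 := Complex.norm_iteratedDeriv_le_of_forall_mem_sphere_norm_le (c := 0) n hs0
    hd.diffContOnCl (fun z hz => hM z (by simpa using hz))
  have h2 := hp.factorial_smul 1 n
  rw [← iteratedDeriv_eq_iteratedFDeriv] at h2
  rw [← h2] at h1
  have h3 : (p n fun _ => (1:ℂ)) = a n := by
    simp [p]
  rw [h3, nsmul_eq_mul, norm_mul, Complex.norm_natCast, mul_div_assoc] at h1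
  exact le_of_mul_le_mul_left h1 (by positivity)

lemma growth (Q : Polynomial ℂ) (α β γ : ℂ) : ∃ C : ℝ, 0 ≤ C ∧ ∀ z : ℂ,
    ‖Q.eval z * Complex.exp (α * z ^ 2 + β * z + γ)‖ ≤
      C * Real.exp (‖α‖ * ‖z‖^2 + (‖β‖ + 1) * ‖z‖) := by
  refine ⟨(∑ k ∈ Finset.range (Q.natDegree + 1), ‖Q.coeff k‖ * k.factorial) * Real.exp γ.re,
    by positivity, fun z => ?_⟩
  rw [norm_mul, Complex.norm_exp]
  have h1 : ‖Q.eval z‖ ≤ (∑ k ∈ Finset.range (Q.natDegree + 1), ‖Q.coeff k‖ * k.factorial) *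
      Real.exp ‖z‖ := by
    rw [Polynomial.eval_eq_sum_range, Finset.sum_mul]
    refine (norm_sum_le _ _).trans (Finset.sum_le_sum fun k _ => ?_)
    rw [norm_mul, norm_pow, mul_assoc]
    gcongr
    have := Real.pow_div_factorial_le_exp ‖z‖ (norm_nonneg _) k
    rwa [div_le_iff₀' (by positivity)] at this
  have h2 : (α * z ^ 2 + β * z + γ).re ≤ ‖α‖ * ‖z‖^2 + ‖β‖ * ‖z‖ + γ.re := by
    have e1 := Complex.re_le_norm (α * z^2)
    have e2 := Complex.re_le_norm (β * z)
    rw [norm_mul, norm_pow] at e1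
    rw [norm_mul] at e2
    rw [Complex.add_re, Complex.add_re]
    linarith
  calc _ ≤ ((∑ k ∈ Finset.range (Q.natDegree + 1), ‖Q.coeff k‖ * k.factorial) * Real.exp ‖z‖) *
        Real.exp (‖α‖ * ‖z‖^2 + ‖β‖ * ‖z‖ + γ.re) := by gcongr
    _ = _ := by
      rw [mul_assoc, mul_assoc, ← Real.exp_add, ← Real.exp_add]
      congr 2; ring

lemma exists_eta (κ : ℝ) (hκ : κ < 1/2) : ∃ q : ℝ, 1 < q ∧ κ * q^2 < 1/2 := by
  have h : Tendsto (fun q : ℝ => κ * q^2) (𝓝[>] 1) (𝓝 (κ * 1^2)) :=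
    (Continuous.tendsto (by fun_prop) 1).mono_left nhdsWithin_le_nhds
  have h2 := h.eventually (gt_mem_nhds (show κ * 1^2 < 1/2 by linarith))
  obtain ⟨q, h3, h4⟩ := (h2.and self_mem_nhdsWithin).exists
  exact ⟨q, h4, h3⟩

lemma majorant (a : ℕ → ℂ) (F : ℂ → ℂ) (hs : ∀ t : ℝ, 0 ≤ t → Summable fun n => ‖a n‖ * t^n)
    (hF : ∀ z, F z = ∑' n, a n * z^n) (C κ c : ℝ) (hκ : κ < 1/2)
    (hb : ∀ z, ‖F z‖ ≤ C * Real.exp (κ * ‖z‖^2 + c * ‖z‖)) :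
    ∃ C' κ' c' : ℝ, κ' < 1/2 ∧ ∀ t : ℝ, 0 ≤ t →
      ∑' n, ‖a n‖ * t^n ≤ C' * Real.exp (κ' * (t+1)^2 + c' * (t+1)) := by
  obtain ⟨q, hq1, hq2⟩ := exists_eta κ hκ
  have hq0 : 0 < q := by linarith
  have hq3 : q⁻¹ < 1 := inv_lt_one_of_one_lt₀ hq1
  refine ⟨C * (1 - q⁻¹)⁻¹, κ * q^2, c * q, hq2, fun t ht => ?_⟩
  set s := q * (t+1) with hsd
  have hs0 : 0 < s := by positivity
  set M := C * Real.exp (κ * s^2 + c * s) with hMd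
  have hc := cauchy_coeff a F hs hF s M hs0 (fun z hz => by simpa [hz] using hb z)
  have hM0 : 0 ≤ M := by simpa using (norm_nonneg _).trans (hc 0)
  have hle : ∀ n, ‖a n‖ * t^n ≤ M * q⁻¹^n := by
    intro n
    calc ‖a n‖ * t^n ≤ (M / s^n) * (t+1)^n := by
          gcongr
          · exact hc n
          · linarith
      _ = M * q⁻¹^n := by
          rw [hsd, mul_pow, inv_pow]; field_simp
  have hg := (hasSum_geometric_of_lt_one (by positivity) hq3).mul_left M
  have := (hs t ht).tsum_le_tsum hle hg.summable
  rw [hg.tsum_eq] at this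
  refine this.trans (le_of_eq ?_)
  rw [hMd, hsd]
  rw [show κ * (q * (t + 1)) ^ 2 + c * (q * (t + 1)) = κ * q ^ 2 * (t + 1) ^ 2 + c * q * (t + 1) by ring]
  ring

lemma ig0_norm (w : ℂ) (n : ℕ) (x : ℝ) : ‖ig 0 0 w n x‖ = ‖w + x * Complex.I‖^n * Real.exp (-x^2/2) := by
  unfold ig
  rw [norm_mul, norm_pow, Complex.norm_exp]
  congr 2
  have : (0 * (w + ↑x * Complex.I) ^ 2 + 0 * (w + ↑x * Complex.I) - (x:ℂ) ^ 2 / 2) = ((-x^2/2 : ℝ) : ℂ) := by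
    push_cast; ring
  rw [this, Complex.ofReal_re]

lemma transform (a : ℕ → ℂ) (hs : ∀ t : ℝ, 0 ≤ t → Summable fun n => ‖a n‖ * t^n)
    (C κ c : ℝ) (hκ : κ < 1/2)
    (hb : ∀ t : ℝ, 0 ≤ t →
      ∑' n, ‖a n‖ * t^n ≤ C * Real.exp (κ * (t+1)^2 + c * (t+1))) (w : ℂ) :
    (Summable fun n => ‖a n * ∫ x, ig 0 0 w n x‖) ∧
    ∑' n, a n * ∫ x, ig 0 0 w n x = ∫ x : ℝ, (∑' n, a n * (w + x * Complex.I)^n) *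
      Complex.exp (-(x:ℂ)^2/2) := by
  have hi : ∀ n, Integrable (fun x => a n * ig 0 0 w n x) := fun n =>
    (ig_int 0 0 w n (by simp)).const_mul _
  have hG := (gauss_int κ c (‖w‖+1) hκ).const_mul C
  have hsumm : Summable fun n => ∫ x, ‖a n * ig 0 0 w n x‖ := by
    refine summable_of_sum_le (c := ∫ x : ℝ, C * Real.exp (κ * (|x| + (‖w‖+1))^2 + c * (|x| + (‖w‖+1)) - x^2/2))
      (fun n => by positivity) (fun u => ?_)
    rw [← integral_finsetSum _ (fun n _ => (hi n).norm)]
    refine integral_mono (integrable_finsetSum _ fun n _ => (hi n).norm) hG fun x => ?_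
    have ht : 0 ≤ |x| + ‖w‖ := by positivity
    calc ∑ n ∈ u, ‖a n * ig 0 0 w n x‖
        ≤ ∑ n ∈ u, (‖a n‖ * (|x| + ‖w‖)^n) * Real.exp (-x^2/2) := by
          refine Finset.sum_le_sum fun n _ => ?_
          rw [norm_mul, ig0_norm, mul_assoc]
          gcongr
          exact norm_z_le w x
      _ = (∑ n ∈ u, ‖a n‖ * (|x| + ‖w‖)^n) * Real.exp (-x^2/2) := by rw [Finset.sum_mul]
      _ ≤ (∑' n, ‖a n‖ * (|x| + ‖w‖)^n) * Real.exp (-x^2/2) := by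
          gcongr
          exact (hs _ ht).sum_le_tsum _ (fun n _ => by positivity)
      _ ≤ (C * Real.exp (κ * ((|x| + ‖w‖)+1)^2 + c * ((|x| + ‖w‖)+1))) * Real.exp (-x^2/2) := by
          gcongr
          exact hb _ ht
      _ = _ := by
          rw [mul_assoc, ← Real.exp_add]
          congr 2
          ring
  constructor
  · refine hsumm.of_nonneg_of_le (fun n => norm_nonneg _) (fun n => ?_)
    rw [← integral_const_mul]
    exact norm_integral_le_integral_norm _
  · have h := (hasSum_integral_of_summable_integral_norm hi hsumm).tsum_eq
    simp only [integral_const_mul] at h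
    rw [h]
    congr 1
    ext x
    rw [← tsum_mul_right]
    congr 1
    ext n
    simp only [ig]
    rw [mul_assoc]
    congr 3
    ring

lemma vanishing_eq (P : Polynomial ℂ) (hP : P ≠ 0) (g : ℂ → ℂ) (hg : Differentiable ℂ g) (z : ℂ) :
    vanishingOrder (fun x => P.eval x * Complex.exp (g x)) z = P.rootMultiplicity z := by
  obtain ⟨R, hR, hR2⟩ := Polynomial.exists_eq_pow_rootMultiplicity_mul_and_not_dvd P hP z
  set m := P.rootMultiplicity z
  set f : ℂ → ℂ := fun x => P.eval x * Complex.exp (g x)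
  have hf : AnalyticAt ℂ f z := by
    apply Differentiable.analyticAt
    exact P.differentiable.mul hg.cexp
  have hord : analyticOrderAt f z = (m : ℕ) := by
    rw [hf.analyticOrderAt_eq_natCast]
    refine ⟨fun x => R.eval x * Complex.exp (g x), (R.differentiable.mul hg.cexp).analyticAt z, ?_, ?_⟩
    · refine mul_ne_zero ?_ (Complex.exp_ne_zero _)
      rwa [Polynomial.dvd_iff_isRoot] at hR2
    · refine Eventually.of_forall fun x => ?_
      simp only [f, smul_eq_mul]
      conv_lhs => rw [hR]
      simp [mul_assoc]
  have h1 := (natCast_le_analyticOrderAt_iff_iteratedDeriv_eq_zero (n := m) hf).mp (by rw [hord])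
  have h2 : iteratedDeriv m f z ≠ 0 := by
    intro h
    have h3 := (natCast_le_analyticOrderAt_iff_iteratedDeriv_eq_zero (n := m + 1) hf).mpr (by
      intro i hi
      rcases Nat.lt_succ_iff_lt_or_eq.mp hi with h' | h'
      · exact h1 i h'
      · rw [h']; exact h)
    rw [hord] at h3
    have : m + 1 ≤ m := by exact_mod_cast h3
    omega
  unfold vanishingOrder
  apply le_antisymm
  · exact Nat.sInf_le h2
  · refine le_csInf ⟨m, h2⟩ fun i hi => ?_
    by_contra hlt
    exact hi (h1 i (by omega))

lemma wfTerm_eq (ψ : ℕ → ℂ) (z : ℂ) (n : ℕ) : wfTerm ψ z n =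
    (ψ n / ((Real.sqrt n.factorial : ℝ) : ℂ)) *
      Polynomial.aeval (((Real.sqrt 2 : ℝ) : ℂ) * z) (Polynomial.hermite n) := by
  unfold wfTerm physHermite
  have h2 : Real.sqrt (2 ^ n * n.factorial) = Real.sqrt 2 ^ n * Real.sqrt n.factorial := by
    rw [Real.sqrt_mul (by positivity)]
    congr 1
    rw [Real.sqrt_eq_iff_eq_sq (by positivity) (by positivity), ← pow_mul, mul_comm n 2, pow_mul,
      Real.sq_sqrt (by norm_num)]
  rw [h2]
  have h3 : ((Real.sqrt 2 : ℝ) : ℂ) ≠ 0 := by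
    exact_mod_cast (Real.sqrt_pos.mpr (by norm_num : (0:ℝ) < 2)).ne'
  have h4 : ((Real.sqrt n.factorial : ℝ) : ℂ) ≠ 0 := by
    exact_mod_cast (Real.sqrt_pos.mpr (by positivity : (0:ℝ) < n.factorial)).ne'
  push_cast
  field_simp

lemma poly_int (α β γ : ℂ) (hα : ‖α‖ < 1/2) (Q : Polynomial ℂ) (hQ : Q ≠ 0) :
    ∃ P : Polynomial ℂ, P.natDegree = Q.natDegree ∧ P ≠ 0 ∧ ∀ w : ℂ,
      ∫ x : ℝ, (Q.eval (w + x * Complex.I) *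
        Complex.exp (α * (w + x * Complex.I)^2 + β * (w + x * Complex.I) + γ)) *
          Complex.exp (-(x:ℂ)^2/2) = P.eval w * Complex.exp γ * ∫ x, ig α β w 0 x := by
  choose R hd hc he using exists_ratio α β hα
  set r := Q.natDegree
  set P := ∑ k ∈ Finset.range (r+1), Polynomial.C (Q.coeff k) * R k
  have hdeg : P.natDegree ≤ r := by
    refine Polynomial.natDegree_sum_le_of_forall_le _ _ fun k hk => ?_
    refine (Polynomial.natDegree_C_mul_le _ _).trans ((hd k).trans ?_)
    simp at hk; omega
  have hco : P.coeff r ≠ 0 := by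
    simp only [P]
    rw [Polynomial.finsetSum_coeff, Finset.sum_range_succ, Finset.sum_eq_zero, zero_add,
      Polynomial.coeff_C_mul]
    · refine mul_ne_zero ?_ (hc r)
      exact Polynomial.leadingCoeff_ne_zero.mpr hQ
    · intro k hk
      rw [Polynomial.coeff_C_mul, Polynomial.coeff_eq_zero_of_natDegree_lt (p := R k), mul_zero]
      have := hd k
      simp at hk; omega
  refine ⟨P, le_antisymm hdeg (Polynomial.le_natDegree_of_ne_zero hco), ?_, fun w => ?_⟩
  · intro h; simp [h] at hco
  have e1 : ∀ x : ℝ, (Q.eval (w + x * Complex.I) *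
        Complex.exp (α * (w + x * Complex.I)^2 + β * (w + x * Complex.I) + γ)) *
          Complex.exp (-(x:ℂ)^2/2) =
      ∑ k ∈ Finset.range (r+1), (Q.coeff k * Complex.exp γ) * ig α β w k x := by
    intro x
    rw [Polynomial.eval_eq_sum_range, mul_assoc, ← Complex.exp_add, Finset.sum_mul]
    refine Finset.sum_congr rfl fun k _ => ?_
    unfold ig
    rw [show α * (w + ↑x * Complex.I) ^ 2 + β * (w + ↑x * Complex.I) + γ + -(x:ℂ) ^ 2 / 2 =
      γ + (α * (w + ↑x * Complex.I) ^ 2 + β * (w + ↑x * Complex.I) - (x:ℂ) ^ 2 / 2) by ring,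
      Complex.exp_add]
    ring
  simp only [e1]
  rw [integral_finsetSum _ fun k _ => (ig_int α β w k hα).const_mul _]
  simp only [integral_const_mul]
  simp only [P, Polynomial.eval_finsetSum, Finset.sum_mul]
  refine Finset.sum_congr rfl fun k _ => ?_
  rw [he]
  simp
  ring

end ExtWf

open ExtWf in
theorem extWf_of_finite_stellar_rank (ψ : ℕ → ℂ) (r : ℕ)
    (hsum : Summable fun n => ‖ψ n‖ ^ 2)
    (hpos : 0 < ∑' n, ‖ψ n‖ ^ 2)
    (Q : Polynomial ℂ) (hQ : Q.degree = (r : ℕ)) (α β γ : ℂ)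
    (hF : ∀ z : ℂ, stellar ψ z = Q.eval z * Complex.exp (α * z ^ 2 + β * z + γ)) :
    (∀ z : ℂ, Summable fun n => ‖wfTerm ψ z n‖) ∧
    (∃ P : Polynomial ℂ, P.degree = (r : ℕ) ∧ ∃ a b c : ℂ, 0 < a.re ∧
      ∀ z : ℂ, extWf ψ z = P.eval z * Complex.exp (-a * z ^ 2 + b * z + c)) ∧
    ∃ hfin : {z : ℂ | extWf ψ z = 0}.Finite,
      ∑ z ∈ hfin.toFinset, vanishingOrder (extWf ψ) z = r := by
  have hQ0 : Q ≠ 0 := by rintro rfl; simp at hQ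
  have hQr : Q.natDegree = r := Polynomial.natDegree_eq_of_degree_eq_some hQ
  have hα := alpha_lt ψ hsum Q hQ0 α β γ hF
  have hne := one_add_ne hα
  set a : ℕ → ℂ := fun n => ψ n / ((Real.sqrt n.factorial : ℝ) : ℂ) with ha
  have hs : ∀ t : ℝ, 0 ≤ t → Summable fun n => ‖a n‖ * t^n := by
    intro t ht
    refine (summ_abs ψ hsum t ht).congr fun n => ?_
    rw [ha]
    simp only [norm_div, Complex.norm_real, Real.norm_eq_abs, abs_of_nonneg (Real.sqrt_nonneg _)]
    ring
  have hFa : ∀ z, stellar ψ z = ∑' n, a n * z^n := by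
    intro z
    unfold stellar
    congr 1; ext n; simp only [ha]; ring
  obtain ⟨C, hC, hg⟩ := growth Q α β γ
  obtain ⟨C', κ', c', hκ', hb⟩ := majorant a (stellar ψ) hs hFa C ‖α‖ (‖β‖+1) hα
    (fun z => by rw [hF]; exact hg z)
  have hT := transform a hs C' κ' c' hκ' hb
  obtain ⟨K, hK⟩ : ∃ K : ℂ, K = ((Real.pi : ℂ) / (0 + 1/2)) ^ (1/2 : ℂ) := ⟨_, rfl⟩
  have hK0 : K ≠ 0 := by rw [hK]; exact const_ne (by simp)
  have hKi : ∀ w, ∫ x, ig 0 0 w 0 x = K := by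
    intro w
    rw [ig_zero 0 0 w (by simp), ← hK]
    simp
  have hher : ∀ w n, a n * ∫ x, ig 0 0 w n x = (a n * Polynomial.aeval w (Polynomial.hermite n)) * K := by
    intro w n
    rw [hermite_int, hKi]; ring
  have hS : ∀ z : ℂ, Summable fun n => ‖wfTerm ψ z n‖ := by
    intro z
    have h := (hT (((Real.sqrt 2 : ℝ) : ℂ) * z)).1
    simp only [hher, norm_mul _ K] at h
    rw [summable_mul_right_iff (by simpa using hK0)] at h
    simpa only [wfTerm_eq] using h
  obtain ⟨P, hPd, hP0, hPi⟩ := poly_int α β γ hα Q hQ0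
  set s2 : ℂ := ((Real.sqrt 2 : ℝ) : ℂ) with hs2
  have hs20 : s2 ≠ 0 := by
    rw [hs2]
    exact_mod_cast (Real.sqrt_pos.mpr (by norm_num : (0:ℝ) < 2)).ne'
  have hs2sq : s2^2 = 2 := by
    rw [hs2, ← Complex.ofReal_pow, Real.sq_sqrt (by norm_num)]; simp
  obtain ⟨D, hD⟩ : ∃ D : ℂ, D = ((Real.pi : ℂ) / (α + 1/2)) ^ (1/2 : ℂ) := ⟨_, rfl⟩
  have hD0 : D ≠ 0 := by rw [hD]; exact const_ne hα
  obtain ⟨A, hA⟩ : ∃ A : ℂ, A = ((Real.pi ^ ((1 : ℝ) / 4) : ℝ) : ℂ)⁻¹ := ⟨_, rfl⟩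
  have hA0 : A ≠ 0 := by
    rw [hA]
    apply inv_ne_zero
    exact_mod_cast (Real.rpow_pos_of_pos Real.pi_pos _).ne'
  have htsum : ∀ z, (∑' n, wfTerm ψ z n) * K =
      P.eval (s2 * z) * Complex.exp γ *
        (D * Complex.exp ((α * (s2 * z)^2 + β * (s2 * z) - β^2/2) / (1 + 2 * α))) := by
    intro z
    have h := (hT (s2 * z)).2
    simp only [hher] at h
    rw [tsum_mul_right] at h
    simp only [wfTerm_eq]
    rw [h, hD, ← ig_zero α β _ hα, ← hPi]
    simp only [← hFa, hF]
  set P' : Polynomial ℂ := Polynomial.C (A * D / K) * P.comp (Polynomial.C s2 * Polynomial.X) with hP'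
  have hP'd : P'.natDegree = r := by
    rw [hP', Polynomial.natDegree_C_mul (div_ne_zero (mul_ne_zero hA0 hD0) hK0),
      Polynomial.natDegree_comp, Polynomial.natDegree_C_mul_X _ hs20, hPd, hQr, mul_one]
  have hP'0 : P' ≠ 0 := by
    intro h
    obtain ⟨w, hw⟩ := Polynomial.exists_eval_ne_zero_of_natDegree_lt_card P hP0
      (by simpa using Cardinal.natCast_lt_aleph0.trans_le Cardinal.aleph0_le_continuum)
    have := congrArg (Polynomial.eval (w / s2)) h
    rw [hP'] at this
    simp only [Polynomial.eval_mul, Polynomial.eval_C, Polynomial.eval_comp, Polynomial.eval_X,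
      Polynomial.eval_zero, mul_div_cancel₀ w hs20] at this
    exact mul_ne_zero (div_ne_zero (mul_ne_zero hA0 hD0) hK0) hw this
  have hmain : ∀ z : ℂ, extWf ψ z = P'.eval z * Complex.exp (-((1 - 2*α)/(2*(1+2*α))) * z ^ 2 +
      (β * s2 / (1+2*α)) * z + (γ - β^2/2/(1+2*α))) := by
    intro z
    unfold extWf
    rw [← hA]
    have h := htsum z
    rw [← eq_div_iff hK0] at h
    rw [h, hP']
    simp only [Polynomial.eval_mul, Polynomial.eval_C, Polynomial.eval_comp, Polynomial.eval_X]
    have e : -((1 - 2*α)/(2*(1+2*α))) * z ^ 2 +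
      (β * s2 / (1+2*α)) * z + (γ - β^2/2/(1+2*α)) = -z^2/2 + (γ +
        (α * (s2 * z)^2 + β * (s2 * z) - β^2/2) / (1 + 2 * α)) := by
      rw [mul_pow, hs2sq]
      obtain ⟨s, hs⟩ : ∃ s, s = 1 + 2 * α := ⟨_, rfl⟩
      have hα2 : α = (s - 1) / 2 := by rw [hs]; ring
      rw [← hs] at hne ⊢
      rw [hα2]
      field_simp
      ring
    rw [e, Complex.exp_add, Complex.exp_add]
    ring
  refine ⟨hS, ⟨P', by rw [Polynomial.degree_eq_natDegree hP'0, hP'd], _, _, _, ?_, hmain⟩, ?_⟩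
  · have hn : 0 < Complex.normSq (2*(1+2*α)) := Complex.normSq_pos.mpr (mul_ne_zero two_ne_zero hne)
    rw [Complex.div_re, ← add_div]
    refine div_pos ?_ hn
    have h4 : α.re^2 + α.im^2 < 1/4 := by
      have h5 : ‖α‖^2 = α.re^2 + α.im^2 := by
        rw [← Complex.normSq_eq_norm_sq, Complex.normSq_apply]; ring
      nlinarith [norm_nonneg α]
    simp
    nlinarith
  · have hset : {z : ℂ | extWf ψ z = 0} = ↑P'.roots.toFinset := by
      ext z
      simp [hmain, hP'0, Complex.exp_ne_zero]
    have hfin : {z : ℂ | extWf ψ z = 0}.Finite := by rw [hset]; exact Finset.finite_toSet _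
    refine ⟨hfin, ?_⟩
    have hfs : hfin.toFinset = P'.roots.toFinset := by
      apply Finset.coe_injective
      rw [hfin.coe_toFinset, hset]
    rw [hfs, funext hmain]
    have hv : ∀ z, _ := fun z => vanishing_eq P' hP'0 (fun z => -((1 - 2*α)/(2*(1+2*α))) * z ^ 2 +
      (β * s2 / (1+2*α)) * z + (γ - β^2/2/(1+2*α))) (by fun_prop) z
    simp only [hv, ← Polynomial.count_roots]
    rw [Multiset.toFinset_sum_count_eq, ← hP'd]
    exact (IsAlgClosed.card_roots_eq_natDegree)
end

section
/- (Energy bound for finite stellar rank.) Let (ψ_n)_{n∈ℕ} be a sequence of complex numbers with 0 < Σ_{n≥0} |ψ_n|² < ∞ whose stellar function F(z) = Σ_{n≥0} ψ_n z^n/√(n!) satisfies F(z) = Q(z) e^{α z² + β z + γ} for all z ∈ ℂ, for some complex polynomial Q and some α, β, γ ∈ ℂ (i.e. the state has finite stellar rank). Then there exists a real s > 1 such that Σ_{n≥0} s^n |ψ_n|² < ∞. -/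
open scoped BigOperators

open Filter Topology

lemma aux_w_summable (t : ℝ) : HasSum (fun n : ℕ => (t ^ n / Real.sqrt n.factorial) ^ 2) (Real.exp (t ^ 2)) := by
  have h := NormedSpace.expSeries_div_hasSum_exp (𝔸 := ℝ) (t ^ 2)
  rw [← Real.exp_eq_exp_ℝ] at h
  have e : (fun n : ℕ => (t ^ n / Real.sqrt n.factorial) ^ 2)
      = fun n : ℕ => (t ^ 2) ^ n / (n.factorial : ℝ) := by
    funext n
    rw [div_pow, Real.sq_sqrt (by positivity)]
    ring
  rw [e]
  exact h

lemma aux_term_norm (ψ : ℕ → ℂ) (z : ℂ) (n : ℕ) :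
    ‖ψ n * z ^ n / ((Real.sqrt n.factorial : ℝ) : ℂ)‖
      = ‖ψ n‖ * (‖z‖ ^ n / Real.sqrt n.factorial) := by
  rw [norm_div, norm_mul, norm_pow, Complex.norm_real, Real.norm_of_nonneg (Real.sqrt_nonneg _)]
  ring

lemma aux_summable (ψ : ℕ → ℂ) (hsum : Summable fun n => ‖ψ n‖ ^ 2) (z : ℂ) :
    Summable fun n : ℕ => ‖ψ n‖ * (‖z‖ ^ n / Real.sqrt n.factorial) := by
  refine Summable.of_nonneg_of_le (fun n => by positivity) (fun n => ?_)
    (hsum.add (aux_w_summable ‖z‖).summable)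
  nlinarith [sq_nonneg (‖ψ n‖ - (‖z‖ ^ n / Real.sqrt n.factorial)), sq_nonneg (‖ψ n‖),
    sq_nonneg (‖z‖ ^ n / Real.sqrt n.factorial)]

lemma aux_hasSum (ψ : ℕ → ℂ) (hsum : Summable fun n => ‖ψ n‖ ^ 2) (z : ℂ) :
    HasSum (fun n : ℕ => ψ n * z ^ n / ((Real.sqrt n.factorial : ℝ) : ℂ)) (stellar ψ z) := by
  apply Summable.hasSum
  apply Summable.of_norm
  simp_rw [aux_term_norm]
  exact aux_summable ψ hsum z

/-- The weighted stellar function vanishes at infinity. -/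
lemma aux_decay (ψ : ℕ → ℂ) (hsum : Summable fun n => ‖ψ n‖ ^ 2) (u : ℂ) (hu : ‖u‖ = 1) :
    Tendsto (fun t : ℝ => ‖stellar ψ (t * u)‖ * Real.exp (-t ^ 2 / 2)) atTop (𝓝 0) := by
  rw [Metric.tendsto_nhds]
  intro ε hε
  have hT := tendsto_sum_nat_add (fun n => ‖ψ n‖ ^ 2)
  obtain ⟨N, hN⟩ := (hT.eventually (gt_mem_nhds (show (0:ℝ) < (ε / 2) ^ 2 by positivity))).exists
  have hfin : Tendsto (fun t : ℝ => ∑ n ∈ Finset.range N,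
      ‖ψ n‖ * (t ^ n / Real.sqrt n.factorial) * Real.exp (-t ^ 2 / 2)) atTop (𝓝 0) := by
    rw [show (0:ℝ) = ∑ n ∈ Finset.range N, (0:ℝ) by simp]
    refine tendsto_finsetSum _ fun n _ => ?_
    have h1 : Tendsto (fun t : ℝ => t ^ n * Real.exp (-t ^ 2 / 2)) atTop (𝓝 0) := by
      refine squeeze_zero' ?_ ?_ (Real.tendsto_pow_mul_exp_neg_atTop_nhds_zero n)
      · filter_upwards [eventually_ge_atTop 0] with t ht
        positivity
      · filter_upwards [eventually_ge_atTop 2] with t ht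
        gcongr
        nlinarith
    have h2 := h1.const_mul (‖ψ n‖ / Real.sqrt n.factorial)
    rw [mul_zero] at h2
    refine h2.congr fun t => ?_
    ring
  filter_upwards [hfin.eventually (gt_mem_nhds (show (0:ℝ) < ε / 2 by positivity)),
    eventually_ge_atTop 0] with t ht ht0
  have hz : ‖(t * u : ℂ)‖ = t := by simp [hu, abs_of_nonneg ht0]
  rw [Real.dist_eq, sub_zero, abs_of_nonneg (by positivity)]
  have hs := aux_summable ψ hsum (t * u)
  rw [hz] at hs
  have hb : ‖stellar ψ (t * u)‖ ≤ ∑' n : ℕ, ‖ψ n‖ * (t ^ n / Real.sqrt n.factorial) := by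
    unfold stellar
    have := norm_tsum_le_tsum_norm (f := fun n : ℕ =>
      ψ n * (t * u : ℂ) ^ n / ((Real.sqrt n.factorial : ℝ) : ℂ))
      (by simp_rw [aux_term_norm, hz]; exact hs)
    simpa only [aux_term_norm, hz] using this
  rw [← hs.sum_add_tsum_nat_add N] at hb
  set E := Real.exp (-t ^ 2 / 2) with hE
  have hE0 : 0 < E := Real.exp_pos _
  have hE2 : Real.exp (t ^ 2) * E ^ 2 = 1 := by
    rw [hE, ← Real.exp_nat_mul, ← Real.exp_add]
    simp only [Nat.cast_ofNat]
    rw [Real.exp_eq_one_iff]; ring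
  have htail : (∑' n : ℕ, ‖ψ (n + N)‖ * (t ^ (n + N) / Real.sqrt (n + N).factorial)) * E ≤ ε / 2 := by
    have hw := aux_w_summable t
    have hwN : ∑' n : ℕ, (t ^ (n + N) / Real.sqrt (n + N).factorial) ^ 2 ≤ Real.exp (t ^ 2) := by
      rw [← hw.tsum_eq, ← hw.summable.sum_add_tsum_nat_add N]
      have : 0 ≤ ∑ n ∈ Finset.range N, (t ^ n / Real.sqrt n.factorial) ^ 2 :=
        Finset.sum_nonneg fun _ _ => sq_nonneg _
      linarith
    have s1 := (summable_nat_add_iff N).2 hsum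
    have s2 := (summable_nat_add_iff N).2 hw.summable
    have s3 := (summable_nat_add_iff N).2 hs
    rw [← tsum_mul_right]
    calc _ ≤ ∑' n : ℕ, (1 / ε * ‖ψ (n + N)‖ ^ 2 +
            ε / 4 * E ^ 2 * (t ^ (n + N) / Real.sqrt (n + N).factorial) ^ 2) := by
          refine Summable.tsum_le_tsum (fun n => ?_) (s3.mul_right _)
            ((s1.mul_left _).add (s2.mul_left _))
          set a := ‖ψ (n + N)‖
          set b := (t ^ (n + N) / Real.sqrt (n + N).factorial)
          have : 1 / ε * a ^ 2 + ε / 4 * E ^ 2 * b ^ 2 - a * b * E = 1 / ε * (a - ε / 2 * E * b) ^ 2 := by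
            field_simp; ring
          have : 0 ≤ 1 / ε * (a - ε / 2 * E * b) ^ 2 := by positivity
          linarith
      _ = 1 / ε * (∑' n : ℕ, ‖ψ (n + N)‖ ^ 2) + ε / 4 * E ^ 2 *
            ∑' n : ℕ, (t ^ (n + N) / Real.sqrt (n + N).factorial) ^ 2 := by
          rw [(s1.mul_left _).tsum_add (s2.mul_left _), tsum_mul_left, tsum_mul_left]
      _ ≤ 1 / ε * (ε / 2) ^ 2 + ε / 4 * E ^ 2 * Real.exp (t ^ 2) := by gcongr
      _ = ε / 4 + ε / 4 * (Real.exp (t ^ 2) * E ^ 2) := by field_simp; ring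
      _ = ε / 2 := by rw [hE2]; ring
  calc ‖stellar ψ (t * u)‖ * E ≤ _ * E := mul_le_mul_of_nonneg_right hb hE0.le
    _ = _ + _ := add_mul _ _ _
    _ < ε / 2 + ε / 2 := by
        refine add_lt_add_of_lt_of_le ?_ htail
        rwa [Finset.sum_mul]
    _ = ε := by ring

lemma aux_alpha (ψ : ℕ → ℂ) (hsum : Summable fun n => ‖ψ n‖ ^ 2)
    (Q : Polynomial ℂ) (hQ : Q ≠ 0) (α β γ : ℂ)
    (hF : ∀ z : ℂ, stellar ψ z = Q.eval z * Complex.exp (α * z ^ 2 + β * z + γ)) :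
    ‖α‖ < 1 / 2 := by
  by_contra! hα
  obtain ⟨u, hu, hαu, hβu⟩ : ∃ u : ℂ, ‖u‖ = 1 ∧ α * u ^ 2 = ‖α‖ ∧ 0 ≤ (β * u).re := by
    set u := Complex.exp (((-α.arg / 2 : ℝ) : ℂ) * Complex.I) with hudef
    have h1 : ‖u‖ = 1 := Complex.norm_exp_ofReal_mul_I _
    have h2 : α * u ^ 2 = ‖α‖ := by
      nth_rewrite 1 [← Complex.norm_mul_exp_arg_mul_I α]
      rw [hudef, ← Complex.exp_nat_mul, mul_assoc, ← Complex.exp_add]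
      rw [show (α.arg : ℂ) * Complex.I + ((2:ℕ):ℂ) * (((-α.arg / 2 : ℝ) : ℂ) * Complex.I) = 0 by
        push_cast; ring]
      simp
    rcases le_total 0 (β * u).re with h | h
    · exact ⟨u, h1, h2, h⟩
    · refine ⟨-u, by simpa using h1, by simpa using h2, ?_⟩
      rw [mul_neg, Complex.neg_re]; linarith
  have hd := aux_decay ψ hsum u hu
  have hQ0 : Tendsto (fun t : ℝ => ‖Q.eval (t * u : ℂ)‖ * Real.exp γ.re) atTop (𝓝 0) := by
    refine squeeze_zero' (Eventually.of_forall fun t => by positivity) ?_ hd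
    filter_upwards [eventually_ge_atTop 0] with t ht
    rw [hF, norm_mul, Complex.norm_exp, mul_assoc, ← Real.exp_add]
    gcongr
    have : α * (t * u) ^ 2 + β * (t * u) + γ
        = ((‖α‖ * t ^ 2 : ℝ) : ℂ) + (t : ℂ) * (β * u) + γ := by
      push_cast; rw [← hαu]; ring
    rw [this, Complex.add_re, Complex.add_re, Complex.ofReal_re, Complex.re_ofReal_mul]
    nlinarith [mul_nonneg ht hβu, sq_nonneg t]
  have hQ1 : Tendsto (fun t : ℝ => ‖Q.eval (t * u : ℂ)‖) atTop (𝓝 0) := by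
    have := hQ0.mul_const (Real.exp γ.re)⁻¹
    rw [zero_mul] at this
    refine this.congr fun t => ?_
    field_simp
  rcases le_or_gt Q.degree 0 with hdeg | hdeg
  · rw [Polynomial.eq_C_of_degree_le_zero hdeg] at hQ1 hQ
    simp only [Polynomial.eval_C] at hQ1
    have := tendsto_nhds_unique hQ1 tendsto_const_nhds
    rw [eq_comm, norm_eq_zero] at this
    simp [this] at hQ
  · have ht : Tendsto (fun t : ℝ => ‖(t * u : ℂ)‖) atTop atTop := by
      simp only [norm_mul, hu, mul_one, Complex.norm_real]
      exact tendsto_norm_atTop_atTop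
    exact not_tendsto_nhds_of_tendsto_atTop (Q.tendsto_norm_atTop hdeg ht) 0 hQ1

lemma aux_poly (Q : Polynomial ℂ) : ∃ K : ℝ, 0 ≤ K ∧ ∀ z : ℂ, ‖Q.eval z‖ ≤ K * Real.exp ‖z‖ := by
  refine ⟨∑ i ∈ Finset.range (Q.natDegree + 1), ‖Q.coeff i‖ * i.factorial,
    Finset.sum_nonneg fun _ _ => by positivity, fun z => ?_⟩
  rw [Polynomial.eval_eq_sum_range, Finset.sum_mul]
  refine (norm_sum_le _ _).trans (Finset.sum_le_sum fun i _ => ?_)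
  rw [norm_mul, norm_pow, mul_assoc]
  gcongr
  have := Real.pow_div_factorial_le_exp ‖z‖ (norm_nonneg z) i
  rw [div_le_iff₀ (by positivity)] at this
  linarith

lemma aux_growth (Q : Polynomial ℂ) (α β γ : ℂ) (h : Q ≠ 0 → ‖α‖ < 1 / 2) :
    ∃ a C : ℝ, 0 < a ∧ a < 1 / 2 ∧ 0 ≤ C ∧ ∀ z : ℂ,
      ‖Q.eval z * Complex.exp (α * z ^ 2 + β * z + γ)‖ ≤ C * Real.exp (a * ‖z‖ ^ 2) := by
  by_cases hQ : Q = 0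
  · exact ⟨1 / 4, 0, by norm_num, by norm_num, le_rfl, fun z => by simp [hQ]⟩
  have hα := h hQ
  obtain ⟨K, hK, hKQ⟩ := aux_poly Q
  set δ := (1 / 2 - ‖α‖) / 2 with hδ
  have hδ0 : 0 < δ := by rw [hδ]; linarith
  set b := 1 + ‖β‖ with hb
  refine ⟨‖α‖ + δ, K * Real.exp (b ^ 2 / (4 * δ) + ‖γ‖), by positivity, by linarith,
    by positivity, fun z => ?_⟩
  rw [norm_mul, mul_assoc, ← Real.exp_add]
  calc _ ≤ (K * Real.exp ‖z‖) * Real.exp (‖α‖ * ‖z‖ ^ 2 + ‖β‖ * ‖z‖ + ‖γ‖) := by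
        gcongr
        · exact hKQ z
        · rw [Complex.norm_exp]
          gcongr
          refine (Complex.re_le_norm _).trans ((norm_add₃_le).trans ?_)
          simp
    _ = K * Real.exp (‖z‖ + (‖α‖ * ‖z‖ ^ 2 + ‖β‖ * ‖z‖ + ‖γ‖)) := by
        rw [Real.exp_add ‖z‖]; ring
    _ ≤ _ := by
        refine mul_le_mul_of_nonneg_left (Real.exp_le_exp.2 ?_) hK
        have : b ^ 2 / (4 * δ) + δ * ‖z‖ ^ 2 - b * ‖z‖ = (b - 2 * δ * ‖z‖) ^ 2 / (4 * δ) := by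
          field_simp; ring
        have h2 : 0 ≤ (b - 2 * δ * ‖z‖) ^ 2 / (4 * δ) := by positivity
        rw [hb] at this h2 ⊢
        nlinarith

lemma aux_cauchy (ψ : ℕ → ℂ) (hsum : Summable fun n => ‖ψ n‖ ^ 2) (g : ℂ → ℂ)
    (hg : Differentiable ℂ g) (hF : ∀ z, stellar ψ z = g z) (M R : ℝ) (hR : 0 < R)
    (hM : ∀ z : ℂ, ‖z‖ = R → ‖g z‖ ≤ M) (n : ℕ) :
    ‖ψ n‖ / Real.sqrt n.factorial ≤ M / R ^ n := by
  have h1 : HasFPowerSeriesAt g (FormalMultilinearSeries.ofScalars ℂ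
      (fun n => ψ n / ((Real.sqrt n.factorial : ℝ) : ℂ))) 0 := by
    rw [hasFPowerSeriesAt_iff]
    refine Eventually.of_forall fun z => ?_
    have := aux_hasSum ψ hsum z
    rw [hF] at this
    rw [zero_add]
    refine Eq.mp (congrArg (fun f => HasSum f _) (funext fun n => ?_)) this
    rw [FormalMultilinearSeries.coeff_ofScalars, smul_eq_mul]
    ring
  have h2 := (hg.analyticAt 0).hasFPowerSeriesAt
  have h3 := congrArg (fun p => p.coeff n) (h1.eq_formalMultilinearSeries h2)
  simp only [FormalMultilinearSeries.coeff_ofScalars] at h3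
  have h4 := Complex.norm_iteratedDeriv_le_of_forall_mem_sphere_norm_le n hR
    (hg.diffContOnCl (s := Metric.ball 0 R)) (C := M) (fun z hz => hM z (by simpa using hz))
  have h5 := congrArg norm h3
  rw [norm_div, norm_div, Complex.norm_real, Real.norm_of_nonneg (Real.sqrt_nonneg _),
    Complex.norm_natCast] at h5
  rw [h5, div_le_iff₀ (by positivity)]
  calc _ ≤ _ := h4
    _ = _ := by ring

lemma aux_fact (n : ℕ) (hn : 1 ≤ n) :
    (n.factorial : ℝ) ≤ Real.exp 1 * n * (n / Real.exp 1) ^ n := by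
  obtain ⟨m, rfl⟩ : ∃ m, n = m + 1 := ⟨n - 1, by omega⟩
  have h := Stirling.stirlingSeq'_antitone (Nat.zero_le m)
  simp only [Function.comp, Nat.succ_eq_add_one, zero_add, Stirling.stirlingSeq_one] at h
  rw [Stirling.stirlingSeq, div_le_iff₀ (by positivity)] at h
  refine h.trans ?_
  rw [← mul_assoc]
  refine mul_le_mul_of_nonneg_right ?_ (by positivity)
  rw [Real.sqrt_mul (by norm_num)]
  have h2 : Real.sqrt ((m + 1 : ℕ) : ℝ) ≤ ((m + 1 : ℕ) : ℝ) := by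
    rw [Real.sqrt_le_left (by positivity)]
    have : (1:ℝ) ≤ ((m + 1 : ℕ) : ℝ) := by exact_mod_cast hn
    nlinarith
  calc _ = Real.exp 1 * Real.sqrt ((m + 1 : ℕ) : ℝ) := by field_simp
    _ ≤ _ := by gcongr

theorem energy_bound_of_finite_stellar_rank (ψ : ℕ → ℂ)
    (hsum : Summable fun n => ‖ψ n‖ ^ 2)
    (hpos : 0 < ∑' n, ‖ψ n‖ ^ 2)
    (Q : Polynomial ℂ) (α β γ : ℂ)
    (hF : ∀ z : ℂ, stellar ψ z = Q.eval z * Complex.exp (α * z ^ 2 + β * z + γ)) :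
    ∃ s : ℝ, 1 < s ∧ Summable fun n => s ^ n * ‖ψ n‖ ^ 2 := by
  obtain ⟨a, C, ha, ha2, hC, hbound⟩ := aux_growth Q α β γ
    (fun hQ => aux_alpha ψ hsum Q hQ α β γ hF)
  obtain ⟨s, hs1, hs2⟩ := exists_between (show (1:ℝ) < 1 / (2 * a) by
    rw [lt_div_iff₀ (by positivity)]; linarith)
  rw [lt_div_iff₀ (by positivity)] at hs2
  refine ⟨s, hs1, ?_⟩
  have hs0 : 0 < s := by linarith
  have hg : Differentiable ℂ fun z => Q.eval z * Complex.exp (α * z ^ 2 + β * z + γ) := by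
    have := Q.differentiable
    fun_prop
  have key : ∀ n : ℕ, 1 ≤ n → ‖ψ n‖ ^ 2 ≤ C ^ 2 * Real.exp 1 * (n * (2 * a) ^ n) := by
    intro n hn
    have hn0 : (0:ℝ) < n := by exact_mod_cast hn
    set R := Real.sqrt (n / (2 * a)) with hRdef
    have hR : 0 < R := by positivity
    have hR2 : R ^ 2 = n / (2 * a) := Real.sq_sqrt (by positivity)
    have h := aux_cauchy ψ hsum _ hg hF (C * Real.exp (a * R ^ 2)) R hR
      (fun z hz => by have := hbound z; rwa [hz] at this) n
    have h2 := pow_le_pow_left₀ (by positivity) h 2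
    rw [div_pow, Real.sq_sqrt (by positivity), div_le_iff₀ (by positivity), div_pow, mul_pow,
      ← pow_mul, mul_comm n 2, pow_mul, hR2, ← Real.exp_nat_mul] at h2
    rw [show ((2:ℕ):ℝ) * (a * (n / (2 * a))) = n * 1 by push_cast; field_simp,
      Real.exp_nat_mul] at h2
    refine h2.trans ?_
    calc _ ≤ C ^ 2 * Real.exp 1 ^ n / (n / (2 * a)) ^ n *
          (Real.exp 1 * n * (n / Real.exp 1) ^ n) := by
            exact mul_le_mul_of_nonneg_left (aux_fact n hn) (by positivity)
      _ = _ := by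
        rw [div_pow, div_pow]; field_simp
  have hS : Summable fun n : ℕ => C ^ 2 * Real.exp 1 * ((n:ℝ) ^ 1 * (s * (2 * a)) ^ n) := by
    have hn : ‖s * (2 * a)‖ < 1 := by rwa [Real.norm_of_nonneg (by positivity)]
    have h0 : Summable fun n : ℕ => ((n:ℝ) ^ 1 * (s * (2 * a)) ^ n) :=
      summable_pow_mul_geometric_of_norm_lt_one 1 hn
    exact Summable.mul_left (C ^ 2 * Real.exp 1) h0
  rw [← summable_nat_add_iff 1] at hS ⊢
  refine Summable.of_nonneg_of_le (fun n => by positivity) (fun n => ?_) hS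
  have := mul_le_mul_of_nonneg_left (key (n + 1) (by omega)) (pow_nonneg hs0.le (n + 1))
  refine this.trans_eq ?_
  rw [mul_pow s]; ring
end

section
/- For all natural numbers p, q and every real t > 1: Σ_{l=0}^{min(p,q)} 8^l / ( (2l)! (p−l)! (q−l)! ) ≤ ( t^p / (p! q!) ) · ( 1 + 8/(t−1) )^q. -/
open scoped BigOperators

lemma hermite_term_aux (p q l : ℕ) (hp : l ≤ p) (hq : l ≤ q) (t : ℝ) (ht : 1 < t) :
    (8 : ℝ) ^ l /
          (((2 * l).factorial : ℝ) * ((p - l).factorial : ℝ) * ((q - l).factorial : ℝ))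
      ≤ t ^ p / ((p.factorial : ℝ) * (q.factorial : ℝ)) *
        ((8 / (t - 1)) ^ l * (q.choose l : ℝ)) := by
  have hs : 0 < t - 1 := by linarith
  have h1 : (t - 1) ^ l * (p.choose l : ℝ) ≤ t ^ p := by
    have h := add_pow (t - 1) 1 p
    rw [sub_add_cancel] at h
    rw [h]
    have := Finset.single_le_sum
      (f := fun m => (t - 1) ^ m * 1 ^ (p - m) * (p.choose m : ℝ))
      (s := Finset.range (p + 1)) (fun i _ => by positivity)
      (Finset.mem_range.mpr (Nat.lt_succ_of_le hp))
    simpa using this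
  have h2 : (l.factorial : ℝ) * l.factorial ≤ ((2 * l).factorial : ℝ) := by
    rw [two_mul]
    exact_mod_cast Nat.le_of_dvd (Nat.factorial_pos _) (Nat.factorial_mul_factorial_dvd_factorial_add l l)
  have ep : (p.factorial : ℝ) = p.choose l * l.factorial * (p - l).factorial := by
    exact_mod_cast (Nat.choose_mul_factorial_mul_factorial hp).symm
  have eq : (q.factorial : ℝ) = q.choose l * l.factorial * (q - l).factorial := by
    exact_mod_cast (Nat.choose_mul_factorial_mul_factorial hq).symm
  have cp : (0 : ℝ) < p.choose l := by exact_mod_cast Nat.choose_pos hp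
  have cq : (0 : ℝ) < q.choose l := by exact_mod_cast Nat.choose_pos hq
  have hT : 0 < (t - 1) ^ l := by positivity
  calc _ ≤ (8 : ℝ) ^ l / ((l.factorial * l.factorial : ℝ) * ((p - l).factorial : ℝ) * ((q - l).factorial : ℝ)) := by
        gcongr
    _ = ((t - 1) ^ l * (p.choose l : ℝ)) / ((p.factorial : ℝ) * (q.factorial : ℝ)) *
        ((8 / (t - 1)) ^ l * (q.choose l : ℝ)) := by
        rw [ep, eq, div_pow]
        generalize (t - 1) ^ l = T at *
        field_simp
    _ ≤ _ := by gcongr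

/-- Combinatorial inequality (even part): for all `p q : ℕ` and real `t > 1`,
`Σ_{l=0}^{min(p,q)} 8^l/((2l)! (p-l)! (q-l)!) ≤ (t^p/(p! q!)) (1 + 8/(t-1))^q`. -/
theorem hermite_coeff_bound_even (p q : ℕ) (t : ℝ) (ht : 1 < t) :
    ∑ l ∈ Finset.range (min p q + 1),
        (8 : ℝ) ^ l /
          (((2 * l).factorial : ℝ) * ((p - l).factorial : ℝ) * ((q - l).factorial : ℝ))
      ≤ t ^ p / ((p.factorial : ℝ) * (q.factorial : ℝ)) * (1 + 8 / (t - 1)) ^ q := by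
  have hs : 0 < t - 1 := by linarith
  have ht0 : 0 < t := by linarith
  rw [add_comm (1 : ℝ), add_pow, Finset.mul_sum]
  simp only [one_pow, mul_one]
  refine (Finset.sum_le_sum (fun l hl => ?_)).trans
    (Finset.sum_le_sum_of_subset_of_nonneg
      (Finset.range_mono (by omega)) (fun i _ _ => by positivity))
  have := Finset.mem_range.mp hl
  exact hermite_term_aux p q l (by omega) (by omega) t ht
end

section
/- For all natural numbers p, q and every real t > 1: Σ_{l=0}^{min(p,q)} 8^l / ( (2l+1)! (p−l)! (q−l)! ) ≤ ( t^p / (p! q!) ) · ( 1 + 2/(t−1) )^q. -/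
open scoped BigOperators

theorem aux_fact_s11 (l : ℕ) : 4 ^ l * (l.factorial * l.factorial) ≤ (2 * l + 1).factorial := by
  have h := Nat.four_pow_le_two_mul_add_one_mul_central_binom l
  have h2 : (2 * l).choose l * l.factorial * (2 * l - l).factorial = (2 * l).factorial :=
    Nat.choose_mul_factorial_mul_factorial (by omega)
  have h3 : 2 * l - l = l := by omega
  rw [h3] at h2
  rw [Nat.factorial_succ, ← h2]
  calc 4 ^ l * (l.factorial * l.factorial)
      ≤ ((2 * l + 1) * (2 * l).choose l) * (l.factorial * l.factorial) :=
        Nat.mul_le_mul_right _ h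
    _ = _ := by ring

theorem aux_choose (p l : ℕ) (hl : l ≤ p) (s : ℝ) (hs : 0 < s) :
    s ^ l * (p.choose l : ℝ) ≤ (s + 1) ^ p := by
  rw [add_pow]
  have := Finset.single_le_sum (f := fun m => s ^ m * 1 ^ (p - m) * (p.choose m : ℝ))
    (s := Finset.range (p + 1)) (fun i _ => by positivity)
    (Finset.mem_range.2 (Nat.lt_succ_of_le hl))
  simpa using this

theorem aux_term_s11 (p q l : ℕ) (hp : l ≤ p) (hq : l ≤ q) (s : ℝ) (hs : 0 < s) :
    (8 : ℝ) ^ l /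
      (((2 * l + 1).factorial : ℝ) * ((p - l).factorial : ℝ) * ((q - l).factorial : ℝ))
      ≤ (s + 1) ^ p / ((p.factorial : ℝ) * (q.factorial : ℝ)) *
        ((2 / s) ^ l * (q.choose l : ℝ)) := by
  have h1 : (4 : ℝ) ^ l * (l.factorial * l.factorial) ≤ ((2 * l + 1).factorial : ℝ) := by
    exact_mod_cast aux_fact_s11 l
  have h2 := aux_choose p l hp s hs
  have hP : (p.choose l : ℝ) * l.factorial * (p - l).factorial = p.factorial := by
    exact_mod_cast Nat.choose_mul_factorial_mul_factorial hp
  have hQ : (q.choose l : ℝ) * l.factorial * (q - l).factorial = q.factorial := by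
    exact_mod_cast Nat.choose_mul_factorial_mul_factorial hq
  have cP : (0 : ℝ) < p.choose l := by exact_mod_cast Nat.choose_pos hp
  have cQ : (0 : ℝ) < q.choose l := by exact_mod_cast Nat.choose_pos hq
  have e8 : (8 : ℝ) ^ l = 4 ^ l * 2 ^ l := by rw [← mul_pow]; norm_num
  calc (8 : ℝ) ^ l /
      (((2 * l + 1).factorial : ℝ) * ((p - l).factorial : ℝ) * ((q - l).factorial : ℝ))
      ≤ (8 : ℝ) ^ l / (((4 : ℝ) ^ l * (l.factorial * l.factorial)) *
          ((p - l).factorial : ℝ) * ((q - l).factorial : ℝ)) := by gcongr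
    _ = (s ^ l * (p.choose l : ℝ)) / ((p.factorial : ℝ) * (q.factorial : ℝ)) *
        ((2 / s) ^ l * (q.choose l : ℝ)) := by
        rw [← hP, ← hQ, e8, div_pow]
        field_simp
    _ ≤ _ := by gcongr

/-- Combinatorial inequality (odd part): for all `p q : ℕ` and real `t > 1`,
`Σ_{l=0}^{min(p,q)} 8^l/((2l+1)! (p-l)! (q-l)!) ≤ (t^p/(p! q!)) (1 + 2/(t-1))^q`. -/
theorem hermite_coeff_bound_odd (p q : ℕ) (t : ℝ) (ht : 1 < t) :
    ∑ l ∈ Finset.range (min p q + 1),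
        (8 : ℝ) ^ l /
          (((2 * l + 1).factorial : ℝ) * ((p - l).factorial : ℝ) * ((q - l).factorial : ℝ))
      ≤ t ^ p / ((p.factorial : ℝ) * (q.factorial : ℝ)) * (1 + 2 / (t - 1)) ^ q := by
  have hs : 0 < t - 1 := by linarith
  have h0 : 0 < t := by linarith
  rw [add_comm 1 (2 / (t - 1)), add_pow, Finset.mul_sum]
  refine le_trans (Finset.sum_le_sum (g := fun l =>
    t ^ p / ((p.factorial : ℝ) * (q.factorial : ℝ)) *
      ((2 / (t - 1)) ^ l * 1 ^ (q - l) * (q.choose l : ℝ))) ?_) ?_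
  · intro l hl
    have hl' := Finset.mem_range.1 hl
    have := aux_term_s11 p q l (by omega) (by omega) (t - 1) hs
    simpa using this
  · apply Finset.sum_le_sum_of_subset_of_nonneg
    · intro l hl
      have hl' := Finset.mem_range.1 hl
      exact Finset.mem_range.2 (by omega)
    · intro i _ _
      positivity
end

section
/- (Motion of the zeros of the extended wavefunction under Gaussian dynamics.) Let r ≥ 1, let A, B, C, D, E, F be real numbers, and let I ⊆ ℝ be an open interval. Let a, b, c : I → ℂ be differentiable and λ_1, …, λ_r : I → ℂ be twice differentiable with λ_j(t) ≠ λ_k(t) for all t ∈ I and all j ≠ k. Define ψ(z,t) = e^{a(t) z² + b(t) z + c(t)} ∏_{k=1}^r (z − λ_k(t)). Assume that for all z ∈ ℂ and t ∈ I, ψ satisfies the Schrödinger equation i ∂_t ψ = A z² ψ − B ∂_z² ψ − i C ( z ∂_z ψ + ψ/2 ) + D z ψ − i E ∂_z ψ + F ψ (the position representation of the quadratic Hamiltonian A x̂² + B p̂² + C (x̂p̂ + p̂x̂)/2 + D x̂ + E p̂ + F). Then for all t ∈ I and all 1 ≤ k ≤ r: (i) a'(t) = 4iB a(t)² − 2C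 a(t) − iA; (ii) b'(t) = 4iB a(t) b(t) − C b(t) − 2E a(t) − iD; (iii) λ_k'(t) = λ_k(t)(C − 4iB a(t)) − 2iB b(t) + E − 2iB Σ_{m≠k} 1/(λ_k(t) − λ_m(t)); (iv) λ_k''(t) = (C² − 4AB) λ_k(t) + CE − 2BD + 8B² Σ_{m≠k} 1/(λ_k(t) − λ_m(t))³. -/
open scoped BigOperators

open Polynomial in
lemma aux_quad (r : ℕ) (p n : ℂ[X]) (hp : p.Monic) (hpr : p.natDegree = r) (hn : n.natDegree ≤ r)
    (x y w : ℂ) (h : (C x * X ^ 2 + C y * X + C w) * p = n) : x = 0 ∧ y = 0 := by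
  set q : ℂ[X] := C x * X ^ 2 + C y * X + C w with hq
  have hq0 : q.natDegree = 0 := by
    by_cases h0 : q = 0
    · simp [h0]
    · have := hp.natDegree_mul' h0
      rw [mul_comm, h, hpr] at this
      omega
  have c2 : q.coeff 2 = x := by simp [hq, coeff_X, coeff_C]
  have c1 : q.coeff 1 = y := by simp [hq, coeff_X, coeff_C]
  exact ⟨by rw [← c2]; exact coeff_eq_zero_of_natDegree_lt (by omega),
    by rw [← c1]; exact coeff_eq_zero_of_natDegree_lt (by omega)⟩

open Polynomial in
lemma aux_logder {r : ℕ} (l : Fin r → ℂ) (s : Finset (Fin r)) (z : ℂ) (h : ∀ m ∈ s, z - l m ≠ 0) :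
    (derivative (∏ m ∈ s, (X - C (l m)))).eval z =
      (∏ m ∈ s, (z - l m)) * ∑ m ∈ s, 1 / (z - l m) := by
  rw [derivative_prod_finset, eval_finsetSum, Finset.mul_sum]
  refine Finset.sum_congr rfl fun m hm => ?_
  rw [← Finset.mul_prod_erase s _ hm]
  have := h m hm
  simp [eval_prod]
  field_simp

lemma aux_cm {r : ℕ} (l : Fin r → ℂ) (h : ∀ j k, j ≠ k → l j ≠ l k) (k : Fin r) :
    ∑ m ∈ Finset.univ.erase k, ((∑ j ∈ Finset.univ.erase k, 1 / (l k - l j)) -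
      ∑ j ∈ Finset.univ.erase m, 1 / (l m - l j)) / (l k - l m) ^ 2 =
    2 * ∑ m ∈ Finset.univ.erase k, 1 / (l k - l m) ^ 3 := by
  have hs : ∀ j k, j ≠ k → l j - l k ≠ 0 := fun j k hjk => sub_ne_zero.2 (h j k hjk)
  have anti : ∑ m ∈ Finset.univ.erase k, ∑ j ∈ Finset.univ.erase k,
      1 / ((l k - l m) * (l k - l j) * (l m - l j)) = 0 := by
    have h1 : ∑ m ∈ Finset.univ.erase k, ∑ j ∈ Finset.univ.erase k,
        1 / ((l k - l m) * (l k - l j) * (l m - l j)) =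
        - ∑ m ∈ Finset.univ.erase k, ∑ j ∈ Finset.univ.erase k,
        1 / ((l k - l m) * (l k - l j) * (l m - l j)) := by
      conv_lhs => rw [Finset.sum_comm]
      rw [← Finset.sum_neg_distrib]
      refine Finset.sum_congr rfl fun m _ => ?_
      rw [← Finset.sum_neg_distrib]
      refine Finset.sum_congr rfl fun j _ => ?_
      rw [← neg_sub (l m) (l j), mul_neg, mul_comm (l k - l j), div_neg]
    exact self_eq_neg.1 h1
  have key : ∀ m ∈ Finset.univ.erase k, ((∑ j ∈ Finset.univ.erase k, 1 / (l k - l j)) -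
      ∑ j ∈ Finset.univ.erase m, 1 / (l m - l j)) / (l k - l m) ^ 2 =
      2 * (1 / (l k - l m) ^ 3) - ∑ j ∈ Finset.univ.erase k,
      1 / ((l k - l m) * (l k - l j) * (l m - l j)) := by
    intro m hm
    have hmk : m ≠ k := (Finset.mem_erase.1 hm).1
    have hkm : k ∈ Finset.univ.erase m := by simp [hmk.symm]
    rw [← Finset.add_sum_erase _ _ hm, ← Finset.add_sum_erase _ _ hkm,
      ← Finset.add_sum_erase _ _ hm, Finset.erase_right_comm (a := m) (b := k)]
    have h3 : ∑ j ∈ (Finset.univ.erase k).erase m,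
        1 / ((l k - l m) * (l k - l j) * (l m - l j)) =
        - ((∑ j ∈ (Finset.univ.erase k).erase m, 1 / (l k - l j)) -
        ∑ j ∈ (Finset.univ.erase k).erase m, 1 / (l m - l j)) / (l k - l m) ^ 2 := by
      rw [← Finset.sum_sub_distrib, ← Finset.sum_neg_distrib, Finset.sum_div]
      refine Finset.sum_congr rfl fun j hj => ?_
      simp only [Finset.mem_erase, Finset.mem_univ, and_true] at hj
      have e1 := hs k m hmk.symm
      have e2 := hs k j (Ne.symm hj.2)
      have e3 := hs m j (Ne.symm hj.1)
      field_simp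
      ring
    rw [h3]
    have e1 := hs k m hmk.symm
    rw [← neg_sub (l k) (l m)]
    simp only [sub_self, mul_zero, div_zero]
    field_simp
    ring
  rw [Finset.sum_congr rfl key, Finset.sum_sub_distrib, anti, Finset.mul_sum, sub_zero]

/-- Time-derivative of the product, as a polynomial. -/
lemma aux_dt (r : ℕ) (a b c : ℝ → ℂ) (lam : Fin r → ℝ → ℂ) (t : ℝ)
    (ha : DifferentiableAt ℝ a t) (hb : DifferentiableAt ℝ b t) (hc : DifferentiableAt ℝ c t)
    (hl : ∀ k, DifferentiableAt ℝ (lam k) t) (z : ℂ) :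
    deriv (fun τ => Complex.exp (a τ * z ^ 2 + b τ * z + c τ) * ∏ k : Fin r, (z - lam k τ)) t =
    Complex.exp (a t * z ^ 2 + b t * z + c t) *
      ((deriv a t * z ^ 2 + deriv b t * z + deriv c t) * ∏ k : Fin r, (z - lam k t)
        - ∑ k, deriv (lam k) t * ∏ j ∈ Finset.univ.erase k, (z - lam j t)) := by
  have h1 : HasDerivAt (fun τ => a τ * z ^ 2 + b τ * z + c τ)
      (deriv a t * z ^ 2 + deriv b t * z + deriv c t) t :=
    ((ha.hasDerivAt.mul_const _).add (hb.hasDerivAt.mul_const _)).add hc.hasDerivAt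
  have h2 : HasDerivAt (fun τ => ∏ k : Fin r, (z - lam k τ))
      (∑ k, (∏ j ∈ Finset.univ.erase k, (z - lam j t)) • (- deriv (lam k) t)) t :=
    HasDerivAt.fun_finsetProd fun k _ => (hl k).hasDerivAt.const_sub z
  have h3 := (h1.cexp.mul h2).deriv
  refine h3.trans ?_
  have : ∑ k, (∏ j ∈ Finset.univ.erase k, (z - lam j t)) • (- deriv (lam k) t) =
      - ∑ k, deriv (lam k) t * ∏ j ∈ Finset.univ.erase k, (z - lam j t) := by
    rw [← Finset.sum_neg_distrib]
    exact Finset.sum_congr rfl fun k _ => by simp [mul_comm]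
  rw [this]
  ring

open Polynomial in
lemma aux_dz (a b c : ℂ) (p : ℂ[X]) (z : ℂ) :
    HasDerivAt (fun w => Complex.exp (a * w ^ 2 + b * w + c) * p.eval w)
    (Complex.exp (a * z ^ 2 + b * z + c) * ((C (2 * a) * X + C b) * p + derivative p).eval z) z := by
  have h1 : HasDerivAt (fun w : ℂ => a * w ^ 2 + b * w + c) (2 * a * z + b) z := by
    have := ((((hasDerivAt_id z).pow 2).const_mul a).add ((hasDerivAt_id z).const_mul b)).add_const c
    refine this.congr_deriv ?_
    simp
    ring
  refine (h1.cexp.mul (p.hasDerivAt z)).congr_deriv ?_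
  simp
  ring

open Polynomial in
lemma aux_main (r : ℕ) (l l' : Fin r → ℂ) (h : ∀ j k, j ≠ k → l j ≠ l k)
    (A B Cc D E F a b c a' b' c' : ℂ) (p : ℂ[X]) (hp : p = ∏ k, (X - C (l k)))
    (H : ∀ z : ℂ, Complex.I * ((a' * z ^ 2 + b' * z + c') * p.eval z
        - ∑ k, l' k * ∏ j ∈ Finset.univ.erase k, (z - l j)) =
      A * z ^ 2 * p.eval z - B * ((2 * a + (2 * a * z + b) ^ 2) * p.eval z
        + 2 * (2 * a * z + b) * (derivative p).eval z + (derivative (derivative p)).eval z)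
      - Complex.I * Cc * (z * ((2 * a * z + b) * p.eval z + (derivative p).eval z) + p.eval z / 2)
      + D * z * p.eval z - Complex.I * E * ((2 * a * z + b) * p.eval z + (derivative p).eval z)
      + F * p.eval z) :
    (a' = 4 * Complex.I * B * a ^ 2 - 2 * Cc * a - Complex.I * A) ∧
    (b' = 4 * Complex.I * B * a * b - Cc * b - 2 * E * a - Complex.I * D) ∧
    (∀ k, l' k = l k * (Cc - 4 * Complex.I * B * a) - 2 * Complex.I * B * b + E
      - 2 * Complex.I * B * ∑ m ∈ Finset.univ.erase k, 1 / (l k - l m)) := by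
  have hI := Complex.I_mul_I
  have hmon : p.Monic := hp ▸ monic_prod_of_monic _ _ fun k _ => monic_X_sub_C _
  have hdeg : p.natDegree = r := by
    rw [hp, natDegree_prod_of_monic _ _ fun k _ => monic_X_sub_C _]; simp
  set q : ℂ[X] := ∑ k, C (l' k) * ∏ j ∈ Finset.univ.erase k, (X - C (l j)) with hq
  have hqe : ∀ z, q.eval z = ∑ k, l' k * ∏ j ∈ Finset.univ.erase k, (z - l j) := by
    intro z; simp [hq, eval_finsetSum, eval_prod]
  have hqd : q.natDegree ≤ r := by
    refine natDegree_sum_le_of_forall_le _ _ fun k _ => ?_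
    refine (natDegree_C_mul_le _ _).trans ?_
    rw [natDegree_prod_of_monic _ _ fun k _ => monic_X_sub_C _]
    simp
  have hp1 : (derivative p).natDegree ≤ r - 1 := hdeg ▸ natDegree_derivative_le p
  have hp2 : (derivative (derivative p)).natDegree ≤ r - 1 - 1 :=
    (natDegree_derivative_le _).trans (by omega)
  have hlin : ∀ x y : ℂ, ((C x * X + C y) * derivative p).natDegree ≤ r := by
    intro x y
    by_cases hr : r = 0
    · have : p = 1 := hmon.natDegree_eq_zero.1 (hdeg.trans hr)
      simp [this]
    · refine natDegree_mul_le.trans ?_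
      have := natDegree_linear_le (a := x) (b := y)
      omega
  set n : ℂ[X] := C Complex.I * q - (C (4 * a * B + Complex.I * Cc) * X
      + C (2 * b * B + Complex.I * E)) * derivative p - C B * derivative (derivative p) with hn
  have hnd : n.natDegree ≤ r := by
    refine (natDegree_sub_le _ _).trans (max_le ((natDegree_sub_le _ _).trans
      (max_le ?_ (hlin _ _))) ?_)
    · exact (natDegree_C_mul_le _ _).trans hqd
    · exact (natDegree_C_mul_le _ _).trans (by omega)
  have hpoly : (C (Complex.I * a' - A + 4 * B * a ^ 2 + 2 * Complex.I * Cc * a) * X ^ 2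
      + C (Complex.I * b' - D + 4 * B * a * b + Complex.I * Cc * b + 2 * Complex.I * E * a) * X
      + C (Complex.I * c' - F + Complex.I * Cc / 2 + B * (2 * a + b ^ 2) + Complex.I * E * b)) * p
      = n := by
    refine Polynomial.funext fun z => ?_
    have := H z
    rw [← hqe] at this
    simp only [hn, eval_mul, eval_add, eval_sub, eval_C, eval_X, eval_pow]
    linear_combination this
  obtain ⟨e1, e2⟩ := aux_quad r p n hmon hdeg hnd _ _ _ hpoly
  refine ⟨?_, ?_, fun k => ?_⟩
  · linear_combination (-Complex.I) * e1 + a' * hI + 2 * Cc * a * hI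
  · linear_combination (-Complex.I) * e2 + b' * hI + (Cc * b + 2 * E * a) * hI
  · set R : ℂ[X] := ∏ j ∈ Finset.univ.erase k, (X - C (l j)) with hR
    have hpR : p = (X - C (l k)) * R := by
      rw [hp, hR, Finset.mul_prod_erase _ (fun j => X - C (l j)) (Finset.mem_univ k)]
    have hne : ∀ m ∈ Finset.univ.erase k, l k - l m ≠ 0 := fun m hm =>
      sub_ne_zero.2 (h k m (Finset.mem_erase.1 hm).1.symm)
    have hRe : R.eval (l k) = ∏ m ∈ Finset.univ.erase k, (l k - l m) := by
      simp [hR, eval_prod]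
    have hR0 : R.eval (l k) ≠ 0 := hRe ▸ Finset.prod_ne_zero_iff.2 hne
    have hR' := aux_logder l (Finset.univ.erase k) (l k) hne
    rw [← hR, ← hRe] at hR'
    have d0 : p.eval (l k) = 0 := by simp [hpR]
    have d1 : (derivative p).eval (l k) = R.eval (l k) := by simp [hpR]
    have d2 : (derivative (derivative p)).eval (l k) = 2 * (derivative R).eval (l k) := by
      simp [hpR]; ring
    have dq : ∑ i, l' i * ∏ j ∈ Finset.univ.erase i, (l k - l j) = l' k * R.eval (l k) := by
      rw [hRe]
      refine Finset.sum_eq_single k (fun i _ hik => ?_) (by simp)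
      rw [Finset.prod_eq_zero (i := k) (by simp [hik.symm]) (sub_self _), mul_zero]
    have hk := H (l k)
    rw [d0, d1, d2, dq, hR'] at hk
    refine mul_right_cancel₀ hR0 ?_
    linear_combination Complex.I * hk + (- Cc * l k - E + l' k) * R.eval (l k) * hI

/-- **Motion of the zeros of the extended wavefunction under Gaussian dynamics.**
If `ψ(z,t) = e^(a(t)z² + b(t)z + c(t)) ∏_k (z - λ_k(t))` (a stellar rank `r` wavefunction
with pairwise distinct zeros on the open interval `I = (t₀, t₁)`) satisfies the
Schrödinger equation for the quadratic Hamiltonian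
`A x̂² + B p̂² + C(x̂p̂ + p̂x̂)/2 + D x̂ + E p̂ + F` (in position representation `x̂ ↦ z`,
`p̂ ↦ -i ∂_z`), then the Gaussian parameters and the zeros satisfy the stated ODEs,
and the zeros follow a complex Calogero--Moser dynamics. -/
theorem motion_of_zeros (r : ℕ) (hr : 1 ≤ r) (A B C D E F : ℝ) (t₀ t₁ : ℝ)
    (a b c : ℝ → ℂ) (lam : Fin r → ℝ → ℂ)
    (ha : ∀ t ∈ Set.Ioo t₀ t₁, DifferentiableAt ℝ a t)
    (hb : ∀ t ∈ Set.Ioo t₀ t₁, DifferentiableAt ℝ b t)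
    (hc : ∀ t ∈ Set.Ioo t₀ t₁, DifferentiableAt ℝ c t)
    (hlam1 : ∀ k : Fin r, ∀ t ∈ Set.Ioo t₀ t₁, DifferentiableAt ℝ (lam k) t)
    (hlam2 : ∀ k : Fin r, ∀ t ∈ Set.Ioo t₀ t₁, DifferentiableAt ℝ (deriv (lam k)) t)
    (hdist : ∀ t ∈ Set.Ioo t₀ t₁, ∀ j k : Fin r, j ≠ k → lam j t ≠ lam k t)
    (ψ : ℂ → ℝ → ℂ)
    (hψ : ∀ (z : ℂ) (t : ℝ),
      ψ z t = Complex.exp (a t * z ^ 2 + b t * z + c t) * ∏ k : Fin r, (z - lam k t))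
    (hSch : ∀ z : ℂ, ∀ t ∈ Set.Ioo t₀ t₁,
      Complex.I * deriv (fun τ => ψ z τ) t =
        (A : ℂ) * z ^ 2 * ψ z t
          - (B : ℂ) * deriv (deriv (fun w => ψ w t)) z
          - Complex.I * (C : ℂ) * (z * deriv (fun w => ψ w t) z + ψ z t / 2)
          + (D : ℂ) * z * ψ z t
          - Complex.I * (E : ℂ) * deriv (fun w => ψ w t) z
          + (F : ℂ) * ψ z t) :
    ∀ t ∈ Set.Ioo t₀ t₁,
      (deriv a t = 4 * Complex.I * (B : ℂ) * a t ^ 2 - 2 * (C : ℂ) * a t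
          - Complex.I * (A : ℂ)) ∧
      (deriv b t = 4 * Complex.I * (B : ℂ) * a t * b t - (C : ℂ) * b t
          - 2 * (E : ℂ) * a t - Complex.I * (D : ℂ)) ∧
      (∀ k : Fin r, deriv (lam k) t =
        lam k t * ((C : ℂ) - 4 * Complex.I * (B : ℂ) * a t)
          - 2 * Complex.I * (B : ℂ) * b t + (E : ℂ)
          - 2 * Complex.I * (B : ℂ) *
              ∑ m ∈ Finset.univ.erase k, 1 / (lam k t - lam m t)) ∧
      (∀ k : Fin r, deriv (deriv (lam k)) t =
        ((C : ℂ) ^ 2 - 4 * (A : ℂ) * (B : ℂ)) * lam k t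
          + (C : ℂ) * (E : ℂ) - 2 * (B : ℂ) * (D : ℂ)
          + 8 * (B : ℂ) ^ 2 *
              ∑ m ∈ Finset.univ.erase k, 1 / (lam k t - lam m t) ^ 3) := by
  have hfirst : ∀ t ∈ Set.Ioo t₀ t₁, _ := fun t ht =>
    aux_main r (fun k => lam k t) (fun k => deriv (lam k) t) (hdist t ht) A B C D E F
      (a t) (b t) (c t) (deriv a t) (deriv b t) (deriv c t) _ rfl (by
      intro z
      set p : Polynomial ℂ := ∏ k, (Polynomial.X - Polynomial.C (lam k t)) with hp
      have hpe : ∀ w, p.eval w = ∏ k, (w - lam k t) := fun w => by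
        simp [hp, Polynomial.eval_prod]
      have hψf : (fun w => ψ w t) =
          fun w => Complex.exp (a t * w ^ 2 + b t * w + c t) * p.eval w := by
        funext w; rw [hψ, hpe]
      have hd1 : deriv (fun w => ψ w t) = fun z => Complex.exp (a t * z ^ 2 + b t * z + c t) *
          ((Polynomial.C (2 * a t) * Polynomial.X + Polynomial.C (b t)) * p
            + Polynomial.derivative p).eval z := by
        rw [hψf]; funext z; exact (aux_dz (a t) (b t) (c t) p z).deriv
      have hd2 := (aux_dz (a t) (b t) (c t)
        ((Polynomial.C (2 * a t) * Polynomial.X + Polynomial.C (b t)) * p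
          + Polynomial.derivative p) z).deriv
      have hS := hSch z t ht
      rw [hd1, hd2] at hS
      have hdt := aux_dt r a b c lam t (ha t ht) (hb t ht) (hc t ht) (fun k => hlam1 k t ht) z
      simp only [hψ] at hS
      rw [hdt] at hS
      rw [← hpe] at hS
      refine mul_left_cancel₀ (Complex.exp_ne_zero (a t * z ^ 2 + b t * z + c t)) ?_
      simp only [Polynomial.derivative_add, Polynomial.derivative_mul, Polynomial.derivative_C,
        Polynomial.derivative_X, Polynomial.eval_add, Polynomial.eval_mul, Polynomial.eval_C,
        Polynomial.eval_X, Polynomial.eval_zero, Polynomial.eval_one] at hS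
      linear_combination hS)
  intro t ht
  obtain ⟨h1, h2, h3⟩ := hfirst t ht
  refine ⟨h1, h2, h3, fun k => ?_⟩
  have hev : deriv (lam k) =ᶠ[nhds t] fun τ => lam k τ * ((C : ℂ) - 4 * Complex.I * (B : ℂ) * a τ)
          - 2 * Complex.I * (B : ℂ) * b τ + (E : ℂ)
          - 2 * Complex.I * (B : ℂ) *
              ∑ m ∈ Finset.univ.erase k, 1 / (lam k τ - lam m τ) := by
    filter_upwards [Ioo_mem_nhds ht.1 ht.2] with τ hτ
    exact (hfirst τ hτ).2.2 k
  have hl := fun m => (hlam1 m t ht).hasDerivAt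
  have hsum : HasDerivAt (fun τ => ∑ m ∈ Finset.univ.erase k, 1 / (lam k τ - lam m τ))
      (∑ m ∈ Finset.univ.erase k,
        -(deriv (lam k) t - deriv (lam m) t) / (lam k t - lam m t) ^ 2) t := by
    refine HasDerivAt.fun_sum fun m hm => ?_
    have hne : lam k t - lam m t ≠ 0 :=
      sub_ne_zero.2 (hdist t ht k m (Finset.mem_erase.1 hm).1.symm)
    simp only [one_div]
    exact ((hl k).fun_sub (hl m)).fun_inv hne
  have hD := ((((hl k).mul (((ha t ht).hasDerivAt.const_mul (4 * Complex.I * (B : ℂ))).const_sub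
    (C : ℂ))).sub ((hb t ht).hasDerivAt.const_mul (2 * Complex.I * (B : ℂ)))).add_const (E : ℂ)).sub
    (hsum.const_mul (2 * Complex.I * (B : ℂ)))
  rw [hev.deriv_eq]
  refine hD.deriv.trans ?_
  have hcm := aux_cm (fun m => lam m t) (hdist t ht) k
  beta_reduce at hcm h3
  have hrew : ∑ m ∈ Finset.univ.erase k,
        -(deriv (lam k) t - deriv (lam m) t) / (lam k t - lam m t) ^ 2 =
      -((C : ℂ) - 4 * Complex.I * (B : ℂ) * a t) *
        ∑ m ∈ Finset.univ.erase k, 1 / (lam k t - lam m t)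
      + 2 * Complex.I * (B : ℂ) * (2 * ∑ m ∈ Finset.univ.erase k, 1 / (lam k t - lam m t) ^ 3) := by
    rw [← hcm, Finset.mul_sum, Finset.mul_sum, ← Finset.sum_add_distrib]
    refine Finset.sum_congr rfl fun m hm => ?_
    have hne : lam k t - lam m t ≠ 0 :=
      sub_ne_zero.2 (hdist t ht k m (Finset.mem_erase.1 hm).1.symm)
    rw [h3 k, h3 m]
    generalize ∑ m ∈ Finset.univ.erase k, 1 / (lam k t - lam m t) = S
    generalize ∑ j ∈ Finset.univ.erase m, 1 / (lam m t - lam j t) = S'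
    field_simp
    ring
  rw [hrew, h3 k, h1, h2]
  generalize ∑ m ∈ Finset.univ.erase k, 1 / (lam k t - lam m t) = S
  generalize ∑ m ∈ Finset.univ.erase k, 1 / (lam k t - lam m t) ^ 3 = T
  ring_nf
  simp only [Complex.I_sq]
  ring
end

section
/- (Modified Lax equation for matrix harmonic motion.) Let n ≥ 1 and ω ∈ ℂ. Let X, U, Λ : ℝ → M_n(ℂ) be twice differentiable matrix-valued functions such that: U(t) is invertible for every t, U(0) = I, Λ(t) is a diagonal matrix for every t, X(t) = U(t) Λ(t) U(t)⁻¹ for every t, and X''(t) + ω² X(t) = 0 for every t. Define M(t) = −i U(t)⁻¹ U'(t) and L(t) = Λ'(t) + i [M(t), Λ(t)] + iω Λ(t), where [·,·] is the matrix commutator. Then: (i) L'(t) + i [M(t), L(t)] − iω L(t) = 0 for every t; and (ii) if ω ≠ 0, then X(t) = Λ(0) e^{−iωt} + (sin(ωt)/ω) L(0) for every t, where sin is the complex sine. -/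
open scoped BigOperators

/-- Entrywise derivative of a matrix-valued function of a real variable. -/
noncomputable def matDeriv {n : ℕ} (X : ℝ → Matrix (Fin n) (Fin n) ℂ) (t : ℝ) :
    Matrix (Fin n) (Fin n) ℂ :=
  Matrix.of fun i j => deriv (fun τ => X τ i j) t

section helpers
attribute [local instance] Matrix.linftyOpNormedRing Matrix.linftyOpNormedAlgebra

theorem aux_entry {n : ℕ} {X : ℝ → Matrix (Fin n) (Fin n) ℂ} {X' : Matrix (Fin n) (Fin n) ℂ}
    {t : ℝ} : HasDerivAt X X' t ↔ ∀ i j, HasDerivAt (fun τ => X τ i j) (X' i j) t := by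
  constructor
  · intro h i j
    have h1 := hasDerivAt_pi.1 h i
    exact hasDerivAt_pi.1 h1 j
  · intro h
    refine hasDerivAt_pi.2 fun i => ?_
    exact hasDerivAt_pi.2 fun j => h i j

theorem aux_matDeriv {n : ℕ} {X : ℝ → Matrix (Fin n) (Fin n) ℂ} {X' : Matrix (Fin n) (Fin n) ℂ}
    {t : ℝ} (h : HasDerivAt X X' t) : matDeriv X t = X' := by
  ext i j
  exact (aux_entry.1 h i j).deriv

theorem aux_has {n : ℕ} {X : ℝ → Matrix (Fin n) (Fin n) ℂ}
    (h : ∀ i j : Fin n, Differentiable ℝ (fun t => X t i j)) (t : ℝ) :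
    HasDerivAt X (matDeriv X t) t :=
  aux_entry.2 fun i j => (h i j t).hasDerivAt

theorem aux_inv {n : ℕ} {U : ℝ → Matrix (Fin n) (Fin n) ℂ} {U' : Matrix (Fin n) (Fin n) ℂ}
    {t : ℝ} (hu : IsUnit (U t)) (h : HasDerivAt U U' t) :
    HasDerivAt (fun τ => (U τ)⁻¹) (-((U t)⁻¹ * U' * (U t)⁻¹)) t := by
  obtain ⟨u, hu⟩ := hu
  have h1 := hasFDerivAt_ringInverse (𝕜 := ℝ) u
  rw [hu] at h1
  have h2 := h1.comp_hasDerivAt t h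
  have e : (↑u⁻¹ : Matrix (Fin n) (Fin n) ℂ) = (U t)⁻¹ := by
    rw [← hu, Matrix.coe_units_inv]
  have e2 : (fun τ => (U τ)⁻¹) = Ring.inverse ∘ U := by
    funext τ
    simp [Matrix.nonsing_inv_eq_ringInverse]
  rw [e2]
  simp [e] at h2
  exact h2

theorem aux_scalar (ω : ℂ) (hω : ω ≠ 0) (x x' : ℝ → ℂ)
    (h : ∀ t, HasDerivAt x (x' t) t) (h' : ∀ t, HasDerivAt x' (-(ω ^ 2 * x t)) t) (t : ℝ) :
    x t = Complex.exp (-Complex.I * ω * (t : ℂ)) * x 0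
      + (Complex.sin (ω * (t : ℂ)) / ω) * (x' 0 + Complex.I * ω * x 0) := by
  have hI := Complex.I_sq
  have hE : ∀ (c : ℂ) (s : ℝ), HasDerivAt (fun τ : ℝ => Complex.exp (c * (τ : ℂ)))
      (Complex.exp (c * (s : ℂ)) * c) s := by
    intro c s
    have := ((hasDerivAt_id (s : ℂ)).const_mul c).cexp.comp_ofReal
    simpa using this
  have key : ∀ c : ℂ, c ^ 2 = -ω ^ 2 →
      x' t + c * x t = (x' 0 + c * x 0) * Complex.exp (c * t) := by
    intro c hc
    have hd : ∀ s : ℝ, HasDerivAt (fun τ : ℝ => (x' τ + c * x τ) * Complex.exp (-c * (τ : ℂ)))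
        0 s := by
      intro s
      have := ((h' s).add ((h s).const_mul c)).mul (hE (-c) s)
      refine this.congr_deriv ?_
      try simp only [Pi.add_apply]
      linear_combination -(Complex.exp (-c * (s : ℂ)) * x s) * hc
    have := is_const_of_deriv_eq_zero (fun s => (hd s).differentiableAt)
      (fun s => (hd s).deriv) t 0
    simp only [Complex.ofReal_zero, mul_zero, Complex.exp_zero, mul_one] at this
    rw [← this, mul_assoc, ← Complex.exp_add]
    simp
  have k1 := key (Complex.I * ω) (by rw [mul_pow, hI]; ring)
  have k2 := key (-Complex.I * ω) (by rw [mul_pow, neg_sq, hI]; ring)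
  have hs : Complex.sin (ω * t) = (Complex.exp (-Complex.I * ω * t) -
      Complex.exp (Complex.I * ω * t)) * Complex.I / 2 := by
    rw [Complex.sin]
    congr 4 <;> ring_nf
  have h2 : (2 * Complex.I * ω) ≠ 0 := by simp [hω]
  have hq : Complex.sin (ω * t) / ω * ω = (Complex.exp (-Complex.I * ω * t) -
      Complex.exp (Complex.I * ω * t)) * Complex.I / 2 := by
    rw [← hs]; field_simp
  apply mul_left_cancel₀ h2
  generalize Complex.sin (ω * t) / ω = q at *
  generalize Complex.exp (-Complex.I * ω * t) = a at *
  generalize Complex.exp (Complex.I * ω * t) = b at *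
  linear_combination k1 - k2 - 2 * Complex.I * (x' 0 + Complex.I * ω * x 0) * hq
    - (a - b) * (x' 0 + Complex.I * ω * x 0) * hI

end helpers

/-- **Modified Lax equation for matrix harmonic motion** (Olshanetsky–Perelomov
projection method). If `X'' + ω² X = 0` with `X(t) = U(t) Λ(t) U(t)⁻¹`, `U(t)`
invertible, `U(0) = I`, `Λ(t)` diagonal, and `M = -i U⁻¹ U'`,
`L = Λ' + i[M,Λ] + iωΛ`, then (i) `L' + i[M,L] - iωL = 0`, and (ii) if `ω ≠ 0`,
`X(t) = Λ(0) e^(-iωt) + (sin(ωt)/ω) L(0)`. -/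
theorem modified_lax_harmonic (n : ℕ) (hn : 1 ≤ n) (ω : ℂ)
    (X U Λ : ℝ → Matrix (Fin n) (Fin n) ℂ)
    (hXd : ∀ i j : Fin n, Differentiable ℝ (fun t => X t i j) ∧
      Differentiable ℝ (deriv fun t => X t i j))
    (hUd : ∀ i j : Fin n, Differentiable ℝ (fun t => U t i j) ∧
      Differentiable ℝ (deriv fun t => U t i j))
    (hΛd : ∀ i j : Fin n, Differentiable ℝ (fun t => Λ t i j) ∧
      Differentiable ℝ (deriv fun t => Λ t i j))
    (hUinv : ∀ t : ℝ, IsUnit (U t)) (hU0 : U 0 = 1)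
    (hdiag : ∀ t : ℝ, (Λ t).IsDiag)
    (hX : ∀ t : ℝ, X t = U t * Λ t * (U t)⁻¹)
    (hharm : ∀ t : ℝ, matDeriv (matDeriv X) t + ω ^ 2 • X t = 0)
    (M L : ℝ → Matrix (Fin n) (Fin n) ℂ)
    (hM : ∀ t : ℝ, M t = (-Complex.I) • ((U t)⁻¹ * matDeriv U t))
    (hL : ∀ t : ℝ, L t = matDeriv Λ t + Complex.I • (M t * Λ t - Λ t * M t)
      + (Complex.I * ω) • Λ t) :
    (∀ t : ℝ, matDeriv L t + Complex.I • (M t * L t - L t * M t)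
      - (Complex.I * ω) • L t = 0) ∧
    (ω ≠ 0 → ∀ t : ℝ,
      X t = Complex.exp (-Complex.I * ω * (t : ℂ)) • Λ 0
        + (Complex.sin (ω * (t : ℂ)) / ω) • L 0) := by
  letI := Matrix.linftyOpNormedRing (n := Fin n) (α := ℂ)
  letI := Matrix.linftyOpNormedAlgebra (n := Fin n) (α := ℂ) (R := ℝ)
  have dX := aux_has fun i j => (hXd i j).1
  have dU := aux_has fun i j => (hUd i j).1
  have dΛ := aux_has fun i j => (hΛd i j).1
  have dX' := aux_has (X := matDeriv X) fun i j => (hXd i j).2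
  have dV := fun t => aux_inv (hUinv t) (dU t)
  have hVU : ∀ t, (U t)⁻¹ * U t = 1 := fun t =>
    Matrix.nonsing_inv_mul _ ((Matrix.isUnit_iff_isUnit_det _).1 (hUinv t))
  have hIM : ∀ (t : ℝ) (B : Matrix (Fin n) (Fin n) ℂ), Complex.I • (M t * B - B * M t)
      = (U t)⁻¹ * matDeriv U t * B - B * ((U t)⁻¹ * matDeriv U t) := by
    intro t B
    rw [hM, Matrix.smul_mul, Matrix.mul_smul, ← smul_sub, smul_smul]
    simp
  have hX1 : ∀ t, (U t)⁻¹ * matDeriv X t * U t =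
      matDeriv Λ t + ((U t)⁻¹ * matDeriv U t * Λ t - Λ t * ((U t)⁻¹ * matDeriv U t)) := by
    intro t
    have hd := ((dU t).mul (dΛ t)).mul (dV t)
    have e : X = fun τ => U τ * Λ τ * (U τ)⁻¹ := funext hX
    have e1 := aux_matDeriv hd
    replace e1 := (congrArg (fun F => matDeriv F t) e).trans e1
    change matDeriv X t = _ at e1
    rw [e1]
    have h := hVU t
    generalize (U t)⁻¹ = V at *
    have h3 : ∀ B, V * (U t * B) = B := fun B => by rw [← mul_assoc, h, one_mul]
    simp only [Pi.mul_apply, mul_add, add_mul, mul_neg, neg_mul, mul_assoc, h3, h, mul_one]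
    abel
  have hX0 : ∀ t, (U t)⁻¹ * X t * U t = Λ t := by
    intro t
    rw [hX]
    simp only [mul_assoc, hVU, mul_one]
    rw [← mul_assoc, hVU, one_mul]
  have hLZ : ∀ t, L t = (U t)⁻¹ * (matDeriv X t + (Complex.I * ω) • X t) * U t := by
    intro t
    rw [hL, hIM, mul_add, add_mul, hX1, Matrix.mul_smul, Matrix.smul_mul, hX0]
  have hh : ∀ t, matDeriv (matDeriv X) t = -(ω ^ 2 • X t) := fun t =>
    eq_neg_of_add_eq_zero_left (hharm t)
  refine ⟨fun t => ?_, fun hω t => ?_⟩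
  · have dsm : HasDerivAt (fun τ => (Complex.I * ω) • X τ) ((Complex.I * ω) • matDeriv X t) t :=
      aux_entry.2 fun i j => by
        simpa using (aux_entry.1 (dX t) i j).const_mul (Complex.I * ω)
    have hd := ((dV t).mul ((dX' t).add dsm)).mul (dU t)
    have e : L = fun τ => (U τ)⁻¹ * (matDeriv X τ + (Complex.I * ω) • X τ) * U τ := funext hLZ
    have e1 := aux_matDeriv hd
    replace e1 := (congrArg (fun F => matDeriv F t) e).trans e1
    change matDeriv L t = _ at e1
    have hZ : matDeriv (matDeriv X) t + (Complex.I * ω) • matDeriv X t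
        = (Complex.I * ω) • (matDeriv X t + (Complex.I * ω) • X t) := by
      rw [hh, smul_add, smul_smul]
      have : Complex.I * ω * (Complex.I * ω) = - ω ^ 2 := by
        linear_combination ω ^ 2 * Complex.I_sq
      rw [this, neg_smul, add_comm]
    rw [e1, hIM, hLZ, hZ]
    simp only [Pi.mul_apply, Pi.add_apply]
    have h4 : U t * (U t)⁻¹ = 1 :=
      Matrix.mul_nonsing_inv _ ((Matrix.isUnit_iff_isUnit_det _).1 (hUinv t))
    generalize (matDeriv X t + (Complex.I * ω) • X t) = Z
    generalize (U t)⁻¹ = V at *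
    have h3 : ∀ B, U t * (V * B) = B := fun B => by rw [← mul_assoc, h4, one_mul]
    simp only [add_mul, neg_mul, mul_assoc, h3, Matrix.mul_smul, Matrix.smul_mul]
    abel
  · have hΛ0 : Λ 0 = X 0 := by rw [← hX0 0, hU0]; simp
    have hL0 : L 0 = matDeriv X 0 + (Complex.I * ω) • X 0 := by rw [hLZ 0, hU0]; simp
    rw [hΛ0, hL0]
    ext i j
    have := aux_scalar ω hω (fun τ => X τ i j) (fun τ => matDeriv X τ i j)
      (fun s => aux_entry.1 (dX s) i j)
      (fun s => by
        have := aux_entry.1 (dX' s) i j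
        rw [hh] at this
        simpa using this) t
    simpa [mul_add] using this
end

section
/- (Resolution of the complex Calogero–Moser system.) Let ω ∈ ℂ with ω ≠ 0, let r ≥ 1, let I ⊆ ℝ be an open interval containing 0, and let λ_1, …, λ_r : I → ℂ be twice differentiable functions that are pairwise distinct at every t ∈ I and satisfy λ_k''(t) + ω² λ_k(t) = Σ_{m≠k} 2/(λ_k(t) − λ_m(t))³ for all k and t ∈ I. Let Λ₀ = diag(λ_1(0), …, λ_r(0)) and let L₀ be the r×r complex matrix with entries (L₀)_{jk} = (λ_j'(0) + iω λ_j(0)) δ_{jk} + i (1−δ_{jk})/(λ_j(0) − λ_k(0)). Then for every t ∈ I and every z ∈ ℂ: det( z·I − ( e^{−iωt} Λ₀ + (sin(ωt)/ω) L₀ ) ) = ∏_{k=1}^r ( z − λ_k(t) ); in particular the multiset of eigenvalues of the matrix e^{−iωt} Λ₀ + (sin(ωt)/ω) L₀ is exactly {λ_1(t), …, λ_r(t)}. -/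
open scoped BigOperators

lemma cm_det_deriv {r : ℕ} (M : ℝ → Matrix (Fin r) (Fin r) ℂ) (M' : Matrix (Fin r) (Fin r) ℂ)
    (t : ℝ) (hM : ∀ i j, HasDerivAt (fun s => M s i j) (M' i j) t) :
    HasDerivAt (fun s => (M s).det) (((M t).adjugate * M').trace) t := by
  have key : ((M t).adjugate * M').trace = ∑ σ : Equiv.Perm (Fin r),
      ((Equiv.Perm.sign σ : ℤ) : ℂ) *
        ∑ i, (∏ j ∈ Finset.univ.erase i, M t (σ j) j) * M' (σ i) i := by
    have h1 : ((M t).adjugate * M').trace = ∑ i, ((M t).updateCol i (fun k => M' k i)).det := by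
      rw [Matrix.trace]
      refine Finset.sum_congr rfl fun i _ => ?_
      rw [← Matrix.cramer_apply, Matrix.cramer_eq_adjugate_mulVec]
      rfl
    rw [h1]
    simp_rw [Matrix.det_apply', Finset.mul_sum]
    rw [Finset.sum_comm]
    refine Finset.sum_congr rfl fun σ _ => Finset.sum_congr rfl fun i _ => ?_
    congr 1
    rw [← Finset.prod_erase_mul _ _ (Finset.mem_univ i)]
    congr 1
    · refine Finset.prod_congr rfl fun j hj => ?_
      rw [Matrix.updateCol_ne (Finset.ne_of_mem_erase hj)]
    · simp
  rw [key]
  simp_rw [Matrix.det_apply']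
  refine HasDerivAt.fun_sum fun σ _ => HasDerivAt.const_mul _ ?_
  have := HasDerivAt.fun_finsetProd (u := Finset.univ) (f := fun j s => M s (σ j) j)
    (f' := fun j => M' (σ j) j) (x := t) (fun j _ => hM (σ j) j)
  simpa [smul_eq_mul] using this

lemma cm_trace_zero {r : ℕ} (M B : Matrix (Fin r) (Fin r) ℂ) :
    (M.adjugate * (B * M - M * B)).trace = 0 := by
  rw [mul_sub, Matrix.trace_sub, ← mul_assoc, Matrix.trace_mul_comm (M.adjugate * B) M,
    ← mul_assoc, ← mul_assoc, Matrix.mul_adjugate, Matrix.adjugate_mul, sub_self]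

noncomputable def cmL {r : ℕ} (x p : Fin r → ℂ) : Matrix (Fin r) (Fin r) ℂ :=
  Matrix.diagonal p + Matrix.of fun j k => Complex.I * (x j - x k)⁻¹

noncomputable def cmB {r : ℕ} (x : Fin r → ℂ) : Matrix (Fin r) (Fin r) ℂ :=
  Matrix.diagonal (fun j => -Complex.I * ∑ l, ((x j - x l)⁻¹) ^ 2) +
    Matrix.of fun j k => Complex.I * ((x j - x k)⁻¹) ^ 2

lemma cm_BX {r : ℕ} (x p : Fin r → ℂ) (j k : Fin r) :
    (cmB x * Matrix.diagonal x - Matrix.diagonal x * cmB x) j k =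
      Matrix.diagonal p j k - cmL x p j k := by
  rw [Matrix.sub_apply, Matrix.mul_diagonal, Matrix.diagonal_mul]
  simp only [cmB, cmL, Matrix.add_apply, Matrix.of_apply]
  by_cases h : j = k
  · subst h; simp; ring
  · simp only [Matrix.diagonal_apply_ne _ h]
    by_cases h' : x j - x k = 0
    · rw [h']; simp
    · field_simp; ring

lemma cm_BL {r : ℕ} (x p : Fin r → ℂ) (hx : ∀ j k, j ≠ k → x j ≠ x k) (j k : Fin r) :
    (cmB x * cmL x p - cmL x p * cmB x) j k =
      if j = k then ∑ m ∈ Finset.univ.erase j, 2 / (x j - x m) ^ 3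
      else -Complex.I * (p j - p k) * ((x j - x k)⁻¹) ^ 2 := by
  have e : (cmB x * cmL x p - cmL x p * cmB x) j k =
      Complex.I * ((x j - x k)⁻¹) ^ 2 * (p k - p j)
      + ((∑ l, ((x j - x l)⁻¹) ^ 2) - ∑ l, ((x k - x l)⁻¹) ^ 2) * (x j - x k)⁻¹
      - ∑ l, (((x j - x l)⁻¹) ^ 2 * (x l - x k)⁻¹ - (x j - x l)⁻¹ * ((x l - x k)⁻¹) ^ 2) := by
    have hs : ∑ l, (((x j - x l)⁻¹) ^ 2 * (x l - x k)⁻¹ - (x j - x l)⁻¹ * ((x l - x k)⁻¹) ^ 2)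
       = - ((Matrix.of fun j k => Complex.I * ((x j - x k)⁻¹) ^ 2) *
          (Matrix.of fun j k => Complex.I * (x j - x k)⁻¹) -
          (Matrix.of fun j k => Complex.I * (x j - x k)⁻¹) *
          (Matrix.of fun j k => Complex.I * ((x j - x k)⁻¹) ^ 2) :
            Matrix (Fin r) (Fin r) ℂ) j k := by
      rw [Matrix.sub_apply, Matrix.mul_apply, Matrix.mul_apply, ← Finset.sum_sub_distrib,
        ← Finset.sum_neg_distrib]
      refine Finset.sum_congr rfl fun l _ => ?_
      simp only [Matrix.of_apply]
      linear_combination ((((x j - x l)⁻¹) ^ 2 * (x l - x k)⁻¹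
        - (x j - x l)⁻¹ * ((x l - x k)⁻¹) ^ 2)) * Complex.I_sq
    rw [hs]
    simp only [cmB, cmL, add_mul, mul_add, Matrix.sub_apply, Matrix.add_apply,
      Matrix.mul_diagonal, Matrix.diagonal_mul, Matrix.of_apply]
    by_cases h : j = k
    · subst h; simp; ring
    · simp only [Matrix.diagonal_apply_ne _ h]
      linear_combination (-((∑ l, ((x j - x l)⁻¹) ^ 2) - ∑ l, ((x k - x l)⁻¹) ^ 2) *
        (x j - x k)⁻¹) * Complex.I_sq
  rw [e]
  split_ifs with h
  · subst h
    rw [← Finset.add_sum_erase _ (fun l => (((x j - x l)⁻¹) ^ 2 * (x l - x j)⁻¹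
      - (x j - x l)⁻¹ * ((x l - x j)⁻¹) ^ 2)) (Finset.mem_univ j)]
    simp only [sub_self, inv_zero, mul_zero, add_zero, zero_sub, ne_eq, OfNat.ofNat_ne_zero,
      not_false_eq_true, zero_pow, zero_add]
    rw [← Finset.sum_neg_distrib]
    refine Finset.sum_congr rfl fun l hl => ?_
    have h1 : x j - x l ≠ 0 := sub_ne_zero.2 (hx _ _ (Finset.ne_of_mem_erase hl).symm)
    rw [← neg_sub (x j) (x l), inv_neg]
    field_simp
    ring
  · have : ((∑ l, ((x j - x l)⁻¹) ^ 2) - ∑ l, ((x k - x l)⁻¹) ^ 2) * (x j - x k)⁻¹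
      - ∑ l, (((x j - x l)⁻¹) ^ 2 * (x l - x k)⁻¹ - (x j - x l)⁻¹ * ((x l - x k)⁻¹) ^ 2)
      = ∑ l, ((if l = k then ((x j - x k)⁻¹) ^ 3 else 0)
        - (if l = j then ((x j - x k)⁻¹) ^ 3 else 0)) := by
      rw [← Finset.sum_sub_distrib, Finset.sum_mul, ← Finset.sum_sub_distrib]
      refine Finset.sum_congr rfl fun l _ => ?_
      have h1 : x j - x k ≠ 0 := sub_ne_zero.2 (hx _ _ h)
      by_cases hk : l = k
      · subst hk
        rw [if_pos rfl, if_neg (Ne.symm h), sub_self, inv_zero]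
        ring
      by_cases hj : l = j
      · subst hj
        rw [if_neg hk, if_pos rfl, ← neg_sub (x l) (x k), inv_neg, sub_self, inv_zero]
        ring
      rw [if_neg hk, if_neg hj, ← neg_sub (x l) (x k), inv_neg]
      have h2 : x j - x l ≠ 0 := sub_ne_zero.2 (hx _ _ (Ne.symm hj))
      have h3 : x l - x k ≠ 0 := sub_ne_zero.2 (hx _ _ hk)
      field_simp
      ring
    rw [Finset.sum_sub_distrib (f := fun l => if l = k then ((x j - x k)⁻¹) ^ 3 else 0),
      Finset.sum_ite_eq', Finset.sum_ite_eq'] at this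
    simp only [Finset.mem_univ, if_true, sub_self] at this
    linear_combination this

/-- **Resolution of the complex Calogero–Moser system.** If the pairwise distinct
functions `λ_k : I → ℂ` satisfy `λ_k'' + ω² λ_k = Σ_{m≠k} 2/(λ_k - λ_m)³` on an open
interval `I = (t₀, t₁)` containing `0`, with `ω ≠ 0`, then for every `t ∈ I` the
characteristic polynomial of `e^(-iωt) Λ₀ + (sin(ωt)/ω) L₀` is `∏_k (z - λ_k(t))`:
the eigenvalues of that matrix are exactly the `λ_k(t)` with multiplicity. -/
theorem resolution_calogero_moser (ω : ℂ) (hω : ω ≠ 0) (r : ℕ) (hr : 1 ≤ r) (t₀ t₁ : ℝ)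
    (h0 : (0 : ℝ) ∈ Set.Ioo t₀ t₁)
    (lam : Fin r → ℝ → ℂ)
    (hlam1 : ∀ k : Fin r, ∀ t ∈ Set.Ioo t₀ t₁, DifferentiableAt ℝ (lam k) t)
    (hlam2 : ∀ k : Fin r, ∀ t ∈ Set.Ioo t₀ t₁, DifferentiableAt ℝ (deriv (lam k)) t)
    (hdist : ∀ t ∈ Set.Ioo t₀ t₁, ∀ j k : Fin r, j ≠ k → lam j t ≠ lam k t)
    (hODE : ∀ k : Fin r, ∀ t ∈ Set.Ioo t₀ t₁,
      deriv (deriv (lam k)) t + ω ^ 2 * lam k t =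
        ∑ m ∈ Finset.univ.erase k, 2 / (lam k t - lam m t) ^ 3)
    (Λ₀ L₀ : Matrix (Fin r) (Fin r) ℂ)
    (hΛ₀ : Λ₀ = Matrix.diagonal fun k => lam k 0)
    (hL₀ : L₀ = Matrix.of fun j k =>
      if j = k then deriv (lam j) 0 + Complex.I * ω * lam j 0
      else Complex.I / (lam j 0 - lam k 0)) :
    ∀ t ∈ Set.Ioo t₀ t₁, ∀ z : ℂ,
      (z • (1 : Matrix (Fin r) (Fin r) ℂ)
          - (Complex.exp (-Complex.I * ω * (t : ℂ)) • Λ₀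
              + (Complex.sin (ω * (t : ℂ)) / ω) • L₀)).det
        = ∏ k : Fin r, (z - lam k t) := by
  intro T hT z
  set p : ℝ → Fin r → ℂ := fun s k => deriv (lam k) s with hp
  set x : ℝ → Fin r → ℂ := fun s k => lam k s with hxdef
  set Y : ℝ → Matrix (Fin r) (Fin r) ℂ := fun s =>
    Complex.cos (ω * ((T - s : ℝ) : ℂ)) • Matrix.diagonal (x s) +
      (Complex.sin (ω * ((T - s : ℝ) : ℂ)) / ω) • cmL (x s) (p s) with hY
  set F : ℝ → ℂ := fun s => (z • (1 : Matrix (Fin r) (Fin r) ℂ) - Y s).det with hF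
  have hder : ∀ s ∈ Set.Ioo t₀ t₁, HasDerivAt F 0 s := by
    intro s hs
    have hxd : ∀ k, HasDerivAt (fun u => x u k) (p s k) s := fun k => (hlam1 k s hs).hasDerivAt
    have hpd : ∀ k, HasDerivAt (fun u => p u k) (deriv (deriv (lam k)) s) s :=
      fun k => (hlam2 k s hs).hasDerivAt
    have hdx : ∀ j k, j ≠ k → x s j ≠ x s k := hdist s hs
    have hX : ∀ j k, HasDerivAt (fun u => Matrix.diagonal (x u) j k)
        (Matrix.diagonal (p s) j k) s := by
      intro j k
      by_cases h : j = k
      · subst h; simpa using hxd j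
      · simp only [Matrix.diagonal_apply_ne _ h]; exact hasDerivAt_const _ _
    have hL : ∀ j k, HasDerivAt (fun u => cmL (x u) (p u) j k)
        ((cmB (x s) * cmL (x s) (p s) - cmL (x s) (p s) * cmB (x s)) j k
          - ω ^ 2 * Matrix.diagonal (x s) j k) s := by
      intro j k
      rw [cm_BL _ _ hdx]
      by_cases h : j = k
      · subst h
        rw [if_pos rfl]
        have := hpd j
        have e := hODE j s hs
        simp only [cmL, Matrix.add_apply, Matrix.diagonal_apply_eq, Matrix.of_apply, sub_self,
          inv_zero, mul_zero, add_zero]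
        convert this using 1
        rw [← e]; simp only [hxdef]; ring
      · rw [if_neg h]
        simp only [cmL, Matrix.add_apply, Matrix.diagonal_apply_ne _ h, Matrix.of_apply, zero_add,
          mul_zero, sub_zero]
        have h1 : x s j - x s k ≠ 0 := sub_ne_zero.2 (hdx _ _ h)
        refine ((((hxd j).fun_sub (hxd k)).fun_inv h1).const_mul Complex.I).congr_deriv ?_
        rw [inv_pow, div_eq_mul_inv]
        ring
    have hlin : HasDerivAt (fun u : ℝ => ω * ((T - u : ℝ) : ℂ)) (-ω) s := by
      have h1 : HasDerivAt (fun u : ℝ => T - u) (-1) s := by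
        simpa using (hasDerivAt_id s).const_sub T
      have := (h1.ofReal_comp).const_mul ω
      simpa using this
    have hc := (Complex.hasDerivAt_cos _).comp s hlin
    have hsn := ((Complex.hasDerivAt_sin _).comp s hlin).div_const ω
    have hYd : ∀ j k, HasDerivAt (fun u => (z • (1 : Matrix (Fin r) (Fin r) ℂ) - Y u) j k)
        ((cmB (x s) * (z • 1 - Y s) - (z • 1 - Y s) * cmB (x s)) j k) s := by
      intro j k
      have h1 := ((hc.fun_mul (hX j k)).fun_add (hsn.fun_mul (hL j k))).const_sub
        ((z • (1 : Matrix (Fin r) (Fin r) ℂ)) j k)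
      have e1 := cm_BX (x s) (p s) j k
      have e2 : (cmB (x s) * (z • 1 - Y s) - (z • 1 - Y s) * cmB (x s)) =
          -(Complex.cos (ω * ((T - s : ℝ) : ℂ)) •
            (cmB (x s) * Matrix.diagonal (x s) - Matrix.diagonal (x s) * cmB (x s)) +
            (Complex.sin (ω * ((T - s : ℝ) : ℂ)) / ω) •
            (cmB (x s) * cmL (x s) (p s) - cmL (x s) (p s) * cmB (x s))) := by
        simp only [hY, mul_sub, sub_mul, mul_add, add_mul, Matrix.mul_smul, Matrix.smul_mul,
          mul_one, one_mul, smul_sub]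
        abel
      rw [e2]
      refine HasDerivAt.congr_deriv h1 ?_
      rw [Matrix.neg_apply, Matrix.add_apply, Matrix.smul_apply, Matrix.smul_apply, e1]
      simp only [smul_eq_mul, Function.comp_apply]
      field_simp
      ring
    have := cm_det_deriv _ _ s hYd
    rwa [cm_trace_zero] at this
  have hconst : F 0 = F T :=
    isOpen_Ioo.is_const_of_deriv_eq_zero isPreconnected_Ioo
      (fun s hs => (hder s hs).differentiableAt.differentiableWithinAt)
      (fun s hs => (hder s hs).deriv) h0 hT
  have hFT : F T = ∏ k, (z - lam k T) := by
    have : z • (1 : Matrix (Fin r) (Fin r) ℂ) - Y T = Matrix.diagonal fun k => z - lam k T := by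
      ext j k
      by_cases h : j = k
      · subst h; simp [hY, hxdef]
      · simp [hY, h]
    simp only [hF]
    rw [this, Matrix.det_diagonal]
  rw [← hFT, ← hconst]
  simp only [hF]
  congr 2
  have hexp : Complex.exp (-Complex.I * ω * (T : ℂ)) =
      Complex.cos (ω * T) - Complex.sin (ω * T) * Complex.I := by
    rw [Complex.cos_sub_sin_I]; congr 1; ring
  ext j k
  rw [hexp, hΛ₀, hL₀]
  simp only [hY, sub_zero, Matrix.add_apply, Matrix.smul_apply, smul_eq_mul, Matrix.of_apply, cmL]
  by_cases h : j = k
  · subst h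
    simp only [Matrix.diagonal_apply_eq, if_true, sub_self, inv_zero, mul_zero, add_zero, hxdef, hp]
    field_simp
    ring
  · simp only [Matrix.diagonal_apply_ne _ h, if_neg h, mul_zero, zero_add, hxdef, div_eq_mul_inv]
end

section
/- (Gershgorin disc separation for the zero trajectories.) Let r ≥ 1, let a > 0 be real, and let λ⁰_1, …, λ⁰_r ∈ ℂ be pairwise distinct with min_{i≠j} |λ⁰_i − λ⁰_j| ≥ √((r−1)/a). Define for each t ∈ ℝ the matrix Λ(t) = (cos t + 2ia sin t)·diag(λ⁰_1,…,λ⁰_r) + sin(t)·P, where P_{jk} = i/(λ⁰_j − λ⁰_k) for j ≠ k and P_{jj} = 0, and the Gershgorin radii R_i(t) = |sin t| · Σ_{j≠i} 1/|λ⁰_i − λ⁰_j|. Then for all t ∈ ℝ and all i ≠ j: |Λ_{ii}(t) − Λ_{jj}(t)| ≥ R_i(t) + R_j(t); explicitly, |λ⁰_i − λ⁰_j| · √(cos²t + 4a² sin²t) ≥ |sin t| · ( Σ_{k≠i} 1/|λ⁰_k − λ⁰_i| + Σ_{k≠j} 1/|λ⁰_k − λ⁰_j| ). -/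
open scoped BigOperators

/-- **Gershgorin disc separation for the zero trajectories.** If the (pairwise
distinct) initial zeros `λ⁰_1, …, λ⁰_r` satisfy `min_{i≠j} |λ⁰_i - λ⁰_j| ≥ √((r-1)/a)`
with `a > 0`, then along the phase-shift evolution
`Λ(t) = (cos t + 2ia sin t) diag(λ⁰) + sin(t) P`, `P_{jk} = i(1-δ_{jk})/(λ⁰_j - λ⁰_k)`,
the Gershgorin discs stay pairwise disjoint:
`|Λ_{ii}(t) - Λ_{jj}(t)| ≥ R_i(t) + R_j(t)` for all `t` and `i ≠ j`; explicitly,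
`|λ⁰_i - λ⁰_j| √(cos²t + 4a² sin²t) ≥ |sin t| (Σ_{k≠i} 1/|λ⁰_k - λ⁰_i| + Σ_{k≠j} 1/|λ⁰_k - λ⁰_j|)`. -/
theorem gershgorin_disc_separation (r : ℕ) (hr : 1 ≤ r) (a : ℝ) (ha : 0 < a)
    (lam0 : Fin r → ℂ) (hinj : Function.Injective lam0)
    (hsep : ∀ i j : Fin r, i ≠ j → Real.sqrt (((r : ℝ) - 1) / a) ≤ ‖lam0 i - lam0 j‖)
    (Λ : ℝ → Matrix (Fin r) (Fin r) ℂ)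
    (hΛ : ∀ t : ℝ, Λ t = Matrix.of fun i j =>
      if i = j then ((Real.cos t : ℂ) + 2 * Complex.I * (a : ℂ) * (Real.sin t : ℂ)) * lam0 i
      else (Real.sin t : ℂ) * (Complex.I / (lam0 i - lam0 j)))
    (R : Fin r → ℝ → ℝ)
    (hR : ∀ (i : Fin r) (t : ℝ),
      R i t = |Real.sin t| * ∑ j ∈ Finset.univ.erase i, 1 / ‖lam0 i - lam0 j‖) :
    ∀ (t : ℝ) (i j : Fin r), i ≠ j →
      R i t + R j t ≤ ‖Λ t i i - Λ t j j‖ ∧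
      |Real.sin t| * ((∑ k ∈ Finset.univ.erase i, 1 / ‖lam0 k - lam0 i‖) +
          ∑ k ∈ Finset.univ.erase j, 1 / ‖lam0 k - lam0 j‖)
        ≤ ‖lam0 i - lam0 j‖ * Real.sqrt (Real.cos t ^ 2 + 4 * a ^ 2 * Real.sin t ^ 2) := by
  intro t i j hij
  have hr2 : (2 : ℝ) ≤ r := by
    have h1 := i.2
    have h2 := j.2
    have h3 : (i : ℕ) ≠ j := fun h => hij (Fin.ext h)
    have : 2 ≤ r := by omega
    exact_mod_cast this
  set d := Real.sqrt (((r : ℝ) - 1) / a) with hd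
  have hq : 0 < ((r : ℝ) - 1) / a := div_pos (by linarith) ha
  have hdpos : 0 < d := Real.sqrt_pos.mpr hq
  have hdd : d * d = ((r : ℝ) - 1) / a := Real.mul_self_sqrt hq.le
  have hr1 : (r : ℝ) - 1 = a * d * d := by
    rw [mul_assoc, hdd]; field_simp
  have hsum : ∀ i : Fin r, ∑ k ∈ Finset.univ.erase i, 1 / ‖lam0 k - lam0 i‖ ≤ a * d := by
    intro i
    have h1 : ∑ k ∈ Finset.univ.erase i, 1 / ‖lam0 k - lam0 i‖
        ≤ ∑ k ∈ Finset.univ.erase i, 1 / d := by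
      apply Finset.sum_le_sum
      intro k hk
      exact one_div_le_one_div_of_le hdpos (hsep k i (Finset.ne_of_mem_erase hk))
    refine h1.trans (le_of_eq ?_)
    rw [Finset.sum_const, Finset.card_erase_of_mem (Finset.mem_univ i), Finset.card_univ,
      Fintype.card_fin, nsmul_eq_mul, Nat.cast_sub hr, Nat.cast_one, hr1]
    field_simp
  have hsq : 2 * a * |Real.sin t| ≤
      Real.sqrt (Real.cos t ^ 2 + 4 * a ^ 2 * Real.sin t ^ 2) := by
    apply Real.le_sqrt_of_sq_le
    rw [mul_pow, sq_abs]
    nlinarith [sq_nonneg (Real.cos t)]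
  have main : |Real.sin t| * ((∑ k ∈ Finset.univ.erase i, 1 / ‖lam0 k - lam0 i‖) +
          ∑ k ∈ Finset.univ.erase j, 1 / ‖lam0 k - lam0 j‖)
        ≤ ‖lam0 i - lam0 j‖ * Real.sqrt (Real.cos t ^ 2 + 4 * a ^ 2 * Real.sin t ^ 2) := by
    calc _ ≤ |Real.sin t| * (a * d + a * d) :=
          mul_le_mul_of_nonneg_left (add_le_add (hsum i) (hsum j)) (abs_nonneg _)
      _ = d * (2 * a * |Real.sin t|) := by ring
      _ ≤ _ := mul_le_mul (hsep i j hij) hsq (by positivity) (norm_nonneg _)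
  refine ⟨?_, main⟩
  have hn : ‖(Real.cos t : ℂ) + 2 * Complex.I * (a : ℂ) * (Real.sin t : ℂ)‖ =
      Real.sqrt (Real.cos t ^ 2 + 4 * a ^ 2 * Real.sin t ^ 2) := by
    have : (Real.cos t : ℂ) + 2 * Complex.I * (a : ℂ) * (Real.sin t : ℂ) =
        (Real.cos t : ℂ) + ((2 * a * Real.sin t : ℝ) : ℂ) * Complex.I := by
      push_cast; ring
    rw [this, Complex.norm_add_mul_I]
    congr 1; ring
  have hL : ‖Λ t i i - Λ t j j‖ =
      ‖lam0 i - lam0 j‖ * Real.sqrt (Real.cos t ^ 2 + 4 * a ^ 2 * Real.sin t ^ 2) := by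
    rw [hΛ, Matrix.of_apply, Matrix.of_apply, if_pos rfl, if_pos rfl, ← mul_sub, norm_mul, hn,
      mul_comm]
  rw [hL, hR, hR, ← mul_add]
  refine le_trans (le_of_eq ?_) main
  congr 2 <;> exact Finset.sum_congr rfl fun k _ => by rw [norm_sub_rev]
end

section
/- (Existence of real zeros for phase-shifted wavefunctions under a distance condition.) Let r ≥ 1, let a > 0 be real, and let λ⁰_1, …, λ⁰_r ∈ ℂ be pairwise distinct with min_{i≠j} |λ⁰_i − λ⁰_j| ≥ √((r−1)/a). Define Λ(t) = (cos t + 2ia sin t)·diag(λ⁰_1,…,λ⁰_r) + sin(t)·P with P_{jk} = i/(λ⁰_j − λ⁰_k) for j ≠ k and P_{jj} = 0, and radii R_i(t) = |sin t| · Σ_{j≠i} 1/|λ⁰_i − λ⁰_j|. Suppose μ_1, …, μ_r : ℝ → ℂ are continuous, 2π-periodic functions such that for every t and every i, μ_i(t) is an eigenvalue of Λ(t) and |μ_i(t) − Λ_{ii}(t)| ≤ R_i(t). Then for every i there exist t, t' ∈ [0, 2π) with t ≠ t' such that μ_i(t) and μ_i(t') are real. In particular, the total number of real zeros over all phase-shifted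 wavefunctions is at least 2r. -/
open scoped BigOperators

/-- **Existence of real zeros for phase-shifted wavefunctions under a distance
condition.** Under the separation condition `min_{i≠j} |λ⁰_i - λ⁰_j| ≥ √((r-1)/a)`,
any continuous `2π`-periodic eigenvalue trajectories `μ_i(t)` of
`Λ(t) = (cos t + 2ia sin t) diag(λ⁰) + sin(t) P` that remain in the corresponding
Gershgorin discs must each cross the real axis at two distinct times in `[0, 2π)`.
In particular the total number of real zeros over all phase-shifted wavefunctions
is at least `2r`. -/
theorem real_zeros_of_phase_shift (r : ℕ) (hr : 1 ≤ r) (a : ℝ) (ha : 0 < a)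
    (lam0 : Fin r → ℂ) (hinj : Function.Injective lam0)
    (hsep : ∀ i j : Fin r, i ≠ j → Real.sqrt (((r : ℝ) - 1) / a) ≤ ‖lam0 i - lam0 j‖)
    (Λ : ℝ → Matrix (Fin r) (Fin r) ℂ)
    (hΛ : ∀ t : ℝ, Λ t = Matrix.of fun i j =>
      if i = j then ((Real.cos t : ℂ) + 2 * Complex.I * (a : ℂ) * (Real.sin t : ℂ)) * lam0 i
      else (Real.sin t : ℂ) * (Complex.I / (lam0 i - lam0 j)))
    (R : Fin r → ℝ → ℝ)
    (hR : ∀ (i : Fin r) (t : ℝ),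
      R i t = |Real.sin t| * ∑ j ∈ Finset.univ.erase i, 1 / ‖lam0 i - lam0 j‖)
    (μ : Fin r → ℝ → ℂ)
    (hμcont : ∀ i : Fin r, Continuous (μ i))
    (hμper : ∀ (i : Fin r) (t : ℝ), μ i (t + 2 * Real.pi) = μ i t)
    (hμeig : ∀ (i : Fin r) (t : ℝ), (Λ t - μ i t • (1 : Matrix (Fin r) (Fin r) ℂ)).det = 0)
    (hμdisc : ∀ (i : Fin r) (t : ℝ), ‖μ i t - Λ t i i‖ ≤ R i t) :
    ∀ i : Fin r, ∃ t t' : ℝ,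
      t ∈ Set.Ico (0 : ℝ) (2 * Real.pi) ∧ t' ∈ Set.Ico (0 : ℝ) (2 * Real.pi) ∧
      t ≠ t' ∧ (μ i t).im = 0 ∧ (μ i t').im = 0 := by
  intro i
  have hpi := Real.pi_pos
  have h0 : μ i 0 = lam0 i := by
    have h := hμdisc i 0
    rw [hR, hΛ] at h
    simp only [Matrix.of_apply, if_true, Real.sin_zero, Real.cos_zero, abs_zero, zero_mul] at h
    have h2 := norm_le_zero_iff.mp h
    simpa [sub_eq_zero] using h2
  have hp : μ i Real.pi = -lam0 i := by
    have h := hμdisc i Real.pi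
    rw [hR, hΛ] at h
    simp only [Matrix.of_apply, if_true, Real.sin_pi, Real.cos_pi, abs_zero, zero_mul] at h
    have h2 := norm_le_zero_iff.mp h
    have h3 := sub_eq_zero.mp h2
    simpa using h3
  have h2p : μ i (2 * Real.pi) = lam0 i := by
    have h := hμper i 0
    rw [zero_add] at h
    rw [h, h0]
  have hc : Continuous fun t => (μ i t).im := Complex.continuous_im.comp (hμcont i)
  have e0 : (μ i 0).im = (lam0 i).im := by rw [h0]
  have ep : (μ i Real.pi).im = -(lam0 i).im := by rw [hp]; simp
  have e2 : (μ i (2 * Real.pi)).im = (lam0 i).im := by rw [h2p]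
  by_cases hy : (lam0 i).im = 0
  · exact ⟨0, Real.pi, ⟨le_refl _, by linarith⟩, ⟨hpi.le, by linarith⟩, hpi.ne,
      by rw [e0, hy], by rw [ep, hy, neg_zero]⟩
  · have m1 : (0 : ℝ) ∈ Set.uIcc (μ i 0).im (μ i Real.pi).im := by
      rw [e0, ep, Set.mem_uIcc]
      rcases le_total 0 (lam0 i).im with h | h
      · right; constructor <;> linarith
      · left; constructor <;> linarith
    have m2 : (0 : ℝ) ∈ Set.uIcc (μ i Real.pi).im (μ i (2 * Real.pi)).im := by
      rw [e2, ep, Set.mem_uIcc]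
      rcases le_total 0 (lam0 i).im with h | h
      · left; constructor <;> linarith
      · right; constructor <;> linarith
    obtain ⟨t, ht, hft⟩ := intermediate_value_uIcc (f := fun t => (μ i t).im) hc.continuousOn m1
    obtain ⟨s, hs, hfs⟩ := intermediate_value_uIcc (f := fun t => (μ i t).im) hc.continuousOn m2
    rw [Set.uIcc_of_le hpi.le] at ht
    rw [Set.uIcc_of_le (by linarith)] at hs
    simp only at hft hfs
    have htp : t ≠ Real.pi := by
      rintro rfl
      exact hy (by linarith)
    have hs2 : s ≠ 2 * Real.pi := by
      rintro rfl
      exact hy (by linarith)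
    have htl := lt_of_le_of_ne ht.2 htp
    exact ⟨t, s, ⟨ht.1, by linarith⟩, ⟨by linarith [hs.1], lt_of_le_of_ne hs.2 hs2⟩,
      (lt_of_lt_of_le htl hs.1).ne, hft, hfs⟩
end

section
/- (Existence of real zeros under an imbalance condition.) Let n ≥ 1 and let λ_1, …, λ_n : [0, π] → ℂ be continuous functions such that the multiset { −λ_1(π), …, −λ_n(π) } is equal to the multiset { λ_1(0), …, λ_n(0) }. If the number of indices i with Im(λ_i(0)) > 0 differs from the number of indices i with Im(λ_i(0)) < 0, then there exist an index i and a time t ∈ [0, π] such that Im(λ_i(t)) = 0, i.e. λ_i(t) is real. -/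
open scoped BigOperators

open Classical in
/-- **Existence of real zeros under an imbalance condition.** Let `λ_1, …, λ_n` be
continuous zero trajectories on `[0, π]` such that the multiset
`{-λ_1(π), …, -λ_n(π)}` equals the multiset `{λ_1(0), …, λ_n(0)}`. If the number of
initial zeros in the open upper half-plane differs from the number in the open lower
half-plane, then some trajectory meets the real axis: there are `i` and `t ∈ [0, π]`
with `λ_i(t)` real. -/
theorem real_zero_of_imbalance (n : ℕ) (hn : 1 ≤ n) (lam : Fin n → ℝ → ℂ)
    (hcont : ∀ i : Fin n, ContinuousOn (lam i) (Set.Icc 0 Real.pi))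
    (hmul : (Finset.univ.val.map fun i : Fin n => -lam i Real.pi) =
      (Finset.univ.val.map fun i : Fin n => lam i 0))
    (himb : (Finset.univ.filter fun i : Fin n => 0 < (lam i 0).im).card ≠
      (Finset.univ.filter fun i : Fin n => (lam i 0).im < 0).card) :
    ∃ (i : Fin n) (t : ℝ), t ∈ Set.Icc (0 : ℝ) Real.pi ∧ (lam i t).im = 0 := by
  by_contra hno
  push Not at hno
  apply himb
  have hc : ∀ i : Fin n, ContinuousOn (fun t => (lam i t).im) (Set.Icc 0 Real.pi) :=
    fun i => Complex.continuous_im.comp_continuousOn (hcont i)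
  have key : ∀ i : Fin n, 0 < (-lam i Real.pi).im ↔ (lam i 0).im < 0 := by
    intro i
    rw [Complex.neg_im, neg_pos]
    have h0 : (lam i 0).im ≠ 0 := hno i 0 ⟨le_refl _, Real.pi_pos.le⟩
    have hp : (lam i Real.pi).im ≠ 0 := hno i Real.pi ⟨Real.pi_pos.le, le_refl _⟩
    constructor
    · intro h
      by_contra h'
      obtain ⟨t, ht, he⟩ := intermediate_value_Icc' Real.pi_pos.le (hc i)
        (show (0 : ℝ) ∈ Set.Icc _ _ from ⟨h.le, not_lt.mp h'⟩)
      exact hno i t ht he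
    · intro h
      by_contra h'
      obtain ⟨t, ht, he⟩ := intermediate_value_Icc Real.pi_pos.le (hc i)
        (show (0 : ℝ) ∈ Set.Icc _ _ from ⟨h.le, not_lt.mp h'⟩)
      exact hno i t ht he
  have h := congrArg (Multiset.countP fun z : ℂ => 0 < z.im) hmul
  rw [Multiset.countP_map, Multiset.countP_map] at h
  simp only [key] at h
  exact h.symm
end
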